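/- arXiv:2006.01774 — 2 statements merged into one kernel-verified Lean document; each statement's English description precedes it below -/
import Mathlib

section
/- The set of rational points on the curve x⁴ + y⁴ = 17 is exactly the eight points (±2, ±1) and (±1, ±2); that is, {(x, y) ∈ ℚ × ℚ : x⁴ + y⁴ = 17} = {(2,1), (2,−1), (−2,1), (−2,−1), (1,2), (1,−2), (−1,2), (−1,−2)}. -/
/-!
A rational point gives coprime integers with `X⁴ + Y⁴ = 17 Z⁴`, and one may take `X` odd and `Y` even.
The identity `(17Z² - 4Y² - X²)(17Z² + 4Y² + X²) = (4X² - Y²)²` and a congruence modulo `3` lead to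
coprime `a, b` with
`X² = a² - 8ab - b²`, `Y² = 4a² + 2ab - 4b²`, `Z² = a² + b²` (`int_solution`),
and everything reduces to showing `b = 0` (`no_quad`).

If `b ≠ 0`, then `16 ∣ b`, and elementary descents in `ℤ[i]` and `ℤ[√17]` show that `a + r_j b` is a
square `g_j²` in `ℚ(i, √17)` for `r = i, -(4+√17), -(4-√17), (1+√17)/4` (`Data`). The sums
`g₁g₂ + g₃g₄`, `g₁g₃ + g₂g₄`, `g₁g₄ + g₂g₃`, divided by `b`, form a point `(a, b, c)` on a fixed
intersection of two quadrics (`Eqs`), a curve of genus one. Such points are halved by taking square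
roots of `(a+b)(a+c)`, `(a+b)(b+c)`, `(a+c)(b+c)`. These products have even valuation away from `2` and
`4 - i` (`isSquare_val_w`, `Good`), and two facts control them.

* Product formula (`Good.isSquare_norm`): the norms to `ℚ₂` of the images of a `Good` element at the two
  places above `2` have square product. It rests on unique factorization in `ℤ[i]` and on `1 + i` being
  a nonsquare modulo `4 + i` (`even_of_norm`).
* Local-global principle (`Good.isSquare`): a `Good` element which is `1` modulo `4(1+i)` at both places
  above `2` is a square.

When the signs of the `g_j` are compatible at both places, the point has denominator exactly `2^m` there
and satisfies a congruence modulo `2` (`State m`). By the product formula and the local-global principle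
it can be halved, giving a point with `m` replaced by `m - 1`, until `m = 2`, where the product formula
fails modulo `8` (`step`, `not_state`). The other sign pattern violates the product formula at once
(`Data.false_of_neg`).
-/

open IsDedekindDomain WithZero

namespace X4Y4

/-! ### Valuations and radical ideals -/

/-- If the ideal `(w)` is radical, then `w` has valuation exactly one at every prime containing it. -/
theorem intValuation_of_radical {R : Type*} [CommRing R] [IsDedekindDomain R]
    (P : HeightOneSpectrum R) (w : R) (hw : w ≠ 0) (hrad : ∀ x, w ∣ x ^ 2 → w ∣ x)
    (hP : w ∈ P.asIdeal) : P.intValuation w = exp (-1 : ℤ) := by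
  have h1 : P.intValuation w < 1 := (P.intValuation_lt_one_iff_mem w).2 hP
  by_contra hne
  have h2 : P.intValuation w ≤ exp (-((2 : ℕ) : ℤ)) := by
    rw [P.intValuation_if_neg hw] at h1 hne ⊢
    rw [← exp_zero, exp_lt_exp] at h1
    rw [exp_le_exp]
    have : ¬ ((-(((Associates.mk P.asIdeal).count (Associates.mk (Ideal.span {w})).factors : ℕ) : ℤ)) = -1) := fun h => hne (by rw [h])
    push_cast
    omega
  rw [P.intValuation_le_pow_iff_mem] at h2
  obtain ⟨K, hK⟩ : P.asIdeal ^ 2 ∣ Ideal.span {w} := Ideal.dvd_span_singleton.2 h2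
  have hle : P.asIdeal * K ≤ P.asIdeal * (P.asIdeal * K) := by
    intro x hx
    have h3 : x ^ 2 ∈ Ideal.span {w} := by
      have h6 : x * x ∈ P.asIdeal * K * (P.asIdeal * K) := Ideal.mul_mem_mul hx hx
      have e : P.asIdeal * K * (P.asIdeal * K) = P.asIdeal ^ 2 * K * K := by
        rw [mul_mul_mul_comm, pow_two, mul_assoc _ K K]
      rw [e, ← hK] at h6
      rw [pow_two x]
      exact Ideal.mul_le_left h6
    have h4 := hrad x (Ideal.mem_span_singleton.1 h3)
    have h5 := Ideal.mem_span_singleton.2 h4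
    rw [hK] at h5
    rwa [← mul_assoc, ← pow_two]
  have hJ : P.asIdeal * K ≠ 0 := by
    intro h
    have : Ideal.span {w} = 0 := by rw [hK, pow_two, mul_assoc, h, mul_zero]
    exact hw (Ideal.span_singleton_eq_bot.1 this)
  have heq : 1 * (P.asIdeal * K) = P.asIdeal * (P.asIdeal * K) := by
    rw [one_mul]; exact le_antisymm hle Ideal.mul_le_right
  have := mul_right_cancel₀ hJ heq
  exact P.isPrime.ne_top (by rw [← this, Ideal.one_eq_top])

/-- Suppose `A + A' = B + B'` and `AA'`, `BB'` have the same even valuation `r²`. Then `AB` has even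
valuation: the smaller of `v A, v A'` agrees with the smaller of `v B, v B'`, since either both pairs
consist of `r` twice, or both sums have the valuation of their dominant term. -/
theorem isSquare_val_mul {L Γ : Type*} [Field L] [LinearOrderedCommGroupWithZero Γ]
    (v : Valuation L Γ) {A A' B B' : L} {r : Γ} (hr : r ≠ 0) (h : A + A' = B + B')
    (hA : v (A * A') = r ^ 2) (hB : v (B * B') = r ^ 2) : IsSquare (v (A * B)) := by
  rw [map_mul] at *
  have key : ∀ a a' : Γ, a * a' = r ^ 2 → a < a' → a < r ∧ r < a' := by
    intro a a' h1 h2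
    have ha : 0 < a' := lt_of_le_of_lt zero_le h2
    constructor
    · by_contra hc
      push Not at hc
      have : r * r < a * a' := mul_lt_mul_of_le_of_lt_of_nonneg_of_pos hc (lt_of_le_of_lt hc h2) zero_le (lt_of_lt_of_le (zero_lt_iff.2 hr) hc)
      rw [h1, pow_two] at this
      exact lt_irrefl _ this
    · by_contra hc
      push Not at hc
      have : a * a' < r * r := mul_lt_mul_of_lt_of_le_of_nonneg_of_pos (lt_of_lt_of_le h2 hc) hc zero_le (zero_lt_iff.2 hr)
      rw [h1, pow_two] at this
      exact lt_irrefl _ this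
  have eqr : ∀ a a' : Γ, a * a' = r ^ 2 → a = a' → a = r := by
    intro a a' h1 h2
    subst h2
    exact (pow_left_inj₀ zero_le zero_le two_ne_zero).1 (by rw [pow_two, h1])
  have main : ∀ A A' B B' : L, A + A' = B + B' → v A * v A' = r ^ 2 → v B * v B' = r ^ 2 →
      v A ≤ v A' → v B ≤ v B' → v A = v B := by
    intro A A' B B' h hA hB h1 h2
    have aux : v A' = v B' → v A = v B := by
      intro h3
      rw [h3, ← hB] at hA
      refine mul_right_cancel₀ ?_ hA
      rintro h4
      rw [h4, mul_zero] at hB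
      exact hr (by simpa using hB.symm)
    rcases h1.lt_or_eq with h1 | h1
    · rcases h2.lt_or_eq with h2 | h2
      · apply aux
        rw [← Valuation.map_add_eq_of_lt_right v h1, ← Valuation.map_add_eq_of_lt_right v h2, h]
      · have e1 := eqr _ _ hB h2
        have e2 := key _ _ hA h1
        have e3 := Valuation.map_add_eq_of_lt_right v h1
        rw [h] at e3
        have := v.map_add B B'
        rw [e3, ← h2, max_self, e1] at this
        exact absurd e2.2 (not_lt.2 this)
    · have e1 := eqr _ _ hA h1
      rcases h2.lt_or_eq with h2 | h2
      · have e2 := key _ _ hB h2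
        have e3 := Valuation.map_add_eq_of_lt_right v h2
        rw [← h] at e3
        have := v.map_add A A'
        rw [e3, ← h1, max_self, e1] at this
        exact absurd e2.2 (not_lt.2 this)
      · rw [e1, eqr _ _ hB h2]
  rcases le_total (v A) (v A') with h1 | h1 <;> rcases le_total (v B) (v B') with h2 | h2
  · exact ⟨v A, by rw [main A A' B B' h hA hB h1 h2]⟩
  · refine ⟨r, ?_⟩
    rw [main A A' B' B (by rw [h, add_comm]) hA (by rw [mul_comm, hB]) h1 h2, mul_comm, hB, pow_two]
  · refine ⟨r, ?_⟩
    rw [← main A' A B B' (by rw [← h, add_comm]) (by rw [mul_comm, hA]) hB h1 h2, hA, pow_two]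
  · have := main A' A B' B (by rw [add_comm, h, add_comm]) (by rw [mul_comm, hA]) (by rw [mul_comm, hB]) h1 h2
    rw [← this, ← hA] at hB
    refine ⟨v A, ?_⟩
    rw [mul_right_cancel₀ (?_ : v A' ≠ 0) hB]
    rintro h4
    rw [h4, mul_zero] at hA
    exact hr (by simpa using hA.symm)

/-! ### The field `ℚ(i, √17)` -/

/-- The field `ℚ(i)`. -/
abbrev GF : Type := FractionRing GaussianInt

theorem seventeen_not_sq (z : GaussianInt) : z ^ 2 ≠ 17 := by
  intro h
  have h1 := congrArg Zsqrtd.re h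
  have h2 := congrArg Zsqrtd.im h
  rw [pow_two] at h1 h2
  have e : (17 : GaussianInt).re = 17 := rfl
  have e' : (17 : GaussianInt).im = 0 := rfl
  simp only [Zsqrtd.re_mul, Zsqrtd.im_mul, e, e'] at h1 h2
  have h3 : z.re * z.im = 0 := by linarith
  rcases mul_eq_zero.1 h3 with h0 | h0 <;> rw [h0] at h1
  · nlinarith [mul_self_nonneg z.im]
  · have : z.re ≤ 4 := by nlinarith
    have : -4 ≤ z.re := by nlinarith
    interval_cases z.re <;> omega

theorem exists_of_sq_eq {x : GF} {y : GaussianInt} (h : x ^ 2 = algebraMap _ GF y) :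
    ∃ z : GaussianInt, algebraMap _ GF z = x :=
  IsIntegrallyClosed.exists_algebraMap_eq_of_isIntegral_pow (n := 2) two_pos
    (h ▸ isIntegral_algebraMap)

theorem algebraMap_GF_inj {x y : GaussianInt} (h : algebraMap _ GF x = algebraMap _ GF y) :
    x = y := IsFractionRing.injective GaussianInt GF h

/-- `17` is not a square in `ℚ(i)`; this makes `QuadraticAlgebra GF 17 0` a field. -/
instance factGF : Fact (∀ r : GF, r ^ 2 ≠ 17 + 0 * r) := ⟨by
  intro r h
  rw [zero_mul, add_zero, ← map_ofNat (algebraMap GaussianInt GF) 17] at h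
  obtain ⟨z, rfl⟩ := exists_of_sq_eq h
  exact seventeen_not_sq z (algebraMap_GF_inj (by rw [map_pow, h]))⟩

/-- The biquadratic field `ℚ(i, √17)`. -/
abbrev LL : Type := QuadraticAlgebra GF 17 0

/-- The ring of integers of `ℚ(i, √17)`. -/
abbrev R0 := integralClosure GaussianInt LL

instance : IsFractionRing R0 LL := integralClosure.isFractionRing_of_finite_extension GF LL

/-- The nontrivial automorphism of `ℚ(i, √17)` over `ℚ(i)`. -/
noncomputable abbrev conj : LL →+* LL := starRingEnd LL

theorem conj_mk (a b : GF) : conj (⟨a, b⟩ : LL) = ⟨a, -b⟩ := by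
  rw [starRingEnd_apply]; ext <;> simp

theorem algebraMap_LL (a : GaussianInt) : algebraMap GaussianInt LL a = ⟨algebraMap _ GF a, 0⟩ :=
  rfl

/-- An element of `ℚ(i, √17)` is integral over `ℤ[i]` iff its trace and norm to `ℚ(i)` are Gaussian
integers. -/
theorem isIntegral_mk_iff {a b : GF} : IsIntegral GaussianInt (⟨a, b⟩ : LL) ↔
    ∃ t n : GaussianInt, algebraMap _ GF t = 2 * a ∧ algebraMap _ GF n = a ^ 2 - 17 * b ^ 2 := by
  have inj : Function.Injective (algebraMap GF LL) := QuadraticAlgebra.algebraMap_injective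
  constructor
  · intro h
    have h' : IsIntegral GaussianInt (⟨a, -b⟩ : LL) := by
      rw [← conj_mk]
      refine h.map_of_comp_eq (RingHom.id _) conj ?_
      refine RingHom.ext fun x => ?_
      simp only [RingHom.comp_apply, RingHom.id_apply, algebraMap_LL, conj_mk, neg_zero]
    have hs := h.add h'
    have hm := h.mul h'
    have es : (⟨a, b⟩ + ⟨a, -b⟩ : LL) = algebraMap GF LL (2 * a) := by
      ext <;> simp; ring
    have em : (⟨a, b⟩ * ⟨a, -b⟩ : LL) = algebraMap GF LL (a ^ 2 - 17 * b ^ 2) := by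
      rw [QuadraticAlgebra.algebraMap_eq]
      ext <;> simp <;> ring
    rw [es, isIntegral_algebraMap_iff inj] at hs
    rw [em, isIntegral_algebraMap_iff inj] at hm
    obtain ⟨t, ht⟩ := IsIntegrallyClosed.isIntegral_iff.1 hs
    obtain ⟨n, hn⟩ := IsIntegrallyClosed.isIntegral_iff.1 hm
    exact ⟨t, n, ht, hn⟩
  · rintro ⟨t, n, ht, hn⟩
    refine ⟨Polynomial.X ^ 2 - Polynomial.C t * Polynomial.X + Polynomial.C n, by monicity!, ?_⟩
    simp only [Polynomial.eval₂_add, Polynomial.eval₂_sub, Polynomial.eval₂_pow, Polynomial.eval₂_X,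
      Polynomial.eval₂_mul, Polynomial.eval₂_C, algebraMap_LL, ht, hn]
    rw [pow_two]
    ext <;> simp <;> ring

/-! ### Unramified primes -/

theorem dvd_of_seventeen_dvd_sq {n : GaussianInt} (h : 17 ∣ n ^ 2) : 17 ∣ n := by
  obtain ⟨k, hk⟩ := h
  have h1 := congrArg Zsqrtd.re hk
  have h2 := congrArg Zsqrtd.im hk
  have e : (17 : GaussianInt) = ((17 : ℤ) : GaussianInt) := rfl
  rw [pow_two, e] at h1 h2
  simp only [Zsqrtd.re_mul, Zsqrtd.im_mul, Zsqrtd.re_intCast, Zsqrtd.im_intCast] at h1 h2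
  rw [e, Zsqrtd.intCast_dvd]
  have p17 : Prime (17 : ℤ) := Int.prime_iff_natAbs_prime.2 (by norm_num)
  have h3 : (17 : ℤ) ∣ 2 * (n.re * n.im) := ⟨k.im, by linarith⟩
  have h4 : (17 : ℤ) ∣ n.re * n.im := by omega
  rcases p17.dvd_or_dvd h4 with h | h
  · refine ⟨h, p17.dvd_of_dvd_pow (n := 2) ?_⟩
    obtain ⟨u, hu⟩ := h
    rw [hu] at h1
    exact ⟨17 * u ^ 2 - k.re, by linarith⟩
  · refine ⟨p17.dvd_of_dvd_pow (n := 2) ?_, h⟩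
    obtain ⟨u, hu⟩ := h
    rw [hu] at h1
    exact ⟨17 * u ^ 2 + k.re, by linarith⟩

/-- The element `√17` of `ℚ(i, √17)`. -/
def th : LL := ⟨0, 1⟩

theorem th_isIntegral : IsIntegral GaussianInt th :=
  isIntegral_mk_iff.2 ⟨0, -17, by simp, by rw [map_neg, map_ofNat]; ring⟩

/-- Integrality of `a + b√17` forces `34 b` to be a Gaussian integer. -/
theorem exists_B {a b : GF} {t n : GaussianInt} (ht : algebraMap _ GF t = 2 * a)
    (hn : algebraMap _ GF n = a ^ 2 - 17 * b ^ 2) : ∃ B : GaussianInt,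
    algebraMap _ GF B = 34 * b ∧ B ^ 2 = 17 * (t ^ 2 - 4 * n) := by
  have h : (34 * b) ^ 2 = algebraMap _ GF (17 * (t ^ 2 - 4 * n)) := by
    simp only [map_mul, map_sub, map_pow, map_ofNat, ht, hn]; ring
  obtain ⟨B, hB⟩ := exists_of_sq_eq h
  refine ⟨B, hB, algebraMap_GF_inj ?_⟩
  rw [map_pow, hB, h]

/-- Primes of `ℤ[i]` not dividing `34` are unramified in `ℚ(i, √17)`. -/
theorem radical_q {q : GaussianInt} (hq : Prime q) (h34 : ¬ q ∣ 34) (z : R0)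
    (h : algebraMap GaussianInt R0 q ∣ z ^ 2) : algebraMap GaussianInt R0 q ∣ z := by
  obtain ⟨⟨a, b⟩, hz⟩ := z
  obtain ⟨⟨⟨c, d⟩, hy⟩, h⟩ := h
  have h : (⟨a, b⟩ ^ 2 : LL) = algebraMap GaussianInt LL q * ⟨c, d⟩ := congrArg Subtype.val h
  rw [algebraMap_LL, pow_two] at h
  have h1 := congrArg QuadraticAlgebra.re h
  have h2 := congrArg QuadraticAlgebra.im h
  simp only [QuadraticAlgebra.re_mul, QuadraticAlgebra.im_mul] at h1 h2
  have hq0 : algebraMap _ GF q ≠ 0 := fun h => hq.ne_zero (algebraMap_GF_inj (by rw [h, map_zero]))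
  obtain ⟨t, n, ht, hn⟩ := isIntegral_mk_iff.1 hz
  obtain ⟨t', n', ht', hn'⟩ := isIntegral_mk_iff.1 hy
  obtain ⟨B, hB, hB2⟩ := exists_B ht hn
  have e1 : q ^ 2 * n' = n ^ 2 := by
    apply algebraMap_GF_inj
    simp only [map_mul, map_pow, hn, hn']
    linear_combination (-(a * a + 17 * b * b) - algebraMap _ GF q * c) * h1 +
      17 * (2 * a * b + algebraMap _ GF q * d) * h2
  have e2 : q * t' = t ^ 2 - 2 * n := by
    apply algebraMap_GF_inj
    simp only [map_mul, map_pow, map_sub, map_ofNat, hn, ht, ht']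
    linear_combination (-2) * h1
  have d2 : ¬ q ∣ 2 := fun h => h34 (h.trans ⟨17, by norm_num⟩)
  have d17 : ¬ q ∣ 17 := fun h => h34 (h.trans ⟨2, by norm_num⟩)
  obtain ⟨n1, hn1⟩ : q ∣ n := hq.dvd_of_dvd_pow (n := 2) ⟨q * n', by rw [← e1]; ring⟩
  obtain ⟨t1, ht1⟩ : q ∣ t := hq.dvd_of_dvd_pow (n := 2) ⟨t' + 2 * n1, by
    linear_combination (-1) * e2 + 2 * hn1⟩
  obtain ⟨B1, hB1⟩ : q ∣ B := hq.dvd_of_dvd_pow (n := 2) ⟨17 * (t * t1 - 4 * n1), by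
    rw [hB2, hn1, ht1]; ring⟩
  have e3 : q * (68 * n1) = q * (q * (17 * t1 ^ 2 - B1 ^ 2)) := by
    subst hn1 ht1 hB1
    linear_combination hB2
  have e4 := mul_left_cancel₀ hq.ne_zero e3
  obtain ⟨n2, rfl⟩ : q ∣ n1 := by
    have h5 : q ∣ 2 * (2 * (17 * n1)) := ⟨_, by rw [← e4]; ring⟩
    have h6 := ((hq.dvd_or_dvd h5).resolve_left d2)
    have h7 := ((hq.dvd_or_dvd h6).resolve_left d2)
    exact ((hq.dvd_or_dvd h7).resolve_left d17)
  refine ⟨⟨⟨a / algebraMap _ GF q, b / algebraMap _ GF q⟩,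
    isIntegral_mk_iff.2 ⟨t1, n2, ?_, ?_⟩⟩, ?_⟩
  · rw [ht1, map_mul] at ht
    field_simp
    linear_combination ht
  · rw [hn1, map_mul, map_mul] at hn
    field_simp
    linear_combination hn
  · apply Subtype.ext
    change (⟨a, b⟩ : LL) = algebraMap GaussianInt LL q * ⟨a / algebraMap _ GF q, b / algebraMap _ GF q⟩
    rw [algebraMap_LL]
    ext
    · simp only [QuadraticAlgebra.re_mul]; field_simp; ring
    · simp only [QuadraticAlgebra.im_mul]; field_simp; ring

/-- The ideal `(√17)` is radical. -/
theorem radical_th (z : R0) (h : (⟨th, th_isIntegral⟩ : R0) ∣ z ^ 2) :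
    (⟨th, th_isIntegral⟩ : R0) ∣ z := by
  obtain ⟨⟨a, b⟩, hz⟩ := z
  obtain ⟨⟨⟨c, d⟩, hy⟩, h⟩ := h
  have h : (⟨a, b⟩ ^ 2 : LL) = th * ⟨c, d⟩ := congrArg Subtype.val h
  rw [th, pow_two] at h
  have h1 := congrArg QuadraticAlgebra.re h
  have h2 := congrArg QuadraticAlgebra.im h
  simp only [QuadraticAlgebra.re_mul, QuadraticAlgebra.im_mul] at h1 h2
  obtain ⟨t, n, ht, hn⟩ := isIntegral_mk_iff.1 hz
  obtain ⟨t', n', ht', hn'⟩ := isIntegral_mk_iff.1 hy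
  obtain ⟨B, hB, hB2⟩ := exists_B ht hn
  have e1 : n ^ 2 = 17 * (-n') := by
    apply algebraMap_GF_inj
    simp only [map_mul, map_pow, map_neg, map_ofNat, hn, hn']
    linear_combination ((a * a + 17 * b * b) + 17 * d) * h1 - 17 * (2 * a * b + c) * h2
  obtain ⟨n1, hn1⟩ := dvd_of_seventeen_dvd_sq ⟨_, e1⟩
  obtain ⟨B1, hB1⟩ := dvd_of_seventeen_dvd_sq ⟨_, hB2⟩
  have ne17 : (17 : GaussianInt) ≠ 0 := by decide
  have e3 : 17 * (17 * B1 ^ 2) = 17 * (t ^ 2 - 4 * n) := by rw [← hB2, hB1]; ring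
  have e4 := mul_left_cancel₀ ne17 e3
  obtain ⟨t1, ht1⟩ : 17 ∣ t := dvd_of_seventeen_dvd_sq ⟨B1 ^ 2 + 4 * n1, by
    linear_combination (-1) * e4 + 4 * hn1⟩
  have n17 : (17 : GF) ≠ 0 := by norm_num
  refine ⟨⟨⟨b, a / 17⟩, isIntegral_mk_iff.2 ⟨B1, -n1, ?_, ?_⟩⟩, ?_⟩
  · rw [hB1, map_mul, map_ofNat] at hB
    apply mul_left_cancel₀ n17
    rw [hB]; ring
  · rw [hn1, map_mul, map_ofNat] at hn
    rw [map_neg]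
    field_simp
    linear_combination (-1) * hn
  · apply Subtype.ext
    change (⟨a, b⟩ : LL) = th * ⟨b, a / 17⟩
    rw [th]
    ext
    · simp only [QuadraticAlgebra.re_mul]; field_simp; ring
    · simp only [QuadraticAlgebra.im_mul]; ring

/-! ### Valuations above Gaussian primes -/

/-- There is a prime of the ring of integers above a given Gaussian prime `q`; its valuation detects
divisibility by `q` on Gaussian integers. -/
theorem exists_prime_over {q : GaussianInt} (hq : Prime q) :
    ∃ P : HeightOneSpectrum R0, algebraMap GaussianInt R0 q ∈ P.asIdeal ∧
      ∀ x : GaussianInt, P.valuation LL (algebraMap GaussianInt LL x) ≤ 1 ∧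
        (P.valuation LL (algebraMap GaussianInt LL x) < 1 → q ∣ x) := by
  have hq0 : algebraMap GaussianInt R0 q ≠ 0 := by
    intro h
    have h : algebraMap GaussianInt LL q = 0 := congrArg Subtype.val h
    rw [algebraMap_LL] at h
    have h1 := congrArg QuadraticAlgebra.re h
    exact hq.ne_zero (algebraMap_GF_inj (by rw [map_zero]; exact h1))
  have hu : ¬ IsUnit (algebraMap GaussianInt R0 q) := by
    intro h
    obtain ⟨⟨⟨a, b⟩, hy⟩, h⟩ := h.exists_right_inv
    have h : algebraMap GaussianInt LL q * ⟨a, b⟩ = 1 := congrArg Subtype.val h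
    obtain ⟨t, n, ht, hn⟩ := isIntegral_mk_iff.1 hy
    rw [algebraMap_LL] at h
    have h1 := congrArg QuadraticAlgebra.re h
    have h2 := congrArg QuadraticAlgebra.im h
    simp only [QuadraticAlgebra.re_mul, QuadraticAlgebra.im_mul, QuadraticAlgebra.re_one,
      QuadraticAlgebra.im_one] at h1 h2
    apply hq.not_isUnit
    refine IsUnit.of_mul_eq_one (q * n) (algebraMap_GF_inj ?_)
    simp only [map_mul, map_one, hn]
    linear_combination (algebraMap _ GF q * a + 1) * h1 - 17 * algebraMap _ GF q * b * h2
  obtain ⟨I, hI, hqI⟩ := exists_max_ideal_of_mem_nonunits hu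
  let P : HeightOneSpectrum R0 := ⟨I, hI.isPrime, fun h => hq0 (by rw [h] at hqI; simpa using hqI)⟩
  refine ⟨P, hqI, fun x => ⟨P.valuation_le_one (K := LL) (algebraMap GaussianInt R0 x), fun hx => ?_⟩⟩
  have hxP : algebraMap GaussianInt R0 x ∈ P.asIdeal :=
    (P.valuation_lt_one_iff_mem (K := LL) (algebraMap GaussianInt R0 x)).1 hx
  by_contra hn
  obtain ⟨u, v, huv⟩ := (hq.irreducible.coprime_iff_not_dvd).2 hn
  apply hI.ne_top
  rw [Ideal.eq_top_iff_one, ← map_one (algebraMap GaussianInt R0), ← huv, map_add, map_mul, map_mul]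
  exact I.add_mem (I.mul_mem_left _ hqI) (I.mul_mem_left _ hxP)

/-- A normalized valuation above `q` which is unramified over `ℚ(i)`. -/
theorem exists_val_q {q : GaussianInt} (hq : Prime q) (h34 : ¬ q ∣ 34) :
    ∃ v : Valuation LL ℤᵐ⁰, v (algebraMap GaussianInt LL q) = exp (-1 : ℤ) ∧
      ∀ x : GaussianInt, v (algebraMap GaussianInt LL x) ≤ 1 ∧
        (v (algebraMap GaussianInt LL x) < 1 → q ∣ x) := by
  obtain ⟨P, hqP, hP⟩ := exists_prime_over hq
  refine ⟨P.valuation LL, ?_, hP⟩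
  have h0 : algebraMap GaussianInt R0 q ≠ 0 := by
    intro h
    have h : algebraMap GaussianInt LL q = 0 := congrArg Subtype.val h
    rw [algebraMap_LL] at h
    have h1 := congrArg QuadraticAlgebra.re h
    exact hq.ne_zero (algebraMap_GF_inj (by rw [map_zero]; exact h1))
  have h1 := intValuation_of_radical P _ h0 (fun x => radical_q hq h34 x) hqP
  rw [← h1]
  exact P.valuation_of_algebraMap (K := LL) (algebraMap GaussianInt R0 q)

theorem gaussian_prime_of_norm {z : GaussianInt} (h : z.norm.natAbs.Prime) : Prime z := by
  rw [← irreducible_iff_prime]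
  refine ⟨fun hu => ?_, fun a b hab => ?_⟩
  · rw [← Zsqrtd.norm_eq_one_iff] at hu
    rw [hu] at h
    exact Nat.not_prime_one h
  · rw [hab, Zsqrtd.norm_mul, Int.natAbs_mul, Nat.prime_mul_iff] at h
    rcases h with h | h
    · exact Or.inr (Zsqrtd.norm_eq_one_iff.1 h.2)
    · exact Or.inl (Zsqrtd.norm_eq_one_iff.1 h.2)

theorem prime_lam : Prime (⟨1, 1⟩ : GaussianInt) := gaussian_prime_of_norm (by decide)
theorem prime_pi : Prime (⟨4, 1⟩ : GaussianInt) := gaussian_prime_of_norm (by norm_num [Zsqrtd.norm])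
theorem prime_pi' : Prime (⟨4, -1⟩ : GaussianInt) := gaussian_prime_of_norm (by norm_num [Zsqrtd.norm])

theorem gpi_dvd_iff (z : GaussianInt) : ⟨4, 1⟩ ∣ z ↔ (17 : ℤ) ∣ z.re - 4 * z.im := by
  constructor
  · rintro ⟨k, rfl⟩
    simp only [Zsqrtd.re_mul, Zsqrtd.im_mul]
    exact ⟨- k.im, by ring⟩
  · rintro ⟨k, hk⟩
    refine ⟨⟨4 * k + z.im, - k⟩, ?_⟩
    ext
    · simp only [Zsqrtd.re_mul]; linarith
    · simp only [Zsqrtd.im_mul]; linarith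

/-- The valuation at the ramified prime above `4 + i`, for which `√17` is a uniformizer. -/
theorem exists_val_th :
    ∃ v : Valuation LL ℤᵐ⁰, v th = exp (-1 : ℤ) ∧ v 2 = 1 ∧
      v (algebraMap GaussianInt LL ⟨4, -1⟩) = 1 := by
  obtain ⟨P, hqP, hP⟩ := exists_prime_over prime_pi
  have key : ∀ x : GaussianInt, ¬ (17 : ℤ) ∣ x.re - 4 * x.im →
      P.valuation LL (algebraMap GaussianInt LL x) = 1 := by
    intro x hx
    rw [← gpi_dvd_iff] at hx
    exact le_antisymm (hP x).1 (not_lt.1 fun h => hx ((hP x).2 h))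
  refine ⟨P.valuation LL, ?_, ?_, ?_⟩
  · have h0 : (⟨th, th_isIntegral⟩ : R0) ≠ 0 := by
      intro h
      have h : th = 0 := congrArg Subtype.val h
      exact one_ne_zero (congrArg QuadraticAlgebra.im h)
    have hm : (⟨th, th_isIntegral⟩ : R0) ∈ P.asIdeal := by
      apply P.isPrime.mem_of_pow_mem 2
      have : (⟨th, th_isIntegral⟩ : R0) ^ 2 = algebraMap GaussianInt R0 ⟨4, -1⟩ * algebraMap GaussianInt R0 ⟨4, 1⟩ := by
        rw [← map_mul]
        apply Subtype.ext
        change th ^ 2 = algebraMap GaussianInt LL 17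
        rw [algebraMap_LL, map_ofNat, pow_two, th]
        ext <;> simp
      rw [this]
      exact P.asIdeal.mul_mem_left _ hqP
    have h1 := intValuation_of_radical P _ h0 radical_th hm
    rw [← h1]
    exact P.valuation_of_algebraMap (K := LL) (⟨th, th_isIntegral⟩ : R0)
  · have := key 2 (by decide)
    rwa [map_ofNat] at this
  · exact key _ (by decide)

/-! ### Even valuations on the pair of quadrics -/

/-- The three differences of squares of the coordinates of a point on the quadrics (`Eqs` below) have
the same valuation as `17` away from `2` and `4 - i`. -/
theorem val_three {L : Type*} [Field L] [CharZero L] (v : Valuation L ℤᵐ⁰) {I t : L} (hI : I ^ 2 = -1)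
    (ht : t ^ 2 = 17) (h2 : v 2 = 1) (h4 : v (4 - I) = 1) :
    v t ≠ 0 ∧ v ((17 + t) / 2 - 2 * I * t) = v t ^ 2 ∧
      v ((4 + I - t) * (-17 - 5 * t) / 4) = v t ^ 2 ∧
      v ((4 + I + t) * (-17 + 3 * t) / 4) = v t ^ 2 := by
  have hI1 : v I = 1 := by
    have : v I ^ 4 = 1 := by rw [← map_pow, show I ^ 4 = (I ^ 2) ^ 2 by ring, hI]; simp
    exact (pow_eq_one_iff_of_nonneg zero_le (by norm_num)).1 this
  have hp2 : ∀ k : ℕ, v (2 ^ k) = 1 := fun k => by rw [map_pow, h2, one_pow]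
  have hv4 : v 4 = 1 := by rw [show (4 : L) = 2 ^ 2 by norm_num, hp2]
  have hv8 : v 8 = 1 := by rw [show (8 : L) = 2 ^ 3 by norm_num, hp2]
  have h4p : v (4 + I) = v t ^ 2 := by
    rw [← map_pow, ht, show (17 : L) = (4 + I) * (4 - I) by linear_combination hI, map_mul, h4,
      mul_one]
  have hle : v t ^ 2 ≤ 1 := by
    rw [← h4p]; exact (v.map_add _ _).trans (by rw [hv4, hI1, max_self])
  have ht1 : v t ≤ 1 := by
    by_contra hc
    exact absurd hle (not_le.2 (one_lt_pow₀ (not_le.1 hc) two_ne_zero))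
  have ht2 : v t ^ 2 ≤ v t := by
    rw [pow_two]; exact mul_le_of_le_one_right' ht1
  have ht0 : v t ≠ 0 := by
    intro h
    have h0 : t = 0 := v.zero_iff.1 h
    rw [h0] at ht
    norm_num at ht
  have key : ∀ x y : L, v x ≤ v t → v y ≤ v t → v (x * y) = v t ^ 2 → v x = v t := by
    intro x y hx hy hxy
    rcases hx.lt_or_eq with h | h
    · exfalso
      have : v x * v y < v t * v t :=
        mul_lt_mul_of_lt_of_le_of_nonneg_of_pos h hy zero_le (zero_lt_iff.2 ht0)
      rw [map_mul, pow_two] at hxy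
      exact absurd hxy this.ne
    · exact h
  have hx1 : v (4 * I - 1) = v t ^ 2 := by
    rw [show 4 * I - 1 = I * (4 + I) by linear_combination (-1) * hI, map_mul, hI1, one_mul, h4p]
  have k1 : v (4 * I - 1 - t) = v t := by
    refine key _ (4 * I - 1 + t) ((v.map_sub _ _).trans ?_) ((v.map_add _ _).trans ?_) ?_
    · rw [hx1]; exact max_le ht2 le_rfl
    · rw [hx1]; exact max_le ht2 le_rfl
    · rw [show (4 * I - 1 - t) * (4 * I - 1 + t) = -(8 * (4 + I)) by
        linear_combination 16 * hI - ht, Valuation.map_neg, map_mul, hv8, one_mul, h4p]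
  have k2 : v (4 + I - t) = v t ∧ v (4 + I + t) = v t := by
    have a1 : v (4 + I - t) ≤ v t := (v.map_sub _ _).trans (by rw [h4p]; exact max_le ht2 le_rfl)
    have a2 : v (4 + I + t) ≤ v t := (v.map_add _ _).trans (by rw [h4p]; exact max_le ht2 le_rfl)
    have a3 : v ((4 + I - t) * (4 + I + t)) = v t ^ 2 := by
      rw [show (4 + I - t) * (4 + I + t) = 2 * (I * (4 + I)) by linear_combination (-1) * hI - ht,
        map_mul, map_mul, h2, hI1, one_mul, one_mul, h4p]
    exact ⟨key _ _ a1 a2 a3, key _ _ a2 a1 (by rw [mul_comm, a3])⟩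
  have unit : ∀ x y : L, v x ≤ 1 → v y ≤ 1 → v (x * y) = 1 → v x = 1 := by
    intro x y hx hy hxy
    rw [map_mul] at hxy
    exact le_antisymm hx (by rw [← hxy]; exact mul_le_of_le_one_right' hy)
  have hn : ∀ n : ℕ, v (n : L) ≤ 1 := by
    intro n
    induction n with
    | zero => simp
    | succ n ih =>
      push_cast
      exact (v.map_add _ _).trans (max_le ih (by simp))
  have b5 : v (5 : L) ≤ 1 := by exact_mod_cast hn 5
  have b3 : v (3 : L) ≤ 1 := by exact_mod_cast hn 3
  have k3 : v (t + 5) = 1 := by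
    refine unit _ (t - 5) ((v.map_add _ _).trans (max_le ht1 b5))
      ((v.map_sub _ _).trans (max_le ht1 b5)) ?_
    rw [show (t + 5) * (t - 5) = - 8 by linear_combination ht, Valuation.map_neg, hv8]
  have k4 : v (3 - t) = 1 := by
    refine unit _ (3 + t) ((v.map_sub _ _).trans (max_le b3 ht1))
      ((v.map_add _ _).trans (max_le b3 ht1)) ?_
    rw [show (3 - t) * (3 + t) = - 8 by linear_combination (-1) * ht, Valuation.map_neg, hv8]
  refine ⟨ht0, ?_, ?_, ?_⟩
  · rw [show (17 + t) / 2 - 2 * I * t = -(t * (4 * I - 1 - t) / 2) by linear_combination (-1/2) * ht,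
      Valuation.map_neg, map_div₀, map_mul, k1, h2, div_one, pow_two]
  · rw [show (4 + I - t) * (-17 - 5 * t) = -((4 + I - t) * (t * (t + 5))) by
      linear_combination (4 + I - t) * ht, map_div₀, Valuation.map_neg, map_mul, map_mul, k2.1, k3, hv4,
      div_one, mul_one, pow_two]
  · rw [show (4 + I + t) * (-17 + 3 * t) = (4 + I + t) * (t * (3 - t)) by
      linear_combination (4 + I + t) * ht, map_div₀, map_mul, map_mul, k2.2, k4, hv4,
      div_one, mul_one, pow_two]

/-- For a point `(a, b, c)` on the pair of quadrics, `(a + b)(a + c)` and `(a + b)(b + c)` have even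
valuation away from `2` and `4 - i`. -/
theorem isSquare_val_w {L : Type*} [Field L] [CharZero L] (v : Valuation L ℤᵐ⁰) {I t : L}
    (hI : I ^ 2 = -1) (ht : t ^ 2 = 17) (h2 : v 2 = 1) (h4 : v (4 - I) = 1) {a b c : L}
    (e1 : a ^ 2 - b ^ 2 = (17 + t) / 2 - 2 * I * t)
    (e2 : a ^ 2 - c ^ 2 = (4 + I - t) * (-17 - 5 * t) / 4) :
    IsSquare (v ((a + b) * (a + c))) ∧ IsSquare (v ((a + b) * (b + c))) := by
  obtain ⟨h0, k1, k2, k3⟩ := val_three v hI ht h2 h4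
  constructor
  · refine isSquare_val_mul v h0 (A' := a - b) (B' := a - c) (by ring) ?_ ?_
    · rw [← k1, ← e1]; congr 1; ring
    · rw [← k2, ← e2]; congr 1; ring
  · rw [add_comm a b]
    refine isSquare_val_mul v h0 (A' := b - a) (B' := b - c) (by ring) ?_ ?_
    · rw [← k1, ← e1, ← Valuation.map_neg]; congr 1; ring
    · rw [← k3]; congr 1
      linear_combination e2 - e1 + 1 / 2 * ht

/-! ### Gaussian integers modulo squares -/

/-- The Gaussian integer `i ^ a * (1 + i) ^ c * (4 + i) ^ b * (4 - i) ^ e`. -/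
def kap (a c b e : ℕ) : GaussianInt := ⟨0, 1⟩ ^ a * ⟨1, 1⟩ ^ c * ⟨4, 1⟩ ^ b * ⟨4, -1⟩ ^ e

theorem gaussian_unit {z : GaussianInt} (hz : IsUnit z) : ∃ a : ℕ, z = ⟨0, 1⟩ ^ a := by
  have h := Zsqrtd.norm_eq_one_iff.2 hz
  have h1 : z.re * z.re + z.im * z.im = 1 := by
    have := GaussianInt.abs_natCast_norm z
    rw [h, Zsqrtd.norm_def] at this
    push_cast at this
    linarith
  obtain ⟨x, y⟩ := z
  simp only at h1
  have a1 : x ≤ 1 := by nlinarith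
  have a2 : -1 ≤ x := by nlinarith
  have a3 : y ≤ 1 := by nlinarith
  have a4 : -1 ≤ y := by nlinarith
  interval_cases x <;> interval_cases y <;> first | omega | skip
  · exact ⟨2, by decide⟩
  · exact ⟨3, by decide⟩
  · exact ⟨1, by decide⟩
  · exact ⟨0, by decide⟩

/-- Unique factorization in `ℤ[i]`: a Gaussian integer with even valuation at the places of
`ℚ(i, √17)` prime to `34` is, up to squares, a product of powers of `i`, `1 + i`, `4 + i`, `4 - i`. -/
theorem kap_of_even (z : GaussianInt) (hz : z ≠ 0)
    (h : ∀ v : Valuation LL ℤᵐ⁰, v 2 = 1 → v 17 = 1 → v (algebraMap GaussianInt LL ⟨4, -1⟩) = 1 →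
      IsSquare (v (algebraMap GaussianInt LL z))) :
    ∃ a c b e : ℕ, ∃ y : GaussianInt, z = kap a c b e * y ^ 2 := by
  induction hn : z.norm.natAbs using Nat.strong_induction_on generalizing z with
  | _ n ih =>
  by_cases hu : IsUnit z
  · obtain ⟨a, rfl⟩ := gaussian_unit hu
    exact ⟨a, 0, 0, 0, 1, by simp [kap]⟩
  obtain ⟨q, hq, z1, rfl⟩ := WfDvdMonoid.exists_irreducible_factor hu hz
  have hq' := hq.prime
  have hz1 : z1 ≠ 0 := right_ne_zero_of_mul hz
  have hlt : ∀ p z : GaussianInt, Prime p → z ≠ 0 → z.norm.natAbs < (p * z).norm.natAbs := by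
    intro p z hp hz
    rw [Zsqrtd.norm_mul, Int.natAbs_mul]
    have h1 : p.norm.natAbs ≠ 1 := fun h => hp.not_isUnit (Zsqrtd.norm_eq_one_iff.1 h)
    have h2 : p.norm.natAbs ≠ 0 := fun h => hp.ne_zero (GaussianInt.norm_eq_zero.1 (Int.natAbs_eq_zero.1 h))
    have h3 : z.norm.natAbs ≠ 0 := fun h => hz (GaussianInt.norm_eq_zero.1 (Int.natAbs_eq_zero.1 h))
    have : 2 ≤ p.norm.natAbs := by omega
    nlinarith [Nat.pos_of_ne_zero h3]
  have simple : ∀ p : GaussianInt, Prime p → p ∣ q * z1 →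
      (∀ v : Valuation LL ℤᵐ⁰, v 2 = 1 → v 17 = 1 → v (algebraMap GaussianInt LL ⟨4, -1⟩) = 1 →
        v (algebraMap GaussianInt LL p) = 1) →
      ∃ a c b e : ℕ, ∃ y : GaussianInt, ∃ z2, q * z1 = p * z2 ∧ z2 = kap a c b e * y ^ 2 := by
    rintro p hp ⟨z2, h2⟩ hv
    have hz2 : z2 ≠ 0 := by rintro rfl; exact hz (by rw [h2, mul_zero])
    obtain ⟨a, c, b, e, y, hy⟩ := ih z2.norm.natAbs (by rw [← hn, h2]; exact hlt _ _ hp hz2) z2 hz2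
      (fun v v2 v17 v4 => by
        have := h v v2 v17 v4
        rwa [h2, map_mul, map_mul, hv v v2 v17 v4, one_mul] at this) rfl
    exact ⟨a, c, b, e, y, z2, h2, hy⟩
  by_cases h34 : q ∣ 34
  · have h34' : q ∣ ⟨0, -1⟩ * ⟨1, 1⟩ ^ 2 * (⟨4, 1⟩ * ⟨4, -1⟩) := by
      have e : (34 : GaussianInt) = ⟨0, -1⟩ * ⟨1, 1⟩ ^ 2 * (⟨4, 1⟩ * ⟨4, -1⟩) := by decide
      rwa [← e]
    have aux : ∀ p : GaussianInt, Prime p → q ∣ p → p ∣ q * z1 := fun p hp hqp =>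
      ((hq.dvd_irreducible_iff_associated hp.irreducible).1 hqp).dvd'.trans (dvd_mul_right _ _)
    have hcase : q ∣ ⟨1, 1⟩ ∨ q ∣ ⟨4, 1⟩ ∨ q ∣ ⟨4, -1⟩ := by
      rcases hq'.dvd_or_dvd h34' with h | h
      · rcases hq'.dvd_or_dvd h with h | h
        · exact absurd (isUnit_of_dvd_unit h (IsUnit.of_mul_eq_one ⟨0, 1⟩ (by decide))) hq'.not_isUnit
        · exact Or.inl (hq'.dvd_of_dvd_pow h)
      · exact Or.inr (hq'.dvd_or_dvd h)
    have e17 : (17 : LL) = algebraMap GaussianInt LL ⟨4, 1⟩ * algebraMap GaussianInt LL ⟨4, -1⟩ := by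
      rw [← map_mul, ← map_ofNat (algebraMap GaussianInt LL) 17]; congr 1
    rcases hcase with h | h | h
    · obtain ⟨a, c, b, e, y, z2, h1, h2⟩ := simple _ prime_lam (aux _ prime_lam h) (by
        intro v v2 _ _
        have e2 : (2 : LL) ^ 2 = -algebraMap GaussianInt LL ⟨1, 1⟩ ^ 4 := by
          have e3 : (2 : GaussianInt) ^ 2 = -⟨1, 1⟩ ^ 4 := by decide
          rw [← map_ofNat (algebraMap GaussianInt LL) 2, ← map_pow, e3, map_neg, map_pow]
        have e4 := congrArg v e2
        rw [Valuation.map_neg, map_pow, map_pow, v2, one_pow] at e4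
        exact (pow_eq_one_iff_of_nonneg zero_le (by norm_num)).1 e4.symm)
      exact ⟨a, c + 1, b, e, y, by rw [h1, h2, kap, kap]; ring⟩
    · obtain ⟨a, c, b, e, y, z2, h1, h2⟩ := simple _ prime_pi (aux _ prime_pi h) (by
        intro v v2 v17 v4
        rwa [e17, map_mul, v4, mul_one] at v17)
      exact ⟨a, c, b + 1, e, y, by rw [h1, h2, kap, kap]; ring⟩
    · obtain ⟨a, c, b, e, y, z2, h1, h2⟩ := simple _ prime_pi' (aux _ prime_pi' h)
        (fun v _ _ v4 => v4)
      exact ⟨a, c, b, e + 1, y, by rw [h1, h2, kap, kap]; ring⟩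
  · obtain ⟨v, hvq, hv⟩ := exists_val_q hq' h34
    have one : ∀ x : GaussianInt, x ∣ 34 → v (algebraMap GaussianInt LL x) = 1 := fun x hx =>
      le_antisymm (hv x).1 (not_lt.1 fun h => h34 (((hv x).2 h).trans hx))
    have hsq := h v (by simpa only [map_ofNat] using one 2 ⟨17, by decide⟩)
      (by simpa only [map_ofNat] using one 17 ⟨2, by decide⟩) (one _ ⟨⟨8, 2⟩, by decide⟩)
    obtain ⟨z2, rfl⟩ : q ∣ z1 := by
      apply (hv z1).2
      refine lt_of_le_of_ne (hv z1).1 fun h1 => ?_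
      rw [map_mul, map_mul, hvq, h1, mul_one] at hsq
      obtain ⟨r, hr⟩ := hsq
      have hr0 : r ≠ 0 := by rintro rfl; simp at hr
      rw [← exp_log hr0, ← exp_add, exp_inj] at hr
      omega
    have hz2 : z2 ≠ 0 := right_ne_zero_of_mul hz1
    have hvq0 : v (algebraMap GaussianInt LL q) ≠ 0 := by rw [hvq]; exact exp_ne_zero
    obtain ⟨a, c, b, e, y, hy⟩ := ih z2.norm.natAbs
      (by rw [← hn]; exact (hlt _ _ hq' hz2).trans (hlt _ _ hq' hz1)) z2 hz2 (fun w w2 w17 w4 => by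
        have := h w w2 w17 w4
        rw [map_mul, map_mul, map_mul, map_mul, ← mul_assoc] at this
        have hw0 : w (algebraMap GaussianInt LL q) ≠ 0 := by
          rw [Valuation.ne_zero_iff]; rintro h0; rw [h0, map_zero] at hvq0; exact hvq0 rfl
        obtain ⟨r, hr⟩ := this
        refine ⟨r / w (algebraMap GaussianInt LL q), ?_⟩
        rw [div_mul_div_comm, ← hr, mul_div_cancel_left₀ _ (mul_ne_zero hw0 hw0)]) rfl
    exact ⟨a, c, b, e, q * y, by rw [hy]; ring⟩

/-! ### Norms from `ℚ(i, √17)` modulo `4 + i` -/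

theorem kap_of_even_GF {f : GF} (hf : f ≠ 0)
    (h : ∀ v : Valuation LL ℤᵐ⁰, v 2 = 1 → v 17 = 1 → v (algebraMap GaussianInt LL ⟨4, -1⟩) = 1 →
      IsSquare (v (algebraMap GF LL f))) :
    ∃ a c b e : ℕ, ∃ y : GF, y ≠ 0 ∧ f = algebraMap _ GF (kap a c b e) * y ^ 2 := by
  obtain ⟨x, d, hd, rfl⟩ := IsFractionRing.div_surjective (A := GaussianInt) f
  have hd0 : algebraMap _ GF d ≠ 0 := by
    intro h; rw [h, div_zero] at hf; exact hf rfl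
  have hx0 : algebraMap _ GF x ≠ 0 := by
    intro h; rw [h, zero_div] at hf; exact hf rfl
  obtain ⟨a, c, b, e, y, hy⟩ := kap_of_even (x * d) (by
      intro h0
      have := congrArg (algebraMap _ GF) h0
      rw [map_mul, map_zero] at this
      exact mul_ne_zero hx0 hd0 this) (by
    intro v v2 v17 v4
    have h1 := h v v2 v17 v4
    have e : algebraMap GaussianInt LL (x * d) =
        algebraMap GF LL (algebraMap _ GF x / algebraMap _ GF d) * algebraMap GaussianInt LL d ^ 2 := by
      rw [IsScalarTower.algebraMap_apply GaussianInt GF LL,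
        IsScalarTower.algebraMap_apply GaussianInt GF LL d, ← map_pow (algebraMap GF LL), ← map_mul (algebraMap GF LL)]
      congr 1
      rw [map_mul]
      field_simp
    rw [e, map_mul, map_pow]
    exact h1.mul (IsSquare.sq _))
  refine ⟨a, c, b, e, algebraMap _ GF y / algebraMap _ GF d, div_ne_zero ?_ hd0, ?_⟩
  · intro h0
    have := congrArg (algebraMap _ GF) hy
    rw [map_mul, map_mul, map_pow, h0] at this
    exact mul_ne_zero hx0 hd0 (by rw [this]; ring)
  · have := congrArg (algebraMap _ GF) hy
    rw [map_mul, map_mul, map_pow] at this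
    field_simp
    exact this

instance fact17 : Fact (Nat.Prime 17) := ⟨by norm_num⟩

/-- Reduction modulo `4 + i`. -/
def psi : GaussianInt →+* ZMod 17 := Zsqrtd.lift ⟨-4, by decide⟩

theorem psi_eq (z : GaussianInt) : psi z = ((z.re - 4 * z.im : ℤ) : ZMod 17) := by
  change (z.re : ZMod 17) + z.im * (-4) = _
  push_cast
  ring

theorem psi_eq_zero_iff (z : GaussianInt) : psi z = 0 ↔ ⟨4, 1⟩ ∣ z := by
  rw [psi_eq, ZMod.intCast_zmod_eq_zero_iff_dvd, gpi_dvd_iff]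
  rfl

/-- If `k` is a nonsquare unit modulo `4 + i`, then `k` is not a norm from `ℚ(i, √17)`, because `17` is
a uniformizer at `4 + i`. -/
theorem hilbert_descent {k : GaussianInt} (hk : ∀ x y : ZMod 17, x ^ 2 = psi k * y ^ 2 → y = 0)
    (α β h : GaussianInt) (e : α ^ 2 - 17 * β ^ 2 = k * h ^ 2) : h = 0 := by
  by_contra hh
  induction hn : h.norm.natAbs using Nat.strong_induction_on generalizing α β h with
  | _ n ih =>
  have e17 : (17 : GaussianInt) = ⟨4, 1⟩ * ⟨4, -1⟩ := by decide
  have h17 : psi 17 = 0 := by rw [psi_eq_zero_iff, e17]; exact dvd_mul_right _ _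
  have e1 := congrArg psi e
  simp only [map_sub, map_mul, map_pow, h17, zero_mul, sub_zero] at e1
  have h0 := hk _ _ e1
  rw [h0, zero_pow two_ne_zero, mul_zero] at e1
  have h1 : psi α = 0 := pow_eq_zero_iff two_ne_zero |>.1 e1
  obtain ⟨h', rfl⟩ := (psi_eq_zero_iff _).1 h0
  obtain ⟨α', rfl⟩ := (psi_eq_zero_iff _).1 h1
  have e2 : (⟨4, 1⟩ : GaussianInt) * (⟨4, -1⟩ * β ^ 2) =
      ⟨4, 1⟩ * (⟨4, 1⟩ * (α' ^ 2 - k * h' ^ 2)) := by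
    rw [e17] at e
    linear_combination (-1) * e
  have e3 := mul_left_cancel₀ prime_pi.ne_zero e2
  have h2 : psi β = 0 := by
    have := congrArg psi e3
    rw [map_mul, map_mul psi ⟨4, 1⟩, (psi_eq_zero_iff ⟨4, 1⟩).2 dvd_rfl, zero_mul, map_pow] at this
    rcases mul_eq_zero.1 this with h | h
    · exact absurd h (by decide)
    · exact pow_eq_zero_iff two_ne_zero |>.1 h
  obtain ⟨β', rfl⟩ := (psi_eq_zero_iff _).1 h2
  have hp : (⟨4, 1⟩ : GaussianInt) ^ 2 ≠ 0 := pow_ne_zero _ prime_pi.ne_zero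
  have hh' : h' ≠ 0 := right_ne_zero_of_mul hh
  refine ih h'.norm.natAbs ?_ α' β' h' (mul_left_cancel₀ hp ?_) hh' rfl
  · rw [← hn, Zsqrtd.norm_mul, Int.natAbs_mul]
    have h3 : h'.norm.natAbs ≠ 0 := fun h => hh' (GaussianInt.norm_eq_zero.1 (Int.natAbs_eq_zero.1 h))
    have : (⟨4, 1⟩ : GaussianInt).norm.natAbs = 17 := by decide
    rw [this]
    omega
  · linear_combination e

theorem even_of_norm_aux {α β h : GaussianInt} {a c b e : ℕ} (hh : h ≠ 0)
    (H : α ^ 2 - 17 * β ^ 2 = kap a c (2 * b) e * h ^ 2) : Even c := by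
  by_contra hc
  rw [Nat.not_even_iff_odd] at hc
  obtain ⟨c', rfl⟩ := hc
  have hp := prime_pi.ne_zero
  refine mul_ne_zero (pow_ne_zero b hp) hh (hilbert_descent (k := kap a (2 * c' + 1) 0 e) ?_ α β
    (⟨4, 1⟩ ^ b * h) ?_)
  · intro x y hxy
    obtain ⟨p, hp0, hp⟩ : ∃ p : ZMod 17, p ≠ 0 ∧ psi ⟨0, 1⟩ = p ^ 2 := ⟨8, by decide, by decide⟩
    obtain ⟨r, hr0, hr⟩ : ∃ r : ZMod 17, r ≠ 0 ∧ psi ⟨1, 1⟩ = 3 * r ^ 2 := ⟨4, by decide, by decide⟩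
    obtain ⟨u, hu0, hu⟩ : ∃ u : ZMod 17, u ≠ 0 ∧ psi ⟨4, -1⟩ = u ^ 2 := ⟨5, by decide, by decide⟩
    have h3 : (3 : ZMod 17) ≠ 0 := by decide
    have e1 : psi (kap a (2 * c' + 1) 0 e) = 3 * (p ^ a * (3 * r ^ 2) ^ c' * u ^ e * r) ^ 2 := by
      simp only [kap, map_mul, map_pow, hp, hr, hu]
      ring
    rw [e1, mul_assoc, ← mul_pow] at hxy
    have key : ∀ x y : ZMod 17, x ^ 2 = 3 * y ^ 2 → y = 0 := by decide
    have := key _ _ hxy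
    refine (mul_eq_zero.1 this).resolve_left ?_
    exact mul_ne_zero (mul_ne_zero (mul_ne_zero (pow_ne_zero _ hp0)
      (pow_ne_zero _ (mul_ne_zero h3 (pow_ne_zero _ hr0)))) (pow_ne_zero _ hu0)) hr0
  · rw [H, kap, kap]; ring

/-- A norm from `ℚ(i, √17)` of the form `i^a (1+i)^c (4+i)^b (4-i)^e h²` has `c` even: modulo `4 + i`
the elements `i` and `4 - i` are squares but `1 + i` is not. -/
theorem even_of_norm {α β h : GF} {a c b e : ℕ} (hh : h ≠ 0)
    (H : α ^ 2 - 17 * β ^ 2 = algebraMap _ GF (kap a c b e) * h ^ 2) : Even c := by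
  obtain ⟨⟨d, hd⟩, hmul⟩ := IsLocalization.exist_integer_multiples_of_finset
    (nonZeroDivisors GaussianInt) ({α, β, h} : Finset GF)
  obtain ⟨α', hα⟩ := hmul α (by simp)
  obtain ⟨β', hβ⟩ := hmul β (by simp)
  obtain ⟨h', hh'⟩ := hmul h (by simp)
  simp only [Algebra.smul_def] at hα hβ hh'
  have hd0 : algebraMap _ GF d ≠ 0 := IsFractionRing.to_map_ne_zero_of_mem_nonZeroDivisors hd
  have hne : h' ≠ 0 := by
    rintro rfl
    rw [map_zero] at hh'
    exact mul_ne_zero hd0 hh hh'.symm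
  have HZ : α' ^ 2 - 17 * β' ^ 2 = kap a c b e * h' ^ 2 := by
    apply algebraMap_GF_inj
    simp only [map_sub, map_mul, map_pow, map_ofNat, hα, hβ, hh']
    linear_combination (algebraMap _ GF d) ^ 2 * H
  rcases Nat.even_or_odd' b with ⟨b', rfl | rfl⟩
  · exact even_of_norm_aux hne HZ
  · -- multiply by `i√17`, whose norm is `17 = (4 + i) * (4 - i)`
    refine even_of_norm_aux (α := 17 * β') (β := α') (a := a + 2) (b := b' + 1) (e := e + 1) hne ?_
    have e17 : (-17 : GaussianInt) = ⟨0, 1⟩ ^ 2 * (⟨4, 1⟩ * ⟨4, -1⟩) := by decide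
    have : kap (a + 2) c (2 * (b' + 1)) (e + 1) = -17 * kap a c (2 * b' + 1) e := by
      rw [e17, kap, kap]; ring
    rw [this]
    linear_combination (-17) * HZ

/-! ### The places above `2` -/

/-- The ring `ℤ₂[i]`. -/
abbrev OO : Type := QuadraticAlgebra ℤ_[2] (-1) 0

/-- Reduction of `2`-adic integers modulo `8`. -/
noncomputable def r8 : ℤ_[2] →+* ZMod 8 := PadicInt.toZModPow 3

theorem r8_eq_zero {x : ℤ_[2]} : r8 x = 0 ↔ 8 ∣ x := by
  have : x ∈ RingHom.ker (PadicInt.toZModPow (p := 2) 3) ↔ 8 ∣ x := by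
    rw [PadicInt.ker_toZModPow, Ideal.mem_span_singleton]; norm_num
  rwa [RingHom.mem_ker] at this

theorem two_dvd_or (x : ℤ_[2]) : 2 ∣ x ∨ IsUnit x := by
  by_cases h : IsUnit x
  · exact Or.inr h
  · left
    rw [PadicInt.isUnit_iff] at h
    have := (PadicInt.norm_lt_one_iff_dvd x).1 (lt_of_le_of_ne x.norm_le_one h)
    simpa using this

theorem not_isUnit_two_mul (x : ℤ_[2]) : ¬ IsUnit (2 * x) := by
  rw [PadicInt.isUnit_iff]
  refine ne_of_lt ((PadicInt.norm_lt_one_iff_dvd _).2 ?_)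
  simp

theorem two_ne_zero_Z2 : (2 : ℤ_[2]) ≠ 0 := by norm_num

theorem eight_r8_mul {x : ℤ_[2]} : r8 (8 * x) = 0 := r8_eq_zero.2 (dvd_mul_right _ _)

/-- Parity of a `2`-adic integer, read off from its residue modulo `8`. -/
theorem isUnit_iff_r8 {x : ℤ_[2]} : IsUnit x ↔ 4 * r8 x = 4 := by
  constructor
  · intro h
    have : IsUnit (r8 x) := h.map r8
    revert this
    generalize r8 x = y
    revert y
    decide
  · intro h
    rcases two_dvd_or x with ⟨y, rfl⟩ | h'
    · exfalso
      rw [map_mul, map_ofNat] at h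
      revert h
      generalize r8 y = y
      revert y
      decide
    · exact h'

theorem two_dvd_iff_r8 {x : ℤ_[2]} : 2 ∣ x ↔ 4 * r8 x = 0 := by
  constructor
  · rintro ⟨y, rfl⟩
    rw [map_mul, map_ofNat]
    generalize r8 y = y
    revert y
    decide
  · intro h
    refine (two_dvd_or x).resolve_right fun h' => ?_
    rw [isUnit_iff_r8, h] at h'
    revert h'
    decide

theorem exists_sqrt17 : ∃ t u : ℤ_[2], t ^ 2 = 17 ∧ t = 9 + 32 * u := by
  have h16 : ‖(16 : ℤ_[2])‖ = 1 / 16 := by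
    have := PadicInt.norm_p_pow (p := 2) 4
    norm_num at this ⊢
    exact this
  have h2 : ‖(2 : ℤ_[2])‖ = 1 / 2 := by
    have := PadicInt.norm_p (p := 2)
    norm_num at this ⊢
    exact this
  obtain ⟨z, hz, hz1, -⟩ := hensels_lemma (p := 2) (R := ℤ_[2])
    (F := Polynomial.X ^ 2 - Polynomial.C 17) (a := 1) (by
      have e1 : Polynomial.aeval (1 : ℤ_[2]) (Polynomial.X ^ 2 - Polynomial.C (17 : ℤ_[2])) = -16 := by
        simp; norm_num
      have e2 : Polynomial.aeval (1 : ℤ_[2])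
          (Polynomial.derivative (Polynomial.X ^ 2 - Polynomial.C (17 : ℤ_[2]))) = 2 := by
        simp; norm_num
      rw [e1, e2, norm_neg, h16, h2]
      norm_num)
  have e2 : Polynomial.aeval (1 : ℤ_[2])
      (Polynomial.derivative (Polynomial.X ^ 2 - Polynomial.C (17 : ℤ_[2]))) = 2 := by
    simp; norm_num
  rw [e2, h2] at hz1
  have hz2 : z ^ 2 = 17 := by
    simpa [sub_eq_zero] using hz
  have hle : ‖z - 1‖ ≤ (2 : ℕ) ^ (-(2 : ℕ) : ℤ) := by
    rw [PadicInt.norm_le_pow_iff_norm_lt_pow_add_one]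
    norm_num at hz1 ⊢
    exact hz1
  rw [PadicInt.norm_le_pow_iff_mem_span_pow, Ideal.mem_span_singleton] at hle
  obtain ⟨k, hk⟩ := hle
  have hk' : z = 1 + 4 * k := by
    push_cast at hk; linear_combination hk
  subst hk'
  have h8 : k = 2 * (1 - k ^ 2) := by
    have : (8 : ℤ_[2]) ≠ 0 := by norm_num
    apply mul_left_cancel₀ this
    linear_combination hz2
  refine ⟨_, -(1 - k ^ 2) ^ 2, hz2, ?_⟩
  linear_combination 4 * h8 - 8 * (k + 2 * (1 - k ^ 2)) * h8

/-- The square root of `17` in `ℤ₂` which is `9` modulo `32`. -/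
noncomputable def t0 : ℤ_[2] := exists_sqrt17.choose

theorem sq_t0 : t0 ^ 2 = 17 := by
  obtain ⟨u, h, -⟩ := exists_sqrt17.choose_spec
  exact h

theorem t0_eq : ∃ u, t0 = 9 + 32 * u := by
  obtain ⟨u, -, h⟩ := exists_sqrt17.choose_spec
  exact ⟨u, h⟩

theorem sq_ne_neg_one (r : ℚ_[2]) : r ^ 2 ≠ -1 := by
  intro h
  have h1 : ‖r‖ ≤ 1 := by
    have : ‖r‖ ^ 2 = 1 := by rw [← norm_pow, h]; simp
    nlinarith [norm_nonneg r]
  obtain ⟨x, rfl⟩ : ∃ x : ℤ_[2], (x : ℚ_[2]) = r := ⟨⟨r, h1⟩, rfl⟩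
  have h2 : x ^ 2 = -1 := PadicInt.ext (by push_cast; exact h)
  have := congrArg r8 h2
  rw [map_pow, map_neg, map_one] at this
  revert this
  generalize r8 x = y
  revert y
  decide

instance factM : Fact (∀ r : ℚ_[2], r ^ 2 ≠ -1 + 0 * r) := ⟨by
  intro r; rw [zero_mul, add_zero]; exact sq_ne_neg_one r⟩

/-- `ℚ₂(i)`. -/
abbrev MM : Type := QuadraticAlgebra ℚ_[2] (-1) 0

/-- The inclusion of `ℤ₂[i]` in `ℚ₂(i)`. -/
noncomputable def toM : OO →+* MM where
  toFun x := ⟨x.re, x.im⟩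
  map_one' := by
    ext
    · change ((1 : ℤ_[2]) : ℚ_[2]) = 1
      simp
    · change ((0 : ℤ_[2]) : ℚ_[2]) = 0
      simp
  map_zero' := by ext <;> simp
  map_mul' x y := by ext <;> simp
  map_add' x y := by ext <;> simp

theorem toM_inj {x y : OO} (h : toM x = toM y) : x = y := by
  have h1 : (x.re : ℚ_[2]) = y.re := congrArg QuadraticAlgebra.re h
  have h2 : (x.im : ℚ_[2]) = y.im := congrArg QuadraticAlgebra.im h
  ext
  · exact PadicInt.ext h1
  · exact PadicInt.ext h2

/-- The embedding of `ℤ[i]` in `ℚ₂(i)`. -/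
noncomputable def iotaZ : GaussianInt →+* MM := Zsqrtd.lift ⟨⟨0, 1⟩, by
  have h : ((-1 : ℤ) : MM) = ⟨-1, -0⟩ := by push_cast; rfl
  rw [h]
  ext <;> simp⟩

theorem iotaZ_apply (z : GaussianInt) : iotaZ z = ⟨z.re, z.im⟩ := by
  change (z.re : MM) + z.im * (⟨0, 1⟩ : MM) = _
  ext <;> simp

theorem iotaZ_inj : Function.Injective iotaZ := by
  intro x y h
  rw [iotaZ_apply, iotaZ_apply] at h
  have h1 := congrArg QuadraticAlgebra.re h
  have h2 := congrArg QuadraticAlgebra.im h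
  simp only at h1 h2
  ext
  · exact_mod_cast h1
  · exact_mod_cast h2

/-- The embedding of `ℚ(i)` in `ℚ₂(i)`. -/
noncomputable def iota : GF →+* MM := IsFractionRing.lift iotaZ_inj

theorem iota_algebraMap (z : GaussianInt) : iota (algebraMap _ GF z) = ⟨z.re, z.im⟩ := by
  rw [iota, IsFractionRing.lift_algebraMap, iotaZ_apply]

/-- The extension of `iota` to `ℚ(i, √17)` sending `√17` to `t`. -/
noncomputable def phi (t : MM) (ht : t ^ 2 = 17) : LL →+* MM where
  toFun x := iota x.re + iota x.im * t
  map_one' := by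
    change iota 1 + iota 0 * t = 1
    simp
  map_zero' := by simp
  map_mul' x y := by
    simp only [QuadraticAlgebra.re_mul, QuadraticAlgebra.im_mul, map_add, map_mul, map_ofNat, map_zero]
    linear_combination (-iota x.im * iota y.im) * ht
  map_add' x y := by simp; ring

theorem sq_toM_t0 : (toM ⟨t0, 0⟩) ^ 2 = 17 := by
  rw [← map_pow, pow_two]
  have : (⟨t0, 0⟩ * ⟨t0, 0⟩ : OO) = 17 := by
    have h17 : (17 : OO) = ⟨17, 0⟩ := rfl
    rw [h17]
    ext
    · simp only [QuadraticAlgebra.re_mul]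
      linear_combination sq_t0
    · simp
  rw [this, map_ofNat]

/-- The first place of `ℚ(i, √17)` above `2`, sending `√17` to `t0`. -/
noncomputable def phi0 : LL →+* MM := phi (toM ⟨t0, 0⟩) sq_toM_t0

/-- The second place of `ℚ(i, √17)` above `2`, sending `√17` to `-t0`. -/
noncomputable def phi1 : LL →+* MM := phi (-toM ⟨t0, 0⟩) (by rw [neg_sq, sq_toM_t0])

theorem phi0_conj (x : LL) : phi0 (conj x) = phi1 x := by
  obtain ⟨a, b⟩ := x
  rw [conj_mk]
  change iota a + iota (-b) * _ = iota a + iota b * _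
  rw [map_neg]; ring

theorem phi1_conj (x : LL) : phi1 (conj x) = phi0 x := by
  obtain ⟨a, b⟩ := x
  rw [conj_mk]
  change iota a + iota (-b) * _ = iota a + iota b * _
  rw [map_neg]; ring

theorem phi0_algebraMap (f : GF) : phi0 (algebraMap GF LL f) = iota f := by
  change iota f + iota 0 * _ = _
  simp

theorem phi0_th : phi0 th = toM ⟨t0, 0⟩ := by
  change iota 0 + iota 1 * _ = _
  simp
theorem phi1_th : phi1 th = - toM ⟨t0, 0⟩ := by
  change iota 0 + iota 1 * _ = _
  simp

/-! ### The ring `ℤ₂[i]` -/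

/-- The uniformizer `1 + i` of `ℤ₂[i]`. -/
noncomputable def lam : OO := ⟨1, 1⟩
/-- The element `i` of `ℤ₂[i]`. -/
noncomputable def io : OO := ⟨0, 1⟩

theorem io_sq : io ^ 2 = -1 := by
  rw [pow_two]
  have : (-1 : OO) = ⟨-1, -0⟩ := rfl
  rw [this]
  ext <;> simp [io]

theorem lam_eq : lam = 1 + io := by
  have : (1 : OO) = ⟨1, 0⟩ := rfl
  rw [this]
  ext <;> simp [io, lam]

theorem lam_sq : lam ^ 2 = 2 * io := by rw [lam_eq]; linear_combination io_sq

theorem OO_eq (x : OO) : x = algebraMap ℤ_[2] OO x.re + algebraMap ℤ_[2] OO x.im * io := by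
  ext <;> simp [io]

theorem OO_norm (x : OO) : QuadraticAlgebra.norm x = x.re ^ 2 + x.im ^ 2 := by
  rw [QuadraticAlgebra.norm_def]; ring

theorem MM_norm (x : MM) : QuadraticAlgebra.norm x = x.re ^ 2 + x.im ^ 2 := by
  rw [QuadraticAlgebra.norm_def]; ring

theorem norm_toM (x : OO) : QuadraticAlgebra.norm (toM x) = ((QuadraticAlgebra.norm x : ℤ_[2]) : ℚ_[2]) := by
  rw [OO_norm, MM_norm]
  push_cast
  rfl

theorem isUnit_iff_norm {x : OO} : IsUnit x ↔ IsUnit (QuadraticAlgebra.norm x) :=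
  QuadraticAlgebra.isUnit_iff_norm_isUnit

theorem not_isUnit_lam_mul (x : OO) : ¬ IsUnit (lam * x) := by
  rw [isUnit_iff_norm, map_mul]
  have : QuadraticAlgebra.norm lam = 2 := by rw [OO_norm]; simp [lam]; norm_num
  rw [this]
  exact not_isUnit_two_mul _

theorem lam_dvd_or (x : OO) : lam ∣ x ∨ (IsUnit x ∧ lam ∣ x - 1) := by
  have key : ∀ y : OO, 2 ∣ y.re + y.im → lam ∣ y := by
    rintro y ⟨k, hk⟩
    refine ⟨⟨k, k - y.re⟩, ?_⟩
    ext
    · simp [lam]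
    · simp [lam]; linear_combination hk
  rcases two_dvd_or (x.re + x.im) with h | h
  · exact Or.inl (key x h)
  · right
    rw [isUnit_iff_r8] at h
    constructor
    · rw [isUnit_iff_norm, isUnit_iff_r8, OO_norm]
      simp only [map_add, map_pow] at h ⊢
      generalize r8 x.re = p at *
      generalize r8 x.im = q at *
      revert p q
      decide
    · apply key
      rw [two_dvd_iff_r8]
      have e1 : (x - 1).re = x.re - 1 := rfl
      have e2 : (x - 1).im = x.im - 0 := rfl
      rw [e1, e2]
      simp only [map_add, map_sub, map_one, map_zero] at h ⊢
      generalize r8 x.re = p at *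
      generalize r8 x.im = q at *
      revert p q
      decide

theorem isUnit_of_not_dvd {x : OO} (h : ¬ lam ∣ x) : IsUnit x := ((lam_dvd_or x).resolve_left h).1

theorem not_dvd_of_isUnit {x : OO} (h : IsUnit x) : ¬ lam ∣ x := by
  rintro ⟨y, rfl⟩; exact not_isUnit_lam_mul y h

theorem two_eq_lam : (2 : OO) = lam * (1 - io) := by rw [lam_eq]; linear_combination io_sq

theorem isUnit_io : IsUnit io := IsUnit.of_mul_eq_one (-io) (by linear_combination -io_sq)

theorem not_two_dvd_of_isUnit {x : OO} (h : IsUnit x) : ¬ 2 ∣ x := fun h2 =>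
  not_dvd_of_isUnit h ((Dvd.intro _ two_eq_lam.symm).trans h2)

/-- Congruence to `1` modulo `4(1+i)`: the squares of units congruent to `1` mod `2`
satisfy it. -/
def One8 (x : OO) : Prop := 4 * lam ∣ x - 1

theorem One8.mul {x y : OO} (hx : One8 x) (hy : One8 y) : One8 (x * y) := by
  obtain ⟨a, ha⟩ := hx
  obtain ⟨b, hb⟩ := hy
  exact ⟨a * y + b, by linear_combination y * ha + hb⟩

theorem One8.isUnit {x : OO} (hx : One8 x) : IsUnit x := by
  apply isUnit_of_not_dvd
  rintro ⟨y, hy⟩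
  obtain ⟨a, ha⟩ := hx
  exact not_isUnit_lam_mul (y - 4 * a) (IsUnit.of_mul_eq_one 1 (by linear_combination ha - hy))

theorem One8.norm {x : OO} (hx : One8 x) : r8 (QuadraticAlgebra.norm x) = 1 := by
  obtain ⟨a, ha⟩ := hx
  have hx : x = ⟨1, 0⟩ + 4 * lam * a := by
    have : (1 : OO) = ⟨1, 0⟩ := rfl
    rw [← this]; linear_combination ha
  have h4 : (4 : OO) = ⟨4, 0⟩ := rfl
  rw [← sub_eq_zero, ← map_one r8, ← map_sub, r8_eq_zero, OO_norm, hx, h4]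
  refine ⟨a.re - a.im + 4 * (a.re ^ 2 + a.im ^ 2), ?_⟩
  simp [lam]
  ring

/-- A unit of `ℤ₂[i]` is `1` or `i` modulo `2`. -/
theorem unit_mod_two {x : OO} (hx : IsUnit x) : 2 ∣ x - 1 ∨ 2 ∣ x - io := by
  obtain ⟨y, hy⟩ := ((lam_dvd_or x).resolve_left (not_dvd_of_isUnit hx)).2
  rcases lam_dvd_or y with ⟨z, hz⟩ | ⟨-, z, hz⟩
  · left
    refine ⟨io * z, ?_⟩
    linear_combination hy + lam * hz + z * lam_sq
  · right
    refine ⟨io * z + 1, ?_⟩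
    linear_combination hy + lam * hz + z * lam_sq + lam_eq

theorem lam_dvd_sq_add {ε : OO} (hε : IsUnit ε) (y : OO) : lam ∣ y ^ 2 + ε * y := by
  rcases lam_dvd_or y with ⟨z, hz⟩ | ⟨-, z, hz⟩
  · exact ⟨z * (y + ε), by linear_combination (y + ε) * hz⟩
  · obtain ⟨e, he⟩ := ((lam_dvd_or ε).resolve_left (not_dvd_of_isUnit hε)).2
    exact ⟨(z + e + (1 - io)) * y, by
      linear_combination y * hz + y * he + y * two_eq_lam⟩

theorem sq_unit {x : OO} (hx : IsUnit x) : 4 * lam ∣ x ^ 2 - 1 ∨ 4 * lam ∣ x ^ 2 + 1 := by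
  rcases unit_mod_two hx with ⟨y, hy⟩ | ⟨y, hy⟩
  · left
    obtain ⟨k, hk⟩ := lam_dvd_sq_add isUnit_one y
    exact ⟨k, by linear_combination (x + 2 * y + 1) * hy + 4 * hk⟩
  · right
    obtain ⟨k, hk⟩ := lam_dvd_sq_add isUnit_io y
    exact ⟨k, by linear_combination (x + 2 * y + io) * hy + 4 * hk + io_sq⟩

instance : IsDomain OO := Function.Injective.isDomain toM fun _ _ => toM_inj

theorem not_four_dvd_two : ¬ (4 : OO) ∣ 2 := by
  rintro ⟨k, hk⟩
  have h2 : (2 : OO) ≠ 0 := fun h => by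
    have := congrArg QuadraticAlgebra.re h
    exact two_ne_zero_Z2 this
  have : (1 : OO) = 2 * k := by
    apply mul_left_cancel₀ h2
    linear_combination hk
  exact not_two_dvd_of_isUnit isUnit_one ⟨k, this⟩

theorem one_mod_two_of_sq {x : OO} (hx : One8 (x ^ 2)) : 2 ∣ x - 1 := by
  have hu : IsUnit x := (isUnit_pow_iff two_ne_zero).1 hx.isUnit
  refine (unit_mod_two hu).resolve_right ?_
  rintro ⟨y, hy⟩
  obtain ⟨a, ha⟩ := hx
  exact not_four_dvd_two ⟨y * io + y ^ 2 - lam * a, by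
    linear_combination (x + 2 * y + io) * hy - ha + io_sq⟩

/-- If `4(1+i)` divides `x`, then both coordinates are congruent mod `8` to the same
multiple of `4`. -/
theorem r8_of_dvd {x : OO} (h : 4 * lam ∣ x) : r8 x.re = r8 x.im ∧ 2 * r8 x.re = 0 := by
  obtain ⟨a, rfl⟩ := h
  have h4 : (4 : OO) = ⟨4, 0⟩ := rfl
  rw [h4]
  simp [lam, map_ofNat]
  generalize r8 a.re = p at *
  generalize r8 a.im = q at *
  revert p q
  decide

/-! ### Square classes in `ℚ₂(i)` -/

theorem int_of_norm_aux {x y : ℚ_[2]} (hxy : ‖y‖ ≤ ‖x‖) (h : ‖x ^ 2 + y ^ 2‖ ≤ 1) : ‖x‖ ≤ 1 := by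
  by_contra! hx
  have hx0 : x ≠ 0 := by rintro rfl; simp at hx; linarith
  have hq : ‖y / x‖ ≤ 1 := by
    rw [norm_div]; exact div_le_one_of_le₀ hxy (norm_nonneg _)
  obtain ⟨q, hq'⟩ : ∃ q : ℤ_[2], (q : ℚ_[2]) = y / x := ⟨⟨_, hq⟩, rfl⟩
  have hy : y = q * x := by rw [hq']; field_simp
  obtain ⟨w, hw⟩ : ∃ w : ℤ_[2], (w : ℚ_[2]) = x⁻¹ := ⟨⟨x⁻¹, by
    rw [norm_inv]; exact inv_le_one_of_one_le₀ hx.le⟩, rfl⟩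
  have hw2 : 2 ∣ w := by
    refine (two_dvd_or w).resolve_right fun hu => ?_
    rw [PadicInt.isUnit_iff, PadicInt.norm_def, hw, norm_inv, inv_eq_one] at hu
    linarith
  obtain ⟨s, hs⟩ : ∃ s : ℤ_[2], (s : ℚ_[2]) = x ^ 2 + y ^ 2 := ⟨⟨_, h⟩, rfl⟩
  have : 1 + q ^ 2 = s * w ^ 2 := by
    apply PadicInt.ext
    push_cast
    rw [hs, hw, hy]
    field_simp
  obtain ⟨k, rfl⟩ := hw2
  have := congrArg r8 this
  simp only [map_add, map_mul, map_pow, map_one, map_ofNat] at this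
  generalize r8 q = a at *
  generalize r8 s = b at *
  generalize r8 k = c at *
  revert a b c
  decide

/-- An element of `ℚ₂(i)` with integral norm is integral. -/
theorem int_of_norm {x : MM} (h : ‖QuadraticAlgebra.norm x‖ ≤ 1) : ∃ y : OO, toM y = x := by
  rw [MM_norm] at h
  rcases le_total ‖x.im‖ ‖x.re‖ with h1 | h1
  · have := int_of_norm_aux h1 h
    exact ⟨⟨⟨x.re, this⟩, ⟨x.im, h1.trans this⟩⟩, rfl⟩
  · have := int_of_norm_aux h1 (by rwa [add_comm])
    exact ⟨⟨⟨x.re, h1.trans this⟩, ⟨x.im, this⟩⟩, rfl⟩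

theorem int_of_sq {x : MM} {y : OO} (h : x ^ 2 = toM y) : ∃ z : OO, toM z = x ∧ z ^ 2 = y := by
  have h1 := congrArg (fun t => ‖QuadraticAlgebra.norm t‖) h
  simp only [map_pow, norm_pow, norm_toM] at h1
  obtain ⟨z, hz⟩ := int_of_norm (x := x) (by
    have := PadicInt.norm_le_one (QuadraticAlgebra.norm y)
    rw [PadicInt.norm_def, ← h1] at this
    nlinarith [norm_nonneg (QuadraticAlgebra.norm x)])
  refine ⟨z, hz, toM_inj ?_⟩
  rw [map_pow, hz, h]

theorem r8_of_isSquare {u : ℤ_[2]} (hu : IsUnit u) (h : IsSquare (u : ℚ_[2])) : r8 u = 1 := by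
  obtain ⟨y, hy⟩ := h
  have h1 : ‖y‖ ≤ 1 := by
    have := congrArg norm hy
    rw [norm_mul] at this
    have h2 := PadicInt.norm_le_one u
    rw [PadicInt.norm_def, this] at h2
    nlinarith [norm_nonneg y]
  obtain ⟨x, rfl⟩ : ∃ x : ℤ_[2], (x : ℚ_[2]) = y := ⟨⟨y, h1⟩, rfl⟩
  have h2 : u = x * x := PadicInt.ext (by push_cast; exact hy)
  subst h2
  have := hu.map r8
  rw [map_mul] at *
  revert this
  generalize r8 x = y
  revert y
  decide

theorem even_of_sq_eq {n : ℕ} {x : ℚ_[2]} {u : ℤ_[2]} (hu : IsUnit u) (hx : x ≠ 0)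
    (h : 2 ^ n * (u : ℚ_[2]) = x ^ 2) : Even n := by
  have h1 := congrArg norm h
  rw [norm_mul, norm_pow, norm_pow, ← PadicInt.norm_def, PadicInt.isUnit_iff.1 hu] at h1
  have h2 : ‖(2 : ℚ_[2])‖ = 2⁻¹ := by
    have := Padic.norm_p (p := 2); simpa using this
  rw [h2, Padic.norm_eq_zpow_neg_valuation hx] at h1
  have h3 : ((2 : ℝ) ^ (-(n : ℤ))) = 2 ^ (-x.valuation * 2) := by
    rw [zpow_mul, zpow_neg, zpow_natCast, ← inv_pow]
    simpa using h1
  have := zpow_right_injective₀ (by norm_num : (0:ℝ) < 2) (by norm_num) h3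
  have : Even (n : ℤ) := ⟨x.valuation, by omega⟩
  exact_mod_cast this

theorem iota_kap (a c b e : ℕ) : iota (algebraMap _ GF (kap a c b e)) =
    toM (io ^ a * lam ^ c * (4 + io) ^ b * (4 - io) ^ e) := by
  have h4 : (4 : OO) = ⟨4, 0⟩ := rfl
  simp only [kap, map_mul, map_pow]
  have e1 : (⟨((0 : ℤ) : ℚ_[2]), ((1 : ℤ) : ℚ_[2])⟩ : MM) = toM io := by ext <;> simp [toM, io]
  have e2 : (⟨((1 : ℤ) : ℚ_[2]), ((1 : ℤ) : ℚ_[2])⟩ : MM) = toM lam := by ext <;> simp [toM, lam]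
  simp only [iota_algebraMap, e1, e2]
  congr
  · change _ = ((4 + 0 :ℤ_[2]) : ℚ_[2]); simp; rfl
  · change _ = ((0 + 1:ℤ_[2]) : ℚ_[2]); simp
  · change _ = ((4 - 0 :ℤ_[2]) : ℚ_[2]); simp; rfl
  · change _ = ((0 - 1:ℤ_[2]) : ℚ_[2]); simp

theorem norm_io : QuadraticAlgebra.norm io = 1 := by rw [OO_norm]; simp [io]
theorem norm_lam : QuadraticAlgebra.norm lam = 2 := by rw [OO_norm]; simp [lam]; norm_num
theorem norm_four_add : QuadraticAlgebra.norm (4 + io) = 17 := by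
  have h4 : (4 : OO) = ⟨4, 0⟩ := rfl
  rw [OO_norm, h4]; simp [io]; norm_num
theorem norm_four_sub : QuadraticAlgebra.norm (4 - io) = 17 := by
  have h4 : (4 : OO) = ⟨4, 0⟩ := rfl
  rw [OO_norm, h4]; simp [io]; norm_num

theorem isUnit_seventeen : IsUnit (17 : ℤ_[2]) := by
  rw [isUnit_iff_r8, map_ofNat]; decide

theorem toM_ne_zero {x : OO} (h : x ≠ 0) : toM x ≠ 0 := fun h' => h (toM_inj (by rw [h', map_zero]))

theorem norm_MM_ne_zero {z : MM} (hz : z ≠ 0) : QuadraticAlgebra.norm z ≠ 0 :=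
  fun h => hz (QuadraticAlgebra.norm_eq_zero_iff_eq_zero.1 h)

/-- Computation in the finite ring `ℤ₂[i]/4(1+i)`: squares of units are `±1` there, `4 ± i = ±5i`, and
none of `i`, `5`, `5i` is `±1`. -/
theorem loc_aux (a b e k : ℕ) {T y : OO} (hT : One8 T) (hy : IsUnit y)
    (h : io ^ a * (4 + io) ^ b * (4 - io) ^ e = io ^ k * T * y ^ 2) :
    Even (b + e) ∧ Even (a + k) := by
  set J : Ideal OO := Ideal.span {4 * lam}
  set q := Ideal.Quotient.mk J
  have hq : ∀ x, 4 * lam ∣ x → q x = 0 := fun x hx =>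
    Ideal.Quotient.eq_zero_iff_mem.2 (Ideal.mem_span_singleton.2 hx)
  have hq' : ∀ x, q x = 0 → 4 * lam ∣ x := fun x hx =>
    Ideal.mem_span_singleton.1 (Ideal.Quotient.eq_zero_iff_mem.1 hx)
  have hT1 : q T = 1 := by
    have := hq _ hT
    rwa [map_sub, map_one, sub_eq_zero] at this
  have h4l : 4 * q lam = 0 := by
    have := hq _ (dvd_refl _)
    rwa [map_mul, map_ofNat] at this
  rw [lam_eq, map_add, map_one] at h4l
  set I := q io with hI
  have hI2 : I ^ 2 = -1 := by rw [hI, ← map_pow, io_sq, map_neg, map_one]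
  have h8 : (8 : OO ⧸ J) = 0 := by linear_combination (1 - I) * h4l + 4 * hI2
  have hY : q y ^ 2 = 1 ∨ q y ^ 2 = -1 := by
    rcases sq_unit hy with h | h <;> have := hq _ h
    · left; rw [map_sub, map_pow, map_one] at this; linear_combination this
    · right; rw [map_add, map_pow, map_one] at this; linear_combination this
  have h' := congrArg q h
  simp only [map_mul, map_pow, map_add, map_sub, map_ofNat, hT1, mul_one] at h'
  rw [← hI] at h'
  have e1 : 4 + I = 5 * I := by linear_combination h4l - I * h8
  have e2 : 4 - I = -(5 * I) := by linear_combination h4l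
  have h25 : (5 : OO ⧸ J) ^ 2 = 1 := by linear_combination 3 * h8
  have pm : ∀ (x : OO ⧸ J) (_ : x = 1 ∨ x = -1) (n : ℕ), x ^ n = 1 ∨ x ^ n = -1 := by
    rintro x (rfl | rfl) n
    · simp
    · exact neg_one_pow_eq_or _ n
  have pmm : ∀ x y : OO ⧸ J, (x = 1 ∨ x = -1) → (y = 1 ∨ y = -1) → (x * y = 1 ∨ x * y = -1) := by
    rintro x y (rfl | rfl) (rfl | rfl) <;> simp
  have hs : I ^ (a + k + (b + e)) * 5 ^ (b + e) = 1 ∨ I ^ (a + k + (b + e)) * 5 ^ (b + e) = -1 := by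
    have : I ^ (a + k + (b + e)) * 5 ^ (b + e) = (I ^ 2) ^ k * q y ^ 2 * (-1) ^ e := by
      have h1 : ((-1 : OO ⧸ J) ^ e) * (-1) ^ e = 1 := by rw [← mul_pow]; simp
      rw [e1, e2, neg_pow] at h'
      linear_combination (I ^ k * (-1) ^ e) * h' - I ^ (a + k + (b + e)) * 5 ^ (b + e) * h1
    rw [this]
    exact pmm _ _ (pmm _ _ (pm _ (Or.inr hI2) _) hY) (pm _ (Or.inr rfl) _)
  have key : ∀ x : OO, (q x = 1 ∨ q x = -1) →
      (r8 (x - 1).re = r8 (x - 1).im ∧ 2 * r8 (x - 1).re = 0) ∨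
      (r8 (x + 1).re = r8 (x + 1).im ∧ 2 * r8 (x + 1).re = 0) := by
    rintro x (hx | hx)
    · left; exact r8_of_dvd (hq' _ (by rw [map_sub, hx, map_one, sub_self]))
    · right; exact r8_of_dvd (hq' _ (by rw [map_add, hx, map_one, neg_add_cancel]))
  have c1 : ¬ (I = 1 ∨ I = -1) := by
    intro hI
    have := key io hI
    change (r8 (0 - 1) = r8 (1 - 0) ∧ 2 * r8 (0 - 1) = 0) ∨
      (r8 (0 + 1) = r8 (1 + 0) ∧ 2 * r8 (0 + 1) = 0) at this
    simp only [map_add, map_sub, map_one, map_zero] at this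
    revert this; decide
  have c2 : ¬ ((5 : OO ⧸ J) = 1 ∨ (5 : OO ⧸ J) = -1) := by
    intro hI
    have := key 5 (by simpa only [map_ofNat] using hI)
    change (r8 (5 - 1) = r8 (0 - 0) ∧ 2 * r8 (5 - 1) = 0) ∨
      (r8 (5 + 1) = r8 (0 + 0) ∧ 2 * r8 (5 + 1) = 0) at this
    simp only [map_add, map_sub, map_one, map_zero, map_ofNat] at this
    revert this; decide
  have c3 : ¬ (5 * I = 1 ∨ 5 * I = -1) := by
    intro hI
    have := key (5 * io) (by simpa only [map_mul, map_ofNat] using hI)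
    have e : (5 * io : OO) = ⟨0, 5⟩ := by
      have : (5 : OO) = ⟨5, 0⟩ := rfl
      rw [this]; ext <;> simp [io]
    rw [e] at this
    change (r8 (0 - 1) = r8 (5 - 0) ∧ 2 * r8 (0 - 1) = 0) ∨
      (r8 (0 + 1) = r8 (5 + 0) ∧ 2 * r8 (0 + 1) = 0) at this
    simp only [map_add, map_sub, map_one, map_zero, map_ofNat] at this
    revert this; decide
  have odd5 : Odd (b + e) → (5 : OO ⧸ J) ^ (b + e) = 5 := by
    rintro ⟨n, hn⟩
    rw [hn, pow_succ, pow_mul, h25, one_pow, one_mul]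
  have even5 : Even (b + e) → (5 : OO ⧸ J) ^ (b + e) = 1 := by
    rintro ⟨n, hn⟩
    rw [hn, ← two_mul, pow_mul, h25, one_pow]
  have evenI : ∀ m, Even m → I ^ m = 1 ∨ I ^ m = -1 := by
    rintro m ⟨n, rfl⟩
    rw [← two_mul, pow_mul]; exact pm _ (Or.inr hI2) _
  -- an element that equals `±1` up to a sign is `±1`
  have absorb : ∀ x y : OO ⧸ J, (x = 1 ∨ x = -1) → (x * y = 1 ∨ x * y = -1) → (y = 1 ∨ y = -1) := by
    rintro x y (rfl | rfl) h
    · simpa using h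
    · rcases h with h | h
      · right; linear_combination -h
      · left; linear_combination -h
  rcases Nat.even_or_odd (b + e) with hn | hn
  · refine ⟨hn, ?_⟩
    by_contra ho
    rw [Nat.not_even_iff_odd] at ho
    rw [even5 hn, mul_one] at hs
    obtain ⟨m, hm⟩ : Odd (a + k + (b + e)) := ho.add_even hn
    rw [hm, pow_succ] at hs
    exact c1 (absorb _ _ (evenI _ (even_two_mul m)) hs)
  · exfalso
    rw [odd5 hn] at hs
    rcases Nat.even_or_odd (a + k) with ho | ho
    · obtain ⟨m, hm⟩ : Odd (a + k + (b + e)) := ho.add_odd hn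
      rw [hm, pow_succ, mul_assoc, mul_comm I] at hs
      exact c3 (absorb _ _ (evenI _ (even_two_mul m)) hs)
    · exact c2 (absorb _ _ (evenI _ (ho.add_odd hn)) hs)

/-- Local analysis of the classes `i^a (1+i)^c (4+i)^b (4-i)^e` in `ℚ₂(i)*` modulo squares. -/
theorem loc {a c b e k : ℕ} {T : OO} {z : MM} (hT : One8 T) (hz : z ≠ 0)
    (h : iota (algebraMap _ GF (kap a c b e)) = toM (io ^ k * T) * z ^ 2) :
    Even c ∧ Even (b + e) ∧ Even (a + k) := by
  rw [iota_kap] at h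
  have hTu := isUnit_iff_norm.1 hT.isUnit
  have hN := congrArg QuadraticAlgebra.norm h
  simp only [map_mul, map_pow, norm_toM, norm_io, norm_lam, norm_four_add, norm_four_sub] at hN
  obtain ⟨t, ht⟩ := hTu.exists_right_inv
  have ht' : ((QuadraticAlgebra.norm T : ℤ_[2]) : ℚ_[2]) * t = 1 := by
    rw [← PadicInt.coe_mul, ht, PadicInt.coe_one]
  have hc : Even c := by
    refine even_of_sq_eq (u := 17 ^ (b + e) * t) ?_ (norm_MM_ne_zero hz) ?_
    · exact (isUnit_seventeen.pow _).mul (IsUnit.of_mul_eq_one _ ((mul_comm _ _).trans ht))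
    · have c2 : ((2 : ℤ_[2]) : ℚ_[2]) = 2 := rfl
      have c17 : ((17 : ℤ_[2]) : ℚ_[2]) = 17 := rfl
      push_cast at hN ⊢
      simp only [c2, c17] at hN ⊢
      linear_combination t * hN + QuadraticAlgebra.norm z ^ 2 * ht'
  refine ⟨hc, ?_⟩
  obtain ⟨d, rfl⟩ := hc
  have hlam : toM lam ≠ 0 := toM_ne_zero fun h => by
    have := norm_lam; rw [h, QuadraticAlgebra.norm_zero] at this; exact two_ne_zero_Z2 this.symm
  have h2 : toM (io ^ a * (4 + io) ^ b * (4 - io) ^ e) = toM (io ^ k * T) * (z / toM lam ^ d) ^ 2 := by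
    have hd : toM lam ^ d ≠ 0 := pow_ne_zero _ hlam
    rw [div_pow, ← mul_div_assoc, eq_div_iff (pow_ne_zero _ hd), ← h]
    simp only [map_mul, map_pow]
    ring
  set z' := z / toM lam ^ d
  obtain ⟨T', hT'⟩ := hT.isUnit.exists_right_inv
  obtain ⟨j, hj⟩ := (isUnit_io.pow k).exists_right_inv
  obtain ⟨y, hy, hy2⟩ := int_of_sq (x := z') (y := io ^ a * (4 + io) ^ b * (4 - io) ^ e * T' * j) (by
    rw [map_mul, map_mul, h2, map_mul]
    have e1 := congrArg toM hT'
    have e2 := congrArg toM hj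
    rw [map_mul, map_one] at e1 e2
    linear_combination -z' ^ 2 * e1 * (toM (io ^ k) * toM j) - z' ^ 2 * e2)
  have h3 : io ^ a * (4 + io) ^ b * (4 - io) ^ e = io ^ k * T * y ^ 2 := by
    apply toM_inj; rw [h2, ← hy, ← map_pow, ← map_mul]
  refine loc_aux a b e k hT ?_ h3
  have hu : IsUnit (io ^ a * (4 + io) ^ b * (4 - io) ^ e) := by
    refine ((isUnit_io.pow _).mul (IsUnit.pow _ ?_)).mul (IsUnit.pow _ ?_) <;>
      rw [isUnit_iff_norm]
    · rw [norm_four_add]; exact isUnit_seventeen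
    · rw [norm_four_sub]; exact isUnit_seventeen
  rw [h3] at hu
  exact (isUnit_pow_iff two_ne_zero).1 (isUnit_of_mul_isUnit_right hu)

/-! ### A local-global principle for squares -/

/-- `w` is nonzero and has even valuation at all places of `ℚ(i, √17)` away from `2` and `4 - i`. -/
def Good (w : LL) : Prop := w ≠ 0 ∧ ∀ v : Valuation LL ℤᵐ⁰, v 2 = 1 →
  v (algebraMap GaussianInt LL ⟨4, -1⟩) = 1 → IsSquare (v w)

/-- The element `i` of `ℚ(i, √17)`. -/
noncomputable def iL : LL := algebraMap GaussianInt LL ⟨0, 1⟩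

theorem algebraMap_GL (x : GaussianInt) :
    algebraMap GaussianInt LL x = algebraMap GF LL (algebraMap GaussianInt GF x) := rfl

theorem iL_sq : iL ^ 2 = -1 := by
  rw [iL, ← map_pow]
  have : (⟨0, 1⟩ : GaussianInt) ^ 2 = -1 := by rfl
  rw [this, map_neg, map_one]

theorem th_sq : th ^ 2 = 17 := by
  have h17 : (17 : LL) = ⟨17, 0⟩ := rfl
  rw [pow_two, h17]
  ext <;> simp [th]

theorem conj_conj' (w : LL) : conj (conj w) = w := by
  obtain ⟨a, b⟩ := w
  rw [conj_mk, conj_mk, neg_neg]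

theorem conj_algebraMap (f : GF) : conj (algebraMap GF LL f) = algebraMap GF LL f := by
  change conj ⟨f, 0⟩ = ⟨f, 0⟩
  rw [conj_mk, neg_zero]

theorem conj_algebraMap' (f : GaussianInt) :
    conj (algebraMap GaussianInt LL f) = algebraMap GaussianInt LL f := conj_algebraMap (algebraMap _ GF f)

theorem conj_th : conj th = -th := by
  rw [th, conj_mk]; ext <;> simp

theorem mul_conj (w : LL) : w * conj w = algebraMap GF LL (w.re ^ 2 - 17 * w.im ^ 2) := by
  obtain ⟨a, b⟩ := w
  rw [conj_mk]
  change _ = (⟨_, 0⟩ : LL)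
  ext <;> simp <;> ring

theorem add_conj (w : LL) : w + conj w = algebraMap GF LL (2 * w.re) := by
  obtain ⟨a, b⟩ := w
  rw [conj_mk]
  change _ = (⟨_, 0⟩ : LL)
  ext <;> simp ; ring

theorem phi1_algebraMap (f : GF) : phi1 (algebraMap GF LL f) = iota f := by
  rw [← phi0_conj, conj_algebraMap, phi0_algebraMap]

theorem phi0_iL : phi0 iL = toM io := by
  rw [iL, algebraMap_GL, phi0_algebraMap, iota_algebraMap]
  ext <;> simp [toM, io]

theorem phi1_iL : phi1 iL = toM io := by
  rw [iL, algebraMap_GL, phi1_algebraMap, iota_algebraMap]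
  ext <;> simp [toM, io]

theorem isSquare_val_conj {w : LL} (v : Valuation LL ℤᵐ⁰)
    (h : ∀ v : Valuation LL ℤᵐ⁰, v 2 = 1 → v 17 = 1 → v (algebraMap GaussianInt LL ⟨4, -1⟩) = 1 →
      IsSquare (v w)) (h2 : v 2 = 1) (h17 : v 17 = 1)
    (h4 : v (algebraMap GaussianInt LL ⟨4, -1⟩) = 1) : IsSquare (v (conj w)) := by
  have := h (v.comap conj) (by rw [Valuation.comap_apply, map_ofNat, h2])
    (by rw [Valuation.comap_apply, map_ofNat, h17])
    (by rw [Valuation.comap_apply, conj_algebraMap', h4])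
  rwa [Valuation.comap_apply] at this

/-- The norm to `ℚ(i)` of an element with even valuations prime to `34`, up to squares. -/
theorem norm_kap {w : LL} (hw : w ≠ 0)
    (h : ∀ v : Valuation LL ℤᵐ⁰, v 2 = 1 → v 17 = 1 → v (algebraMap GaussianInt LL ⟨4, -1⟩) = 1 →
      IsSquare (v w)) : ∃ a c b e : ℕ, ∃ y : GF, y ≠ 0 ∧ Even c ∧
      w * conj w = algebraMap GF LL (algebraMap _ GF (kap a c b e) * y ^ 2) := by
  have hw' : conj w ≠ 0 := (map_ne_zero conj).2 hw
  have hf : w.re ^ 2 - 17 * w.im ^ 2 ≠ 0 := fun h0 => by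
    have := mul_conj w
    rw [h0, map_zero] at this
    exact mul_ne_zero hw hw' this
  obtain ⟨a, c, b, e, y, hy, hk⟩ := kap_of_even_GF hf (fun v h2 h17 h4 => by
    rw [← mul_conj, map_mul]
    exact (h v h2 h17 h4).mul (isSquare_val_conj v h h2 h17 h4))
  exact ⟨a, c, b, e, y, hy, even_of_norm hy hk, by rw [mul_conj, hk]⟩

/-- Product formula: the norms of the two `2`-adic images of a `Good` element have square
product. -/
theorem Good.isSquare_norm {w : LL} (hw : Good w) :
    IsSquare (QuadraticAlgebra.norm (phi0 w) * QuadraticAlgebra.norm (phi1 w)) := by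
  obtain ⟨a, c, b, e, y, hy, hc, hk⟩ := norm_kap hw.1 fun v h2 _ h4 => hw.2 v h2 h4
  rw [← map_mul, ← phi0_conj, ← map_mul, hk, phi0_algebraMap, map_mul, iota_kap, map_mul, map_pow, map_pow,
    norm_toM]
  simp only [map_mul, map_pow, norm_io, norm_lam, norm_four_add, norm_four_sub, ← sq_t0]
  obtain ⟨d, rfl⟩ := hc
  refine ⟨((2 ^ d * t0 ^ (b + e) : ℤ_[2]) : ℚ_[2]) * QuadraticAlgebra.norm (iota y), ?_⟩
  push_cast
  ring

theorem One8.t0 : One8 (⟨t0, 0⟩ : OO) := by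
  obtain ⟨u, hu⟩ := t0_eq
  have h1 : (1 : OO) = ⟨1, 0⟩ := rfl
  have h4 : (4 : OO) = ⟨4, 0⟩ := rfl
  refine ⟨⟨1 + 4 * u, -(1 + 4 * u)⟩, ?_⟩
  rw [h1, h4, hu]
  ext <;> simp [lam] <;> ring

theorem pi_mul_pi : algebraMap GaussianInt LL ⟨4, 1⟩ * algebraMap GaussianInt LL ⟨4, -1⟩ = th ^ 2 := by
  rw [← map_mul, th_sq]
  have : (⟨4, 1⟩ * ⟨4, -1⟩ : GaussianInt) = 17 := by rfl
  rw [this, map_ofNat]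

/-- Since `(4 + i)(4 - i) = 17` is a square in `ℚ(i, √17)`, the parities of `c`, `b + e` and `a + k`
determine the class of `kap a c b e` there. -/
theorem kap_square {a c b e k : ℕ} (hc : Even c) (hb : Even (b + e)) (ha : Even (a + k)) :
    ∃ h : LL, h ≠ 0 ∧ algebraMap GaussianInt LL (kap a c b e) = iL ^ k * h ^ 2 := by
  have h1 : ∃ h : LL, algebraMap GaussianInt LL (kap a c b e) = iL ^ k * h ^ 2 := by
    simp only [kap, map_mul, map_pow]
    change ∃ h, iL ^ a * _ * _ * _ = _
    have hp := pi_mul_pi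
    generalize algebraMap GaussianInt LL ⟨4, 1⟩ = P at *
    generalize algebraMap GaussianInt LL ⟨4, -1⟩ = P' at *
    generalize algebraMap GaussianInt LL ⟨1, 1⟩ = l at *
    obtain ⟨s, hs⟩ : ∃ s, iL ^ a = iL ^ k * s ^ 2 := by
      obtain ⟨m, hm⟩ : Even (a + 3 * k) := by
        have : a + 3 * k = (a + k) + 2 * k := by ring
        rw [this]; exact ha.add (even_two_mul k)
      refine ⟨iL ^ m, ?_⟩
      rw [← pow_mul, mul_two, ← hm]
      have h4 : iL ^ 4 = 1 := by
        have := iL_sq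
        linear_combination (iL ^ 2 - 1) * this
      have h5 : (iL ^ 4) ^ k = 1 := by rw [h4, one_pow]
      linear_combination (-iL ^ a) * h5
    obtain ⟨d, rfl⟩ := hc
    obtain ⟨r, hr⟩ : ∃ r, P ^ b * P' ^ e = r ^ 2 := by
      rcases le_total b e with h | h
      · obtain ⟨j, rfl⟩ := Nat.exists_eq_add_of_le h
        have : Even j := by
          have : b + (b + j) = 2 * b + j := by ring
          rw [this] at hb
          exact (Nat.even_add.1 hb).1 (even_two_mul b)
        obtain ⟨i, rfl⟩ := this
        refine ⟨th ^ b * P' ^ i, ?_⟩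
        have h5 : (P * P') ^ b = (th ^ 2) ^ b := by rw [hp]
        rw [mul_pow] at h5
        linear_combination P' ^ (2 * i) * h5
      · obtain ⟨j, rfl⟩ := Nat.exists_eq_add_of_le h
        have : Even j := by
          have : e + j + e = 2 * e + j := by ring
          rw [this] at hb
          exact (Nat.even_add.1 hb).1 (even_two_mul e)
        obtain ⟨i, rfl⟩ := this
        refine ⟨th ^ e * P ^ i, ?_⟩
        have h5 : (P * P') ^ e = (th ^ 2) ^ e := by rw [hp]
        rw [mul_pow] at h5
        linear_combination P ^ (2 * i) * h5
    exact ⟨s * l ^ d * r, by rw [mul_assoc _ (P ^ b), hr, hs]; ring⟩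
  obtain ⟨h, hh⟩ := h1
  refine ⟨h, ?_, hh⟩
  rintro rfl
  have h0 : kap a c b e = 0 := by
    rw [zero_pow two_ne_zero, mul_zero, algebraMap_GL] at hh
    have : algebraMap GaussianInt GF (kap a c b e) = 0 := (map_eq_zero (algebraMap GF LL)).1 hh
    exact algebraMap_GF_inj (by rw [this, map_zero])
  simp only [kap, mul_eq_zero] at h0
  rcases h0 with ((h0 | h0) | h0) | h0 <;> replace h0 := eq_zero_of_pow_eq_zero h0 <;>
    exact absurd h0 (by decide)

theorem iL_ne_zero : iL ≠ 0 := fun h => by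
  have := iL_sq; rw [h] at this; norm_num at this

theorem phi0_ne_zero {w : LL} (h : w ≠ 0) : phi0 w ≠ 0 := (map_ne_zero phi0).2 h

/-- If `w` has even valuations, its norm is a square `n²` in `ℚ(i)` and it is close to `i^k` at one
place above `2`, then `w` is `i^k` times a square: `g = Tr w + 2n` satisfies `w g = (w + n)²` and lies
in `ℚ(i)`, where its class modulo squares is determined locally. -/
theorem sqrt_step {w : LL} {k : ℕ} {T : OO} (hw : w ≠ 0) {n : GF}
    (h : ∀ v : Valuation LL ℤᵐ⁰, v 2 = 1 → v 17 = 1 → v (algebraMap GaussianInt LL ⟨4, -1⟩) = 1 →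
      IsSquare (v w)) (hn : w * conj w = algebraMap GF LL (n ^ 2)) (hT : One8 T)
    (hphi : phi0 w = toM (io ^ k * T)) : ∃ y : LL, w = iL ^ k * y ^ 2 := by
  have hn0 : n ≠ 0 := by
    rintro rfl
    rw [zero_pow two_ne_zero, map_zero] at hn
    exact mul_ne_zero hw ((map_ne_zero conj).2 hw) hn
  obtain ⟨n', hn', hg⟩ : ∃ n' : GF, n' ^ 2 = n ^ 2 ∧ 2 * w.re + 2 * n' ≠ 0 := by
    by_cases h0 : 2 * w.re + 2 * n = 0
    · refine ⟨-n, by ring, fun h1 => hn0 ?_⟩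
      have h4 : (4 : GF) * n = 0 := by linear_combination h0 - h1
      simpa using h4
    · exact ⟨n, rfl, h0⟩
  rw [← hn'] at hn
  set N := algebraMap GF LL n' with hN
  set g : GF := 2 * w.re + 2 * n' with hgdef
  set G := algebraMap GF LL g with hG
  have hGe : G = w + conj w + 2 * N := by
    rw [hG, hgdef, map_add, add_conj, map_mul _ 2 n', map_ofNat]
  have hG0 : G ≠ 0 := (map_ne_zero (algebraMap GF LL)).2 hg
  have hwg : w * G = (w + N) ^ 2 := by
    rw [map_pow, ← hN] at hn
    rw [hGe]; linear_combination hn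
  have hwN : w + N ≠ 0 := fun h0 => by
    rw [h0, zero_pow two_ne_zero] at hwg
    exact mul_ne_zero hw hG0 hwg
  obtain ⟨a, c, b, e, y, hy, hk⟩ := kap_of_even_GF hg (fun v h2 h17 h4 => by
    obtain ⟨s, hs⟩ := h v h2 h17 h4
    have hs0 : s ≠ 0 := by
      rintro rfl
      rw [mul_zero] at hs
      exact hw ((map_eq_zero v).1 hs)
    have h1 := congrArg v hwg
    rw [map_mul, map_pow, hs] at h1
    refine ⟨v (w + N) / s, ?_⟩
    rw [div_mul_div_comm, eq_div_iff (mul_ne_zero hs0 hs0), mul_comm, ← pow_two (v _)]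
    exact h1)
  have hy0 : iota y ≠ 0 := (map_ne_zero iota).2 hy
  have hphi0 : toM (io ^ k * T) ≠ 0 := hphi ▸ phi0_ne_zero hw
  obtain ⟨hc, hb, ha⟩ := loc (a := a) (c := c) (b := b) (e := e) (k := k) (T := T)
    (z := phi0 (w + N) / (toM (io ^ k * T) * iota y)) hT
    (div_ne_zero (phi0_ne_zero hwN) (mul_ne_zero hphi0 hy0)) (by
      have h1 := congrArg phi0 hwg
      rw [map_mul, map_pow, hphi, hG, phi0_algebraMap, hk, map_mul iota, map_pow iota] at h1
      rw [div_pow, ← h1]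
      field_simp)
  obtain ⟨r, hr0, hr⟩ := kap_square hc hb ha
  have hGr : G = iL ^ k * (r * algebraMap GF LL y) ^ 2 := by
    rw [hG, hk, map_mul, ← algebraMap_GL, hr, map_pow]; ring
  have hY : algebraMap GF LL y ≠ 0 := (map_ne_zero (algebraMap GF LL)).2 hy
  have hi := pow_ne_zero k iL_ne_zero
  refine ⟨(w + N) / (r * algebraMap GF LL y * iL ^ k), ?_⟩
  rw [div_pow, ← hwg, hGr]
  field_simp

/-- The local-global principle for squares: a `Good` element which is `1` modulo `4(1+i)` at both
places above `2` is a square. -/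
theorem Good.isSquare {w : LL} (hw : Good w) {T₀ T₁ : OO} (h0 : phi0 w = toM T₀)
    (h1 : phi1 w = toM T₁) (hT₀ : One8 T₀) (hT₁ : One8 T₁) : ∃ y, w = y ^ 2 := by
  have hw17 : ∀ v : Valuation LL ℤᵐ⁰, v 2 = 1 → v 17 = 1 →
      v (algebraMap GaussianInt LL ⟨4, -1⟩) = 1 → IsSquare (v w) := fun v h2 _ h4 => hw.2 v h2 h4
  obtain ⟨a, c, b, e, y, hy, hc, hk⟩ := norm_kap hw.1 hw17
  have hy0 : iota y ≠ 0 := (map_ne_zero iota).2 hy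
  obtain ⟨-, hb, ha⟩ := loc (a := a) (c := c) (b := b) (e := e) (k := 0) (T := T₀ * T₁) (z := (iota y)⁻¹)
    (hT₀.mul hT₁) (inv_ne_zero hy0) (by
      have h2 := congrArg phi0 hk
      rw [map_mul, phi0_conj, h0, h1, phi0_algebraMap, map_mul, map_pow] at h2
      rw [pow_zero, one_mul, map_mul, h2]
      field_simp)
  obtain ⟨c', rfl⟩ := hc
  obtain ⟨a', ha'⟩ : Even a := ha
  subst ha'
  rcases Nat.even_or_odd b with hbe | hbo
  · obtain ⟨e', rfl⟩ : Even e := (Nat.even_add.1 hb).1 hbe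
    obtain ⟨b', rfl⟩ := hbe
    obtain ⟨s, hs⟩ := sqrt_step (k := 0) (T := T₀) (n := algebraMap _ GF (kap a' c' b' e') * y) hw.1 hw17 (by
      rw [hk]; congr 1
      simp only [kap, map_mul, map_pow]; ring) hT₀ (by rw [h0, pow_zero, one_mul])
    exact ⟨s, by rw [hs, pow_zero, one_mul]⟩
  · -- Here `i √17 w` has square norm, hence `√17 w` is a square, contradicting the parity of the
    -- valuation at the prime above `4 + i`.
    exfalso
    obtain ⟨e', rfl⟩ : Odd e := by
      rw [← Nat.not_even_iff_odd] at hbo ⊢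
      rwa [← Nat.even_add.1 hb]
    obtain ⟨b', rfl⟩ := hbo
    have hpp : algebraMap GaussianInt GF ⟨4, 1⟩ * algebraMap GaussianInt GF ⟨4, -1⟩ = 17 := by
      rw [← map_mul]
      have : (⟨4, 1⟩ * ⟨4, -1⟩ : GaussianInt) = 17 := by rfl
      rw [this, map_ofNat]
    have hth0 : th ≠ 0 := fun h => by
      have := th_sq; rw [h] at this; norm_num at this
    have hci : conj iL = iL := conj_algebraMap' _
    obtain ⟨s, hs⟩ := sqrt_step (w := iL * th * w) (k := 1) (T := ⟨t0, 0⟩ * T₀)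
      (n := 17 * (algebraMap _ GF (kap a' c' b' e') * y))
      (mul_ne_zero (mul_ne_zero iL_ne_zero hth0) hw.1) (fun v h2 h17 h4 => by
        have e1 : v iL = 1 := by
          have := congrArg v iL_sq
          rw [map_pow, Valuation.map_neg, map_one] at this
          exact (pow_eq_one_iff.1 this).resolve_right two_ne_zero
        have e2 : v th = 1 := by
          have := congrArg v th_sq
          rw [map_pow, h17] at this
          exact (pow_eq_one_iff.1 this).resolve_right two_ne_zero
        rw [map_mul, map_mul, e1, e2, one_mul, one_mul]
        exact hw17 v h2 h17 h4) (by
        have e1 : iL * th * w * conj (iL * th * w) = 17 * (w * conj w) := by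
          rw [map_mul, map_mul, hci, conj_th]
          linear_combination (-th ^ 2 * w * conj w) * iL_sq + (w * conj w) * th_sq
        have e2 : (17 : LL) = algebraMap GF LL 17 := (map_ofNat _ 17).symm
        rw [e1, hk, e2, ← map_mul]
        congr 1
        simp only [kap, map_mul, map_pow]
        linear_combination 17 * y ^ 2 * (algebraMap GaussianInt GF ⟨0, 1⟩ ^ (2 * a') *
          algebraMap GaussianInt GF ⟨1, 1⟩ ^ (2 * c') * algebraMap GaussianInt GF ⟨4, 1⟩ ^ (2 * b') *
          algebraMap GaussianInt GF ⟨4, -1⟩ ^ (2 * e')) * hpp) (One8.t0.mul hT₀) (by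
        rw [map_mul, map_mul, phi0_iL, phi0_th, h0, pow_one, ← map_mul, ← map_mul, mul_assoc])
    have hs' : th * w = s ^ 2 := by
      apply mul_left_cancel₀ iL_ne_zero
      linear_combination hs
    obtain ⟨v, hv, hv2, hv4⟩ := exists_val_th
    obtain ⟨r, hr⟩ := hw.2 v hv2 hv4
    have hr0 : r ≠ 0 := by
      rintro rfl
      rw [mul_zero] at hr
      exact hw.1 ((map_eq_zero v).1 hr)
    have h3 := congrArg v hs'
    rw [map_mul, map_pow, hv, hr] at h3
    have h4 : exp (-1 : ℤ) = (v s / r) ^ 2 := by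
      rw [div_pow, ← h3]; field_simp
    have h5 : v s / r ≠ 0 := by
      intro h0; rw [h0, zero_pow two_ne_zero] at h4
      exact exp_ne_zero h4
    rw [← exp_log h5, ← exp_nsmul] at h4
    have := exp_injective h4
    simp at this
    omega

/-! ### The pair of quadrics at the places above `2` -/

/-- The pair of quadrics satisfied by `(g₁g₂ + g₃g₄)/b`, `(g₁g₃ + g₂g₄)/b`, `(g₁g₄ + g₂g₃)/b`, where
`g_j` is a square root of `a + r_j b` for `r = i, -(4+√17), -(4-√17), (1+√17)/4`; see `eqs_of`. -/
def Eqs (a b c : LL) : Prop :=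
  a ^ 2 - b ^ 2 = (17 + th) / 2 - 2 * iL * th ∧ a ^ 2 - c ^ 2 = (4 + iL - th) * (-17 - 5 * th) / 4

/-- At the place `φ`, the elements `2^m a`, `2^m b`, `2^m c` are integral and `1` mod `2`. -/
def Loc (φ : LL →+* MM) (m : ℕ) (a b c : LL) : Prop :=
  ∃ A B C : OO, 2 ^ m * φ a = toM A ∧ 2 ^ m * φ b = toM B ∧ 2 ^ m * φ c = toM C ∧
    2 ∣ A - 1 ∧ 2 ∣ B - 1 ∧ 2 ∣ C - 1

/-- The image of `4(a² - b²)` for a solution of `Eqs`, at a place sending `√17` to `τ`. -/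
noncomputable def k14 (τ : OO) : OO := 34 + 2 * τ - 8 * io * τ

/-- The image of `4(a² - c²)` for a solution of `Eqs`, at a place sending `√17` to `τ`. -/
noncomputable def k13 (τ : OO) : OO := (4 + io - τ) * (-17 - 5 * τ)

/-- The image of `4(b² - c²)` for a solution of `Eqs`, at a place sending `√17` to `τ`. -/
noncomputable def k12 (τ : OO) : OO := (4 + io + τ) * (-17 + 3 * τ)

/-- Half-sums and half-differences of the scaled solution at a place `φ` above `2`:
`U, V = (A ± B)/2` and `U', V' = (A ± C)/2`, where `A, B, C` are the images of `2^(j+2)` times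
`a, b, c`. -/
structure UV (φ : LL →+* MM) (τ : OO) (j : ℕ) (a b c : LL) (U V U' V' : OO) : Prop where
  sum : U + V = U' + V'
  hA : 2 ∣ U + V - 1
  hB : 2 ∣ U - V - 1
  hC : 2 ∣ U' - V' - 1
  e14 : U * V = 4 ^ j * k14 τ
  e13 : U' * V' = 4 ^ j * k13 τ
  e12 : (U' - V) * (V' - V) = 4 ^ j * k12 τ
  wa : φ ((2 ^ (j + 1)) ^ 2 * ((a + b) * (a + c))) = toM (U * U')
  wb : φ ((2 ^ (j + 1)) ^ 2 * ((a + b) * (b + c))) = toM (U * (U' - V))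
  wc : φ ((2 ^ (j + 1)) ^ 2 * ((a + c) * (b + c))) = toM (U' * (U' - V))

theorem MM_two_ne : (2 : MM) ≠ 0 := by
  have := toM_ne_zero (x := 2) (fun h => not_four_dvd_two (h ▸ dvd_zero _))
  rwa [map_ofNat] at this

theorem OO_two_ne : (2 : OO) ≠ 0 := fun h => not_four_dvd_two (h ▸ dvd_zero _)

theorem mkUV {φ : LL →+* MM} {τ : OO} (hth : φ th = toM τ) (hi : φ iL = toM io) {j : ℕ} {a b c : LL}
    (hE : Eqs a b c) {A B C : OO} (ha : 2 ^ (j + 2) * φ a = toM A) (hb : 2 ^ (j + 2) * φ b = toM B)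
    (hc : 2 ^ (j + 2) * φ c = toM C) (hA : 2 ∣ A - 1) (hB : 2 ∣ B - 1) (hC : 2 ∣ C - 1)
    {U V U' V' : OO} (h1 : U + V = A) (h2 : U - V = B) (h3 : U' + V' = A) (h4 : U' - V' = C) :
    UV φ τ j a b c U V U' V' := by
  subst h1 h2 h4
  obtain ⟨E1, E2⟩ := hE
  have hτ : τ ^ 2 = 17 := by
    apply toM_inj
    rw [map_pow, ← hth, ← map_pow, th_sq, map_ofNat, map_ofNat]
  have f1 := congrArg φ E1
  have f2 := congrArg φ E2
  have h2M := MM_two_ne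
  have h4M : (4 : MM) ≠ 0 := by
    have : (4 : MM) = 2 * 2 := by norm_num
    rw [this]; exact mul_ne_zero h2M h2M
  have h4O : (4 : OO) ≠ 0 := by
    have : (4 : OO) = 2 * 2 := by norm_num
    rw [this]; exact mul_ne_zero OO_two_ne OO_two_ne
  simp only [map_sub, map_add, map_mul, map_pow, map_div₀, map_ofNat, map_neg, hth, hi] at f1 f2
  have f1' : 4 * (φ a ^ 2 - φ b ^ 2) = 34 + 2 * toM τ - 8 * toM io * toM τ := by
    rw [f1]; field_simp; ring
  have f2' : 4 * (φ a ^ 2 - φ c ^ 2) = (4 + toM io - toM τ) * (-17 - 5 * toM τ) := by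
    rw [f2]; field_simp
  have hp : (4 : MM) ^ j = (2 ^ j) ^ 2 := by rw [← pow_mul, mul_comm, pow_mul]; norm_num
  have hx : toM U + toM V = 4 * 2 ^ j * φ a := by
    rw [← map_add, ← ha]; ring
  have hy : toM U - toM V = 4 * 2 ^ j * φ b := by
    rw [← map_sub, ← hb]; ring
  have hz : toM U' - toM V' = 4 * 2 ^ j * φ c := by
    rw [← map_sub, ← hc]; ring
  have hx' : toM U' + toM V' = 4 * 2 ^ j * φ a := by
    rw [← map_add, h3, map_add, hx]
  have g14 : U * V = 4 ^ j * k14 τ := by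
    apply toM_inj
    apply mul_left_cancel₀ h4M
    simp only [k14, map_sub, map_add, map_mul, map_pow, map_ofNat]
    rw [hp, ← f1']
    linear_combination (toM U + toM V + 4 * 2 ^ j * φ a) * hx - (toM U - toM V + 4 * 2 ^ j * φ b) * hy
  have g13 : U' * V' = 4 ^ j * k13 τ := by
    apply toM_inj
    apply mul_left_cancel₀ h4M
    simp only [k13, map_sub, map_add, map_mul, map_pow, map_ofNat, map_neg]
    rw [hp, ← f2']
    linear_combination (toM U' + toM V' + 4 * 2 ^ j * φ a) * hx' - (toM U' - toM V' + 4 * 2 ^ j * φ c) * hz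
  refine ⟨h3.symm, hA, hB, hC, g14, g13, ?_, ?_, ?_, ?_⟩
  · simp only [k12, k13, k14] at *
    linear_combination g13 - g14 - V * h3 + 2 * 4 ^ j * hτ
  · simp only [map_mul, map_pow, map_add, map_ofNat]
    apply mul_left_cancel₀ h4M
    have e1 : 2 * toM U = 4 * 2 ^ j * (φ a + φ b) := by linear_combination hx + hy
    have e2 : 2 * toM U' = 4 * 2 ^ j * (φ a + φ c) := by linear_combination hx' + hz
    linear_combination -(2 * toM U' * e1 + 4 * 2 ^ j * (φ a + φ b) * e2)
  · simp only [map_mul, map_pow, map_add, map_sub, map_ofNat]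
    apply mul_left_cancel₀ h4M
    have e1 : 2 * toM U = 4 * 2 ^ j * (φ a + φ b) := by linear_combination hx + hy
    have e2 : 2 * (toM U' - toM V) = 4 * 2 ^ j * (φ b + φ c) := by
      linear_combination hx' + hz - hx + hy
    linear_combination -(2 * (toM U' - toM V) * e1 + 4 * 2 ^ j * (φ a + φ b) * e2)
  · simp only [map_mul, map_pow, map_add, map_sub, map_ofNat]
    apply mul_left_cancel₀ h4M
    have e1 : 2 * toM U' = 4 * 2 ^ j * (φ a + φ c) := by linear_combination hx' + hz
    have e2 : 2 * (toM U' - toM V) = 4 * 2 ^ j * (φ b + φ c) := by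
      linear_combination hx' + hz - hx + hy
    linear_combination -(2 * (toM U' - toM V) * e1 + 4 * 2 ^ j * (φ a + φ c) * e2)

theorem exists_half {A B : OO} (hA : 2 ∣ A - 1) (hB : 2 ∣ B - 1) : ∃ U V : OO, U + V = A ∧ U - V = B := by
  obtain ⟨x, hx⟩ := hA
  obtain ⟨y, hy⟩ := hB
  refine ⟨1 + x + y, x - y, ?_, ?_⟩
  · linear_combination -hx
  · linear_combination -hy

theorem isUnit_of_two_dvd {A : OO} (hA : 2 ∣ A - 1) : IsUnit A := by
  obtain ⟨x, hx⟩ := hA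
  apply isUnit_of_not_dvd
  rintro ⟨y, hy⟩
  exact not_isUnit_lam_mul (y - (1 - io) * x) (IsUnit.of_mul_eq_one 1 (by
    linear_combination hx - hy + x * two_eq_lam))

theorem isUnit_or {U V : OO} (h : IsUnit (U + V)) : IsUnit U ∨ IsUnit V := by
  by_contra! hh
  obtain ⟨x, hx⟩ := (lam_dvd_or U).resolve_right fun h => hh.1 h.1
  obtain ⟨y, hy⟩ := (lam_dvd_or V).resolve_right fun h => hh.2 h.1
  exact not_isUnit_lam_mul (x + y) (by rw [mul_add, ← hx, ← hy]; exact h)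

theorem isUnit_sub_of_dvd {U V : OO} (hU : IsUnit U) (hV : lam ∣ V) : IsUnit (U - V) := by
  apply isUnit_of_not_dvd
  intro h
  refine not_dvd_of_isUnit hU ?_
  have := dvd_add h hV
  rwa [sub_add_cancel] at this

/-- Since `A² = 1` modulo `4(1+i)` when `A = 1` modulo `2`. -/
theorem one8_mul {A U U' : OO} (hA : 2 ∣ A - 1) (hU : 4 * lam ∣ A - U) (hU' : 4 * lam ∣ A - U') :
    One8 (U * U') := by
  obtain ⟨x, hx⟩ := hA
  obtain ⟨y, hy⟩ := hU
  obtain ⟨z, hz⟩ := hU'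
  obtain ⟨k, hk⟩ := lam_dvd_sq_add isUnit_one x
  exact ⟨k - A * z - U' * y, by linear_combination (A + 2 * x + 1) * hx + 4 * hk - U' * hy - A * hz⟩

/-- Choice of the signs of `b` and `c` making `(A+B)/2` and `(A+C)/2` units. -/
theorem exists_flip {φ : LL →+* MM} {τ : OO} (hth : φ th = toM τ) (hi : φ iL = toM io) {j : ℕ} {a b c : LL}
    (hE : Eqs a b c) (h : Loc φ (j + 2) a b c) : ∃ b' c' : LL, (b' = b ∨ b' = -b) ∧ (c' = c ∨ c' = -c) ∧
      ∃ U V U' V', UV φ τ j a b' c' U V U' V' ∧ IsUnit U ∧ IsUnit U' := by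
  obtain ⟨A, B, C, ha, hb, hc, hA, hB, hC⟩ := h
  have key : ∀ (b : LL) (B : OO), 2 ^ (j + 2) * φ b = toM B → 2 ∣ B - 1 → ∃ b' : LL, ∃ B' U V : OO,
      (b' = b ∨ b' = -b) ∧ 2 ^ (j + 2) * φ b' = toM B' ∧ 2 ∣ B' - 1 ∧ U + V = A ∧ U - V = B' ∧ IsUnit U := by
    intro b B hb hB
    obtain ⟨U, V, h1, h2⟩ := exists_half hA hB
    rcases isUnit_or (h1.symm ▸ isUnit_of_two_dvd hA : IsUnit (U + V)) with hU | hV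
    · exact ⟨b, B, U, V, Or.inl rfl, hb, hB, h1, h2, hU⟩
    · refine ⟨-b, -B, V, U, Or.inr rfl, ?_, ?_, ?_, ?_, hV⟩
      · rw [map_neg, map_neg, mul_neg, hb]
      · obtain ⟨x, hx⟩ := hB
        exact ⟨-x - 1, by linear_combination -hx⟩
      · rw [add_comm, h1]
      · rw [← h2]; ring
  obtain ⟨b', B', U, V, hbb, hb', hB', h1, h2, hU⟩ := key b B hb hB
  obtain ⟨c', C', U', V', hcc, hc', hC', h3, h4, hU'⟩ := key c C hc hC
  have hE' : Eqs a b' c' := by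
    obtain ⟨E1, E2⟩ := hE
    constructor
    · rcases hbb with rfl | rfl
      · exact E1
      · rw [neg_sq]; exact E1
    · rcases hcc with rfl | rfl
      · exact E2
      · rw [neg_sq]; exact E2
  exact ⟨b', c', hbb, hcc, U, V, U', V', mkUV hth hi hE' ha hb' hc' hA hB' hC' h1 h2 h3 h4, hU, hU'⟩

theorem Loc.neg {φ : LL →+* MM} {m : ℕ} {a b c b' c' : LL} (h : Loc φ m a b c) (hb : b' = b ∨ b' = -b)
    (hc : c' = c ∨ c' = -c) : Loc φ m a b' c' := by
  obtain ⟨A, B, C, ha, hb', hc', hA, hB, hC⟩ := h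
  have key : ∀ (b : LL) (B : OO), 2 ^ m * φ b = toM B → 2 ∣ B - 1 → ∀ b' : LL, (b' = b ∨ b' = -b) →
      ∃ B' : OO, 2 ^ m * φ b' = toM B' ∧ 2 ∣ B' - 1 := by
    rintro b B hb ⟨x, hx⟩ b' (rfl | rfl)
    · exact ⟨B, hb, x, hx⟩
    · refine ⟨-B, ?_, -x - 1, by linear_combination -hx⟩
      rw [map_neg, map_neg, mul_neg, hb]
  obtain ⟨B', h1, h2⟩ := key b B hb' hB b' hb
  obtain ⟨C', h3, h4⟩ := key c C hc' hC c' hc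
  exact ⟨A, B', C', ha, h1, h3, hA, h2, h4⟩

theorem Eqs.neg {a b c b' c' : LL} (h : Eqs a b c) (hb : b' = b ∨ b' = -b)
    (hc : c' = c ∨ c' = -c) : Eqs a b' c' := by
  obtain ⟨E1, E2⟩ := h
  constructor
  · rcases hb with rfl | rfl
    · exact E1
    · rw [neg_sq]; exact E1
  · rcases hc with rfl | rfl
    · exact E2
    · rw [neg_sq]; exact E2

theorem Loc.exists_UV {φ : LL →+* MM} {τ : OO} (hth : φ th = toM τ) (hi : φ iL = toM io) {j : ℕ} {a b c : LL}
    (hE : Eqs a b c) (h : Loc φ (j + 2) a b c) : ∃ U V U' V', UV φ τ j a b c U V U' V' := by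
  obtain ⟨A, B, C, ha, hb, hc, hA, hB, hC⟩ := h
  obtain ⟨U, V, h1, h2⟩ := exists_half hA hB
  obtain ⟨U', V', h3, h4⟩ := exists_half hA hC
  exact ⟨U, V, U', V', mkUV hth hi hE ha hb hc hA hB hC h1 h2 h3 h4⟩

theorem dvd_of_unit_mul {U V K d : OO} (hU : IsUnit U) (h : U * V = K) (hd : d ∣ K) : d ∣ V := by
  rw [← h] at hd
  exact (hU.dvd_mul_left).1 hd

/-- When the half-sums are units and the differences are divisible enough, the three products
of half-sums are `1` mod `4(1+i)`. -/
theorem UV.one8 {φ : LL →+* MM} {τ : OO} {j : ℕ} {a b c : LL} {U V U' V' : OO}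
    (h : UV φ τ j a b c U V U' V') (hU : IsUnit U) (hU' : IsUnit U')
    (hk : 4 * lam ∣ 4 ^ j * k14 τ) (hk' : 4 * lam ∣ 4 ^ j * k13 τ) :
    One8 (U * U') ∧ One8 (U * (U' - V)) ∧ One8 (U' * (U' - V)) := by
  have hV := dvd_of_unit_mul hU h.e14 hk
  have hV' := dvd_of_unit_mul hU' h.e13 hk'
  have a1 : 4 * lam ∣ U + V - U := by rwa [add_sub_cancel_left]
  have a2 : 4 * lam ∣ U + V - U' := by rwa [h.sum, add_sub_cancel_left]
  have a3 : 4 * lam ∣ U + V - (U' - V) := by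
    rw [h.sum]
    have := dvd_add hV hV'
    convert this using 1; ring
  exact ⟨one8_mul h.hA a1 a2, one8_mul h.hA a1 a3, one8_mul h.hA a2 a3⟩

/-! ### The product formula on the quadrics -/

/-- The image of `√17` at the first place above `2`, as an element of `ℤ₂[i]`; at the second place the
image is `-τ₀`. -/
noncomputable def τ₀ : OO := ⟨t0, 0⟩

theorem τ₀_eq : ∃ u : OO, τ₀ = 9 + 32 * u := by
  obtain ⟨u, hu⟩ := t0_eq
  refine ⟨⟨u, 0⟩, ?_⟩
  have h9 : (9 : OO) = ⟨9, 0⟩ := rfl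
  have h32 : (32 : OO) = ⟨32, 0⟩ := rfl
  rw [h9, h32, τ₀, hu]
  ext <;> simp

theorem phi1_th' : phi1 th = toM (-τ₀) := by rw [phi1_th, map_neg, τ₀]

theorem isUnit_of_two_dvd_io {A : OO} (hA : 2 ∣ A - io) : IsUnit A := by
  obtain ⟨x, hx⟩ := hA
  have : IsUnit (A * io) := by
    have h : IsUnit (-(A * io)) := isUnit_of_two_dvd ⟨-x * io, by linear_combination -io * hx - io_sq⟩
    rwa [IsUnit.neg_iff] at h
  exact isUnit_of_mul_isUnit_left this

theorem k14_0 : ∃ ε, IsUnit ε ∧ k14 τ₀ = 4 * ε := by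
  obtain ⟨u, hu⟩ := τ₀_eq
  refine ⟨13 - 18 * io + 16 * u - 64 * io * u, isUnit_of_two_dvd ⟨6 - 9 * io + 8 * u - 32 * io * u, by ring⟩, ?_⟩
  rw [k14, hu]; ring

theorem k13_0 : ∃ ε, IsUnit ε ∧ k13 τ₀ = 2 * lam * ε := by
  obtain ⟨u, hu⟩ := τ₀_eq
  refine ⟨(2 - 3 * io + 16 * (1 - io) * u) * (31 + 80 * u), IsUnit.mul ?_ ?_, ?_⟩
  · exact isUnit_of_two_dvd_io ⟨1 - 2 * io + 8 * (1 - io) * u, by ring⟩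
  · exact isUnit_of_two_dvd ⟨15 + 40 * u, by ring⟩
  · rw [k13, hu, lam_eq]
    linear_combination (2 * (3 + 16 * u) * (31 + 80 * u)) * io_sq

theorem k12_0 : ∃ ε, IsUnit ε ∧ k12 τ₀ = 2 * lam * ε := by
  obtain ⟨u, hu⟩ := τ₀_eq
  refine ⟨(7 - 6 * io + 16 * (1 - io) * u) * (5 + 48 * u), IsUnit.mul ?_ ?_, ?_⟩
  · exact isUnit_of_two_dvd ⟨3 - 3 * io + 8 * (1 - io) * u, by ring⟩
  · exact isUnit_of_two_dvd ⟨2 + 24 * u, by ring⟩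
  · rw [k12, hu, lam_eq]
    linear_combination (2 * (6 + 16 * u) * (5 + 48 * u)) * io_sq

theorem k14_1 : 4 * lam ∣ k14 (-τ₀) := by
  obtain ⟨u, hu⟩ := τ₀_eq
  refine ⟨(1 - io) * (2 + 9 * io - 8 * u + 32 * io * u), ?_⟩
  rw [k14, hu]
  linear_combination (4 * (2 + 9 * io - 8 * u + 32 * io * u)) * two_eq_lam

theorem k13_1 : 4 * lam ∣ k13 (-τ₀) := by
  obtain ⟨u, hu⟩ := τ₀_eq
  refine ⟨(7 - 6 * io + 16 * (1 - io) * u) * (7 + 40 * u), ?_⟩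
  rw [k13, hu, lam_eq]
  linear_combination (4 * (6 + 16 * u) * (7 + 40 * u)) * io_sq

theorem norm_two : QuadraticAlgebra.norm (2 : OO) = 2 ^ 2 := by
  have h : (2 : OO) = ⟨2, 0⟩ := rfl
  rw [OO_norm, h]; simp

theorem norm_four : QuadraticAlgebra.norm (4 : OO) = 2 ^ 4 := by
  have h : (4 : OO) = ⟨4, 0⟩ := rfl
  rw [OO_norm, h]; simp; norm_num

/-- If `U` is not a unit then `V` is, and `U` carries the whole even power of `1 + i` in the product. -/
theorem norm_even {U V ε : OO} {j : ℕ} (hε : IsUnit ε) (h : U * V = 4 ^ j * (4 * ε))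
    (hs : IsUnit (U + V)) : ∃ n : ℕ, ∃ u : ℤ_[2], Even n ∧ IsUnit u ∧ QuadraticAlgebra.norm U = 2 ^ n * u := by
  rcases isUnit_or hs with hU | hV
  · exact ⟨0, _, by simp, isUnit_iff_norm.1 hU, by rw [pow_zero, one_mul]⟩
  · obtain ⟨W, hW⟩ := hV.exists_right_inv
    refine ⟨4 * j + 4, QuadraticAlgebra.norm (ε * W), ⟨2 * j + 2, by ring⟩,
      isUnit_iff_norm.1 (hε.mul (IsUnit.of_mul_eq_one _ ((mul_comm _ _).trans hW))), ?_⟩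
    have : U = 4 ^ j * 4 * (ε * W) := by linear_combination W * h - U * hW
    rw [this]
    simp only [map_mul, map_pow, norm_four]
    rw [pow_add, pow_mul]

/-- If `U` is not a unit then `V` is, and `U` carries the whole odd power of `1 + i` in the product. -/
theorem norm_odd {U V ε : OO} {j : ℕ} (hε : IsUnit ε) (h : U * V = 4 ^ j * (2 * lam * ε))
    (hs : IsUnit (U + V)) :
    IsUnit U ∨ ∃ n : ℕ, ∃ u : ℤ_[2], Odd n ∧ IsUnit u ∧ QuadraticAlgebra.norm U = 2 ^ n * u := by
  rcases isUnit_or hs with hU | hV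
  · exact Or.inl hU
  · obtain ⟨W, hW⟩ := hV.exists_right_inv
    refine Or.inr ⟨4 * j + 3, QuadraticAlgebra.norm (ε * W), ⟨2 * j + 1, by ring⟩,
      isUnit_iff_norm.1 (hε.mul (IsUnit.of_mul_eq_one _ ((mul_comm _ _).trans hW))), ?_⟩
    have : U = 4 ^ j * (2 * lam) * (ε * W) := by linear_combination W * h - U * hW
    rw [this]
    simp only [map_mul, map_pow, norm_four, norm_lam, norm_two]
    rw [pow_add, pow_mul]; ring

theorem isSquare_mul_norm {w : LL} (hw : Good w) {P₀ P₁ : OO} (h0 : phi0 w = toM P₀) (h1 : phi1 w = toM P₁) :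
    IsSquare (((QuadraticAlgebra.norm P₀ * QuadraticAlgebra.norm P₁ : ℤ_[2])) : ℚ_[2]) := by
  have := hw.isSquare_norm
  rw [h0, h1, norm_toM, norm_toM] at this
  rwa [PadicInt.coe_mul]

/-- The product formula for a `Good` element: the valuations of the two local norms have even sum. -/
theorem Good.parity {w : LL} (hw : Good w) {P₀ P₁ : OO} (h0 : phi0 w = toM P₀) (h1 : phi1 w = toM P₁)
    {n n' : ℕ} {u u' : ℤ_[2]} (hu : IsUnit u) (hn : QuadraticAlgebra.norm P₀ = 2 ^ n * u)
    (hu' : IsUnit u') (hn' : QuadraticAlgebra.norm P₁ = 2 ^ n' * u') : Even (n + n') := by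
  obtain ⟨y, hy⟩ := isSquare_mul_norm hw h0 h1
  rw [hn, hn'] at hy
  refine even_of_sq_eq (hu.mul hu') (x := y) ?_ ?_
  · rintro rfl
    rw [mul_zero] at hy
    have : (2 ^ n * u * (2 ^ n' * u')) = 0 := PadicInt.ext hy
    have h2 := two_ne_zero_Z2
    simp [h2, hu.ne_zero, hu'.ne_zero] at this
  · rw [pow_two, ← hy]
    push_cast
    have c2 : ((2 : ℤ_[2]) : ℚ_[2]) = 2 := rfl
    simp only [c2]
    ring

/-- The product formula for a `Good` element: the unit parts of the two local norms have product `1`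
modulo `8`. -/
theorem Good.r8 {w : LL} (hw : Good w) {P₀ P₁ : OO} (h0 : phi0 w = toM P₀) (h1 : phi1 w = toM P₁)
    {n n' : ℕ} {u u' : ℤ_[2]} (hu : IsUnit u) (hn : QuadraticAlgebra.norm P₀ = 2 ^ n * u)
    (hu' : IsUnit u') (hn' : QuadraticAlgebra.norm P₁ = 2 ^ n' * u') : X4Y4.r8 (u * u') = 1 := by
  obtain ⟨k, hk⟩ := hw.parity h0 h1 hu hn hu' hn'
  obtain ⟨y, hy⟩ := isSquare_mul_norm hw h0 h1
  rw [hn, hn'] at hy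
  refine r8_of_isSquare (hu.mul hu') ⟨y / 2 ^ k, ?_⟩
  have c2 : ((2 : ℤ_[2]) : ℚ_[2]) = 2 := rfl
  push_cast at hy ⊢
  simp only [c2] at hy
  rw [div_mul_div_comm, ← hy, eq_div_iff (mul_ne_zero (pow_ne_zero _ two_ne_zero) (pow_ne_zero _ two_ne_zero)), ← pow_add, ← hk]
  ring

theorem norm_one_add {ε : OO} (hε : IsUnit ε) : r8 (QuadraticAlgebra.norm (1 + 2 * lam * ε)) = 5 := by
  rw [isUnit_iff_norm, isUnit_iff_r8, OO_norm] at hε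
  have h1 : (1 : OO) = ⟨1, 0⟩ := rfl
  have h2 : (2 : OO) = ⟨2, 0⟩ := rfl
  rw [OO_norm, h1, h2]
  simp [lam, map_ofNat] at *
  generalize r8 ε.re = p at *
  generalize r8 ε.im = q at *
  revert p q
  decide

theorem four_sub_iL : (4 : LL) - iL = algebraMap GaussianInt LL ⟨4, -1⟩ := by
  have : (⟨4, -1⟩ : GaussianInt) = 4 - ⟨0, 1⟩ := by rfl
  rw [this, map_sub, map_ofNat, iL]

/-- At the second place the products are units, so they do not vanish; together with `isSquare_val_w`
this makes them `Good`. -/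
theorem good_w {a b c : LL} (hE : Eqs a b c) (k : ℕ) :
    (∀ x : OO, IsUnit x → phi1 ((2 ^ k) ^ 2 * ((a + b) * (a + c))) = toM x →
      Good ((2 ^ k) ^ 2 * ((a + b) * (a + c)))) ∧
    (∀ x : OO, IsUnit x → phi1 ((2 ^ k) ^ 2 * ((a + b) * (b + c))) = toM x →
      Good ((2 ^ k) ^ 2 * ((a + b) * (b + c)))) := by
  have nz : ∀ (w : LL) (x : OO), IsUnit x → phi1 w = toM x → w ≠ 0 := by
    rintro _ x hx h rfl
    rw [map_zero] at h
    exact toM_ne_zero hx.ne_zero h.symm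
  constructor <;> intro x hx h <;> refine ⟨nz _ x hx h, fun v h2 h4 => ?_⟩ <;>
    rw [← four_sub_iL] at h4 <;>
    rw [map_mul, map_pow, map_pow, h2, one_pow, one_pow, one_mul]
  · exact (isSquare_val_w v iL_sq th_sq h2 h4 hE.1 hE.2).1
  · exact (isSquare_val_w v iL_sq th_sq h2 h4 hE.1 hE.2).2

/-! ### The descent -/

/-- A solution of the quadrics which is, up to the factor `2^m`, integral and `1` mod `2` at both
places above `2`. -/
def State (m : ℕ) : Prop := ∃ a b c : LL, Eqs a b c ∧ Loc phi0 m a b c ∧ Loc phi1 m a b c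

theorem norm_pow_of_isUnit {x : OO} (h : IsUnit x) :
    IsUnit (QuadraticAlgebra.norm x) ∧ QuadraticAlgebra.norm x = 2 ^ 0 * QuadraticAlgebra.norm x :=
  ⟨isUnit_iff_norm.1 h, by rw [pow_zero, one_mul]⟩

theorem isUnit_add_sub {x y z : OO} (hx : IsUnit x) (hy : IsUnit y) (hz : IsUnit z) : IsUnit (x + y - z) := by
  obtain ⟨p, hp⟩ := ((lam_dvd_or x).resolve_left (not_dvd_of_isUnit hx)).2
  obtain ⟨q, hq⟩ := ((lam_dvd_or y).resolve_left (not_dvd_of_isUnit hy)).2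
  obtain ⟨r, hr⟩ := ((lam_dvd_or z).resolve_left (not_dvd_of_isUnit hz)).2
  have := isUnit_sub_of_dvd isUnit_one (V := -(lam * (p + q - r))) ⟨-(p + q - r), by ring⟩
  convert this using 1
  linear_combination hp + hq - hr

/-- Extraction of the new solution from square roots of `(a+b)(a+c)` and `(a+b)(b+c)`. -/
theorem new_state {j : ℕ} {a b c x y : LL} (hE : Eqs a b c)
    (hx : (2 ^ (j + 1)) ^ 2 * ((a + b) * (a + c)) = x ^ 2)
    (hy : (2 ^ (j + 1)) ^ 2 * ((a + b) * (b + c)) = y ^ 2) (h0 : a + b ≠ 0)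
    (H : ∀ φ : LL →+* MM, (φ = phi0 ∨ φ = phi1) → ∃ P Q R : OO, One8 P ∧ One8 Q ∧ One8 R ∧
      φ ((2 ^ (j + 1)) ^ 2 * ((a + b) * (a + c))) = toM P ∧
      φ ((2 ^ (j + 1)) ^ 2 * ((a + b) * (b + c))) = toM Q ∧
      φ ((2 ^ (j + 1)) ^ 2 * ((a + c) * (b + c))) = toM R) : State (j + 1) := by
  have h2 : (2 : LL) ^ (j + 1) ≠ 0 := pow_ne_zero _ two_ne_zero
  set D : LL := 2 ^ (j + 1) with hD
  have ea : (x / D) ^ 2 = (a + b) * (a + c) := by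
    rw [div_pow, ← hx]; field_simp
  have eb : (y / D) ^ 2 = (a + b) * (b + c) := by
    rw [div_pow, ← hy]; field_simp
  have ec : (x / D * (y / D) / (a + b)) ^ 2 = (a + c) * (b + c) := by
    rw [div_pow, mul_pow, ea, eb]; field_simp
  refine ⟨x / D, y / D, x / D * (y / D) / (a + b), ⟨?_, ?_⟩, ?_⟩
  · rw [ea, eb, ← hE.1]; ring
  · rw [ea, ec, ← hE.2]; ring
  · have key : ∀ φ : LL →+* MM, (φ = phi0 ∨ φ = phi1) →
        Loc φ (j + 1) (x / D) (y / D) (x / D * (y / D) / (a + b)) := by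
      intro φ hφ
      obtain ⟨P, Q, R, hP, hQ, hR, h1, h2, h3⟩ := H φ hφ
      have hh : ∀ (s w : LL) (P : OO), s ^ 2 = w → One8 P → φ (D ^ 2 * w) = toM P →
          ∃ S : OO, 2 ^ (j + 1) * φ s = toM S ∧ 2 ∣ S - 1 := by
        rintro s w P rfl hP h
        obtain ⟨S, hS, hS2⟩ := int_of_sq (x := φ (D * s)) (by rw [← map_pow, mul_pow, h])
        refine ⟨S, ?_, one_mod_two_of_sq (hS2 ▸ hP)⟩
        rw [hS, hD, map_mul, map_pow, map_ofNat]
      obtain ⟨A, a1, a2⟩ := hh _ _ P ea hP h1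
      obtain ⟨B, b1, b2⟩ := hh _ _ Q eb hQ h2
      obtain ⟨C, c1, c2⟩ := hh _ _ R ec hR h3
      exact ⟨A, B, C, a1, b1, c1, a2, b2, c2⟩
    exact ⟨key _ (Or.inl rfl), key _ (Or.inr rfl)⟩

/-- One step of the descent. After a choice of signs, the half-sums are units at the second place; the
product formula forces them to be units at the first place too. If `j = 0`, the norm of `U U'` at the
first place is `5` modulo `8`, against the product formula. Otherwise `(a+b)(a+c)` and `(a+b)(b+c)` are
`1` modulo `4(1+i)` at both places, hence squares, and their roots form a solution with one power of
`2` less in the denominator. -/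
theorem step {j : ℕ} (h : State (j + 2)) : j ≠ 0 ∧ State (j + 1) := by
  obtain ⟨a, b, c, hE, hL0, hL1⟩ := h
  obtain ⟨b', c', hb, hc, U₁, V₁, U₁', V₁', h1, hU₁, hU₁'⟩ := exists_flip phi1_th' phi1_iL hE hL1
  replace hE := hE.neg hb hc
  replace hL0 := hL0.neg hb hc
  clear hL1 hb hc
  obtain ⟨U, V, U', V', h0⟩ := hL0.exists_UV phi0_th phi0_iL hE
  obtain ⟨o1, o2, o3⟩ := h1.one8 hU₁ hU₁' (k14_1.mul_left _) (k13_1.mul_left _)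
  have Ga := (good_w hE (j + 1)).1 _ o1.isUnit h1.wa
  have Gb := (good_w hE (j + 1)).2 _ o2.isUnit h1.wb
  obtain ⟨ε, hε, k1⟩ := k14_0
  obtain ⟨ε', hε', k2⟩ := k13_0
  obtain ⟨ε'', hε'', k3⟩ := k12_0
  change UV phi0 τ₀ j a b' c' U V U' V' at h0
  have hA := isUnit_of_two_dvd h0.hA
  have hB := isUnit_of_two_dvd h0.hB
  have hC := isUnit_of_two_dvd h0.hC
  obtain ⟨n, u, hn, hu, hnu⟩ := norm_even hε (k1 ▸ h0.e14) hA
  have hU' : IsUnit U' := by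
    refine (norm_odd hε' (k2 ▸ h0.e13) (h0.sum ▸ hA)).resolve_right ?_
    rintro ⟨n', u', hn', hu', hnu'⟩
    have := Ga.parity h0.wa h1.wa (n := n + n') (n' := 0) (hu.mul hu')
      (by rw [map_mul, hnu, hnu']; ring) (norm_pow_of_isUnit o1.isUnit).1 (norm_pow_of_isUnit o1.isUnit).2
    rw [add_zero] at this
    exact Nat.not_even_iff_odd.2 (hn.add_odd hn') this
  have hU'' : IsUnit (U' - V) := by
    refine (norm_odd hε'' (k3 ▸ h0.e12) ?_).resolve_right ?_
    · convert hB using 1; linear_combination -h0.sum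
    rintro ⟨n', u', hn', hu', hnu'⟩
    have := Gb.parity h0.wb h1.wb (n := n + n') (n' := 0) (hu.mul hu')
      (by rw [map_mul, hnu, hnu']; ring) (norm_pow_of_isUnit o2.isUnit).1 (norm_pow_of_isUnit o2.isUnit).2
    rw [add_zero] at this
    exact Nat.not_even_iff_odd.2 (hn.add_odd hn') this
  have hU : IsUnit U := by
    have := isUnit_add_sub hU' hU'' hC
    convert this using 1; linear_combination h0.sum
  have hj : j ≠ 0 := by
    rintro rfl
    obtain ⟨W, hW⟩ := hU.exists_right_inv
    obtain ⟨W', hW'⟩ := hU'.exists_right_inv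
    have hV : V = 4 * (ε * W) := by
      have := h0.e14; rw [k1] at this; linear_combination W * this - V * hW
    have hV' : V' = 2 * lam * (ε' * W') := by
      have := h0.e13; rw [k2] at this; linear_combination W' * this - V' * hW'
    obtain ⟨x, hx⟩ := h0.hA
    obtain ⟨k, hk⟩ := lam_dvd_sq_add isUnit_one x
    -- The product `U U'` has the form `1 + 2(1+i) E` with `E` a unit.
    have hunit := isUnit_sub_of_dvd (U := -((U + V) * (ε' * W')))
      (V := lam * (-(1 - io) * k - io * (U + V) * ε * W - 2 * (1 - io) * ε * W * ε' * W'))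
      ((hA.mul (hε'.mul (IsUnit.of_mul_eq_one _ ((mul_comm _ _).trans hW')))).neg) ⟨_, rfl⟩
    have hUU : U * U' = 1 + 2 * lam * (-((U + V) * (ε' * W')) -
        lam * (-(1 - io) * k - io * (U + V) * ε * W - 2 * (1 - io) * ε * W * ε' * W')) := by
      have e : U * U' = (U + V) ^ 2 - (U + V) * (V + V') + V * V' := by
        linear_combination -U * h0.sum
      have e2 : (U + V) ^ 2 = 1 + 4 * (lam * k) := by
        linear_combination (U + V + 1 + 2 * x) * hx + 4 * hk
      rw [e, e2]
      linear_combination (-(U + V) + V') * hV + (-(U + V) + 4 * (ε * W)) * hV' +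
        2 * k * lam * two_eq_lam +
        4 * lam * ε * W * ε' * W' * two_eq_lam - 2 * io * (U + V) * ε * W * lam_sq -
        4 * (U + V) * ε * W * io_sq
    have := Ga.r8 h0.wa h1.wa (norm_pow_of_isUnit (hU.mul hU')).1 (norm_pow_of_isUnit (hU.mul hU')).2
      (norm_pow_of_isUnit o1.isUnit).1 (norm_pow_of_isUnit o1.isUnit).2
    rw [map_mul, o1.norm, mul_one, hUU, norm_one_add hunit] at this
    exact absurd this (by decide)
  refine ⟨hj, ?_⟩
  obtain ⟨i, rfl⟩ := Nat.exists_eq_succ_of_ne_zero hj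
  obtain ⟨q1, q2, q3⟩ := h0.one8 hU hU'
    (by rw [k1]; exact ⟨4 ^ i * (1 - io) * 2 * ε, by rw [pow_succ]; linear_combination 4 ^ i * 8 * ε * two_eq_lam⟩)
    (by rw [k2]; exact ⟨4 ^ i * 2 * ε', by rw [pow_succ]; ring⟩)
  obtain ⟨y, hy⟩ := Ga.isSquare h0.wa h1.wa q1 o1
  obtain ⟨z, hz⟩ := Gb.isSquare h0.wb h1.wb q2 o2
  refine new_state hE hy hz ?_ ?_
  · intro h
    apply Ga.1
    rw [h, zero_mul, mul_zero]
  · rintro φ (rfl | rfl)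
    · exact ⟨_, _, _, q1, q2, q3, h0.wa, h0.wb, h0.wc⟩
    · exact ⟨_, _, _, o1, o2, o3, h1.wa, h1.wb, h1.wc⟩

theorem not_state (j : ℕ) : ¬ State (j + 2) := by
  induction j with
  | zero => exact fun h => (step h).1 rfl
  | succ j ih => exact fun h => ih (step h).2

/-! ### The solution attached to four square roots -/

/-- The integral data attached to a nontrivial solution. With `r₁ = i`, `r₂ = -(4+√17)`,
`r₃ = -(4-√17)`, `r₄ = (1+√17)/4`, the elements `m+ni`, `c+d√17`, `ε(c-d√17)`, `c'+d'√17` are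
square roots of `a + r_j b`, normalized to be `1` mod `4` at the first place above `2`; the second
place sees the signs `1, ε, ε, ε'`. -/
structure Data (M : ℕ) (a b m n c d c' d' ε ε' β : ℤ) : Prop where
  hM : 3 ≤ M
  hb : b = 2 ^ (M + 1) * β
  hβ : 2 ∣ β - 1
  ha : a = m ^ 2 - n ^ 2
  hmn : b = 2 * m * n
  hc : c ^ 2 + 17 * d ^ 2 = a - 4 * b
  hcd : 2 * c * d = -b
  hc' : 4 * (c' ^ 2 + 17 * d' ^ 2) = 4 * a + b
  hcd' : 8 * c' * d' = b
  hε : ε = 1 ∨ ε = -1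
  hε' : ε' = 1 ∨ ε' = -1
  c0 : 4 ∣ c + d - 1
  c1 : 4 ∣ c - d - ε
  c0' : 4 ∣ c' + d' - 1
  c1' : 4 ∣ c' - d' - ε'
  hm : 4 ∣ m - 1
  hn : 8 ∣ n

/-- The resolvent identity `(g₁g₂ + g₃g₄)² - (g₁g₃ + g₂g₄)² = (g₁² - g₄²)(g₂² - g₃²)` and its analogue
turn the four square roots into a solution of `Eqs`. -/
theorem eqs_of {a b g₁ g₂ g₃ g₄ : LL} (hb : b ≠ 0) (h1 : g₁ ^ 2 = a + iL * b)
    (h2 : g₂ ^ 2 = a - (4 + th) * b) (h3 : g₃ ^ 2 = a - (4 - th) * b)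
    (h4 : 4 * g₄ ^ 2 = 4 * a + (1 + th) * b) :
    Eqs ((g₁ * g₂ + g₃ * g₄) / b) ((g₁ * g₃ + g₂ * g₄) / b) ((g₁ * g₄ + g₂ * g₃) / b) := by
  have h17 := th_sq
  constructor
  · rw [div_pow, div_pow, ← sub_div, div_eq_iff (pow_ne_zero 2 hb)]
    have : (g₁ * g₂ + g₃ * g₄) ^ 2 - (g₁ * g₃ + g₂ * g₄) ^ 2 = (g₁ ^ 2 - g₄ ^ 2) * (g₂ ^ 2 - g₃ ^ 2) := by
      ring
    have h4' : g₄ ^ 2 = a + (1 + th) / 4 * b := by linear_combination h4 / 4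
    rw [this, h1, h2, h3, h4']
    linear_combination b ^ 2 / 2 * h17
  · rw [div_pow, div_pow, ← sub_div, div_eq_iff (pow_ne_zero 2 hb)]
    have : (g₁ * g₂ + g₃ * g₄) ^ 2 - (g₁ * g₄ + g₂ * g₃) ^ 2 = (g₁ ^ 2 - g₃ ^ 2) * (g₂ ^ 2 - g₄ ^ 2) := by
      ring
    have h4' : g₄ ^ 2 = a + (1 + th) / 4 * b := by linear_combination h4 / 4
    rw [this, h1, h2, h3, h4']
    ring

theorem loc_one {φ : LL →+* MM} {M : ℕ} {x b : LL} {X β : OO} (hx : φ x = toM X)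
    (hb : φ b = toM (2 ^ (M + 1) * β)) (hβ : 2 ∣ β - 1) (hX : 4 ∣ X - 2) :
    ∃ A : OO, 2 ^ M * φ (x / b) = toM A ∧ 2 ∣ A - 1 := by
  obtain ⟨β', hβ'⟩ := (isUnit_of_two_dvd hβ).exists_right_inv
  obtain ⟨k, hk⟩ := hX
  obtain ⟨l, hl⟩ := hβ
  refine ⟨(1 + 2 * k) * β', ?_, β' * (k - l), by linear_combination hβ' - β' * hl⟩
  have h2 : toM (2 ^ (M + 1) * β) ≠ 0 := toM_ne_zero (mul_ne_zero (pow_ne_zero _ OO_two_ne)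
    (fun h => OO_two_ne (by rw [h] at hβ'; linear_combination (-2) * hβ')))
  rw [map_div₀, hx, hb, ← mul_div_assoc, div_eq_iff h2]
  have : (2 : MM) ^ M = toM (2 ^ M) := by rw [map_pow, map_ofNat]
  rw [this, ← map_mul, ← map_mul]
  congr 1
  rw [pow_succ]
  linear_combination -2 * (1 + 2 * k) * 2 ^ M * hβ' + 2 ^ M * hk

/-- The four square roots at a place give a `Loc` when they are `1, ε, ε, 1` modulo `4`: the three
sums are then `2` modulo `4`. -/
theorem loc_of {φ : LL →+* MM} {M : ℕ} {b g₁ g₂ g₃ g₄ : LL} {β G₁ G₂ G₃ G₄ ε : OO}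
    (hb : φ b = toM (2 ^ (M + 1) * β)) (hβ : 2 ∣ β - 1) (hε : ε = 1 ∨ ε = -1)
    (h1 : φ g₁ = toM G₁) (h2 : φ g₂ = toM G₂) (h3 : φ g₃ = toM G₃) (h4 : φ g₄ = toM G₄)
    (k1 : 4 ∣ G₁ - 1) (k2 : 4 ∣ G₂ - ε) (k3 : 4 ∣ G₃ - ε) (k4 : 4 ∣ G₄ - 1) :
    Loc φ M ((g₁ * g₂ + g₃ * g₄) / b) ((g₁ * g₃ + g₂ * g₄) / b) ((g₁ * g₄ + g₂ * g₃) / b) := by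
  obtain ⟨p, hp⟩ := k1
  obtain ⟨q, hq⟩ := k2
  obtain ⟨r, hr⟩ := k3
  obtain ⟨s, hs⟩ := k4
  have hG₁ : G₁ = 1 + 4 * p := by linear_combination hp
  have hG₂ : G₂ = ε + 4 * q := by linear_combination hq
  have hG₃ : G₃ = ε + 4 * r := by linear_combination hr
  have hG₄ : G₄ = 1 + 4 * s := by linear_combination hs
  have key : ∀ x X, φ x = toM X → 4 ∣ X - 2 → ∃ A : OO, 2 ^ M * φ (x / b) = toM A ∧ 2 ∣ A - 1 :=
    fun x X hx hX => loc_one hx hb hβ hX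
  have keyn : ∀ x X, φ x = toM X → 4 ∣ X + 2 → ∃ A : OO, 2 ^ M * φ (x / b) = toM A ∧ 2 ∣ A - 1 := by
    intro x X hx hX
    refine key x X hx ?_
    have := dvd_sub hX (dvd_refl 4)
    convert this using 1; ring
  have s1 : φ (g₁ * g₂ + g₃ * g₄) = toM (G₁ * G₂ + G₃ * G₄) := by
    simp only [map_add, map_mul, h1, h2, h3, h4]
  have s2 : φ (g₁ * g₃ + g₂ * g₄) = toM (G₁ * G₃ + G₂ * G₄) := by
    simp only [map_add, map_mul, h1, h2, h3, h4]
  have s3 : φ (g₁ * g₄ + g₂ * g₃) = toM (G₁ * G₄ + G₂ * G₃) := by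
    simp only [map_add, map_mul, h1, h2, h3, h4]
  have k3 : ∃ C : OO, 2 ^ M * φ ((g₁ * g₄ + g₂ * g₃) / b) = toM C ∧ 2 ∣ C - 1 := by
    refine key _ _ s3 ?_
    rcases hε with rfl | rfl
    · exact ⟨p + s + 4 * p * s + q + r + 4 * q * r, by rw [hG₁, hG₂, hG₃, hG₄]; ring⟩
    · exact ⟨p + s + 4 * p * s - q - r + 4 * q * r, by rw [hG₁, hG₂, hG₃, hG₄]; ring⟩
  have k1 : ∃ A : OO, 2 ^ M * φ ((g₁ * g₂ + g₃ * g₄) / b) = toM A ∧ 2 ∣ A - 1 := by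
    rcases hε with rfl | rfl
    · exact key _ _ s1 ⟨p + q + 4 * p * q + r + s + 4 * r * s, by rw [hG₁, hG₂, hG₃, hG₄]; ring⟩
    · exact keyn _ _ s1 ⟨-p + q + 4 * p * q + r - s + 4 * r * s, by rw [hG₁, hG₂, hG₃, hG₄]; ring⟩
  have k2 : ∃ B : OO, 2 ^ M * φ ((g₁ * g₃ + g₂ * g₄) / b) = toM B ∧ 2 ∣ B - 1 := by
    rcases hε with rfl | rfl
    · exact key _ _ s2 ⟨p + r + 4 * p * r + q + s + 4 * q * s, by rw [hG₁, hG₂, hG₃, hG₄]; ring⟩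
    · exact keyn _ _ s2 ⟨-p + r + 4 * p * r + q - s + 4 * q * s, by rw [hG₁, hG₂, hG₃, hG₄]; ring⟩
  obtain ⟨A, a1, a2⟩ := k1
  obtain ⟨B, b1, b2⟩ := k2
  obtain ⟨C, c1, c2⟩ := k3
  exact ⟨A, B, C, a1, b1, c1, a2, b2, c2⟩

section
variable {M : ℕ} {a b m n c d c' d' ε ε' β : ℤ}

theorem Data.eqs (D : Data M a b m n c d c' d' ε ε' β) {g₁ g₂ g₃ g₄ : LL}
    (h1 : g₁ = m + n * iL) (h2 : g₂ = c + d * th) (h3 : g₃ = ε * (c - d * th)) (h4 : g₄ = c' + d' * th) :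
    Eqs ((g₁ * g₂ + g₃ * g₄) / b) ((g₁ * g₃ + g₂ * g₄) / b) ((g₁ * g₄ + g₂ * g₃) / b) := by
  have hβ0 : β ≠ 0 := by rintro rfl; have := D.hβ; omega
  have hb0 : (b : LL) ≠ 0 := by
    rw [Int.cast_ne_zero, D.hb]; exact mul_ne_zero (pow_ne_zero _ two_ne_zero) hβ0
  have e1 : (a : LL) = m ^ 2 - n ^ 2 := by exact_mod_cast D.ha
  have e2 : (b : LL) = 2 * m * n := by exact_mod_cast D.hmn
  have e3 : (c : LL) ^ 2 + 17 * d ^ 2 = a - 4 * b := by exact_mod_cast D.hc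
  have e4 : 2 * (c : LL) * d = -b := by exact_mod_cast D.hcd
  have e5 : 4 * ((c' : LL) ^ 2 + 17 * d' ^ 2) = 4 * a + b := by exact_mod_cast D.hc'
  have e6 : 8 * (c' : LL) * d' = b := by exact_mod_cast D.hcd'
  have e7 : (ε : LL) ^ 2 = 1 := by rcases D.hε with rfl | rfl <;> norm_num
  have h17 := th_sq
  refine eqs_of (a := a) hb0 ?_ ?_ ?_ ?_
  · rw [h1]; linear_combination -e1 - iL * e2 + (n : LL) ^ 2 * iL_sq
  · rw [h2]; linear_combination e3 + th * e4 + (d : LL) ^ 2 * h17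
  · rw [h3]; linear_combination (c - d * th) ^ 2 * e7 + e3 - th * e4 + (d : LL) ^ 2 * h17
  · rw [h4]; linear_combination e5 + th * e6 + 4 * (d' : LL) ^ 2 * h17

theorem OO_dvd_cast {k : ℕ} [k.AtLeastTwo] {x : ℤ} (h : (OfNat.ofNat k : ℤ) ∣ x) :
    (OfNat.ofNat k : OO) ∣ (x : OO) := by
  have := Int.cast_dvd_cast (α := OO) _ _ h
  simpa using this

/-- If the fourth sign is `1` as well, the solution starts the descent. -/
theorem Data.state (D : Data M a b m n c d c' d' ε 1 β) : State M := by
  refine ⟨_, _, _, D.eqs rfl rfl rfl rfl, ?_, ?_⟩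
  all_goals
    obtain ⟨u, hu⟩ := τ₀_eq
    have hb : ∀ φ : LL →+* MM, φ b = toM (2 ^ (M + 1) * (β : OO)) := by
      intro φ
      rw [D.hb]
      simp only [map_mul, map_pow, map_ofNat, map_intCast, Int.cast_mul, Int.cast_pow, Int.cast_ofNat]
    have hβ : (2 : OO) ∣ (β : OO) - 1 := by exact_mod_cast OO_dvd_cast D.hβ
    have hm : (4 : OO) ∣ (m : OO) - 1 := by exact_mod_cast OO_dvd_cast D.hm
    have hn : (8 : OO) ∣ (n : OO) := by exact_mod_cast OO_dvd_cast D.hn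
    have c0 : (4 : OO) ∣ (c : OO) + d - 1 := by exact_mod_cast OO_dvd_cast D.c0
    have c1 : (4 : OO) ∣ (c : OO) - d - ε := by exact_mod_cast OO_dvd_cast D.c1
    have c0' : (4 : OO) ∣ (c' : OO) + d' - 1 := by exact_mod_cast OO_dvd_cast D.c0'
    have c1' : (4 : OO) ∣ (c' : OO) - d' - 1 := by
      have := OO_dvd_cast D.c1'
      push_cast at this
      exact this
    obtain ⟨x1, hm⟩ := hm
    obtain ⟨x2, hn⟩ := hn
    obtain ⟨x3, c0⟩ := c0
    obtain ⟨x4, c1⟩ := c1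
    obtain ⟨x5, c0'⟩ := c0'
    obtain ⟨x6, c1'⟩ := c1'
    have e7 : (ε : OO) ^ 2 = 1 := by rcases D.hε with h | h <;> rw [h] <;> norm_num
  · refine loc_of (ε := 1) (G₁ := m + n * io) (G₂ := c + d * τ₀) (G₃ := ε * (c - d * τ₀)) (G₄ := c' + d' * τ₀)
      (hb _) hβ (Or.inl rfl) ?_ ?_ ?_ ?_ ⟨x1 + 2 * x2 * io, ?_⟩ ⟨x3 + (2 + 8 * u) * d, ?_⟩
      ⟨ε * x4 - ε * (2 + 8 * u) * d, ?_⟩ ⟨x5 + (2 + 8 * u) * d', ?_⟩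
    · simp only [map_add, map_mul, map_intCast, phi0_iL]
    · simp only [map_add, map_mul, map_intCast, phi0_th, τ₀]
    · simp only [map_sub, map_mul, map_intCast, phi0_th, τ₀]
    · simp only [map_add, map_mul, map_intCast, phi0_th, τ₀]
    · linear_combination hm + io * hn
    · rw [hu]; linear_combination c0
    · rw [hu]; linear_combination (ε : OO) * c1 + e7
    · rw [hu]; linear_combination c0'
  · have hε : (ε : OO) = 1 ∨ (ε : OO) = -1 := by
      rcases D.hε with h | h <;> rw [h] <;> simp
    refine loc_of (ε := ε) (G₁ := m + n * io) (G₂ := c + d * -τ₀) (G₃ := ε * (c - d * -τ₀)) (G₄ := c' + d' * -τ₀)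
      (hb _) hβ hε ?_ ?_ ?_ ?_ ⟨x1 + 2 * x2 * io, ?_⟩ ⟨x4 - (2 + 8 * u) * d, ?_⟩
      ⟨ε * x3 + ε * (2 + 8 * u) * d, ?_⟩ ⟨x6 - (2 + 8 * u) * d', ?_⟩
    · simp only [map_add, map_mul, map_intCast, phi1_iL]
    · simp only [map_add, map_mul, map_intCast, phi1_th']
    · simp only [map_sub, map_mul, map_intCast, phi1_th']
    · simp only [map_add, map_mul, map_intCast, phi1_th']
    · linear_combination hm + io * hn
    · rw [hu]; linear_combination c1
    · rw [hu]; linear_combination (ε : OO) * c0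
    · rw [hu]; linear_combination c1'

theorem Data.false_of_one (D : Data M a b m n c d c' d' ε 1 β) : False := by
  obtain ⟨j, rfl⟩ : ∃ j, M = j + 2 := ⟨M - 2, by have := D.hM; omega⟩
  exact not_state j D.state
end

/-! ### Exclusion of the remaining sign -/

/-- `x = 2^k u` with `u` a unit of `ℤ₂` of residue `r` mod `8`. -/
def Nm (x : ℤ_[2]) (k : ℕ) (r : ZMod 8) : Prop := ∃ u, IsUnit u ∧ x = 2 ^ k * u ∧ r8 u = r

theorem Nm.mul {x y : ℤ_[2]} {k l : ℕ} {r s : ZMod 8} (hx : Nm x k r) (hy : Nm y l s) :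
    Nm (x * y) (k + l) (r * s) := by
  obtain ⟨u, hu, rfl, rfl⟩ := hx
  obtain ⟨v, hv, rfl, rfl⟩ := hy
  exact ⟨u * v, hu.mul hv, by ring, map_mul _ _ _⟩

theorem Nm.ne_zero {x : ℤ_[2]} {k : ℕ} {r : ZMod 8} (hx : Nm x k r) : x ≠ 0 := by
  obtain ⟨u, hu, rfl, rfl⟩ := hx
  exact mul_ne_zero (pow_ne_zero _ two_ne_zero) hu.ne_zero

theorem unit_form {x : ℤ_[2]} : IsUnit x ↔ ∃ p, x = 1 + 2 * p := by
  constructor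
  · intro h
    rcases two_dvd_or (x - 1) with ⟨p, hp⟩ | h'
    · exact ⟨p, by linear_combination hp⟩
    · rw [isUnit_iff_r8] at h h'
      rw [map_sub, map_one] at h'
      exfalso
      generalize r8 x = r at *
      revert r; decide
  · rintro ⟨p, rfl⟩
    rw [isUnit_iff_r8, map_add, map_mul, map_one, map_ofNat]
    generalize r8 p = r
    revert r; decide

theorem unit_sq {x : ℤ_[2]} (h : IsUnit x) : r8 x ^ 2 = 1 := by
  rw [isUnit_iff_r8] at h
  generalize r8 x = r at *
  revert r; decide

theorem Nm.sq {x : ℤ_[2]} (h : x ≠ 0) : ∃ k, Nm (x ^ 2) (2 * k) 1 := by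
  refine ⟨x.valuation, (PadicInt.unitCoeff h : ℤ_[2]) ^ 2, (PadicInt.unitCoeff h).isUnit.pow 2, ?_, ?_⟩
  · conv_lhs => rw [PadicInt.unitCoeff_spec h]
    rw [mul_pow, ← pow_mul, mul_comm 2]; push_cast; ring
  · rw [map_pow]; exact unit_sq (PadicInt.unitCoeff h).isUnit

theorem Nm.two {x n : ℤ_[2]} (hx : 4 ∣ x - 2) (hn : 8 ∣ n) : Nm (x ^ 2 + n ^ 2) 2 1 := by
  obtain ⟨p, hp⟩ := hx
  obtain ⟨q, rfl⟩ := hn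
  obtain rfl : x = 2 + 4 * p := by linear_combination hp
  refine ⟨1 + 2 * (2 * p ^ 2 + 2 * p + 8 * q ^ 2), unit_form.2 ⟨_, rfl⟩, by ring, ?_⟩
  simp only [map_add, map_mul, map_pow, map_one, map_ofNat]
  generalize r8 p = r
  generalize r8 q = s
  revert r s; decide

theorem exists_of_mul {x y o : ℤ_[2]} {k : ℕ} (ho : IsUnit o) (h : x * y = 2 ^ (k + 1) * o) (hy : 4 ∣ y - 2) :
    ∃ o', IsUnit o' ∧ x = 2 ^ k * o' := by
  obtain ⟨p, hp⟩ := hy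
  obtain ⟨w, hw⟩ := (unit_form.2 ⟨p, rfl⟩ : IsUnit (1 + 2 * p)).exists_right_inv
  refine ⟨o * w, ho.mul (IsUnit.of_mul_eq_one _ ((mul_comm _ _).trans hw)), ?_⟩
  obtain rfl : y = 2 + 4 * p := by linear_combination hp
  apply mul_left_cancel₀ (two_ne_zero (α := ℤ_[2]))
  rw [pow_succ] at h
  linear_combination w * h - 2 * x * hw

theorem Nm.five {x n o ν : ℤ_[2]} {M : ℕ} (ho : IsUnit o) (hν : IsUnit ν) (hx : x = 2 ^ (M + 1) * o)
    (hn : n = 2 ^ M * ν) : Nm (x ^ 2 + n ^ 2) (2 * M) 5 := by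
  refine ⟨4 * o ^ 2 + ν ^ 2, ?_, ?_, ?_⟩
  · rw [isUnit_iff_r8] at *
    simp only [map_add, map_mul, map_pow, map_ofNat]
    generalize r8 o = r at *
    generalize r8 ν = s at *
    revert r s; decide
  · rw [hx, hn, mul_comm 2 M, pow_mul]; ring
  · have h1 := unit_sq ho
    have h2 := unit_sq hν
    simp only [map_add, map_mul, map_pow, map_ofNat, h1, h2]
    decide

theorem Nm.odd {x n o ν : ℤ_[2]} {M : ℕ} (ho : IsUnit o) (hν : IsUnit ν) (hx : x = 2 ^ M * o)
    (hn : n = 2 ^ M * ν) : ∃ r, Nm (x ^ 2 + n ^ 2) (2 * M + 1) r := by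
  obtain ⟨p, rfl⟩ := unit_form.1 ho
  obtain ⟨q, rfl⟩ := unit_form.1 hν
  refine ⟨_, 1 + 2 * (p ^ 2 + p + q ^ 2 + q), unit_form.2 ⟨_, rfl⟩, ?_, rfl⟩
  rw [hx, hn, mul_comm 2 M]; ring

/-- The product formula for a `Good` element in terms of `Nm`. -/
theorem Good.nm {w : LL} (hw : Good w) {P₀ P₁ : OO} (h0 : phi0 w = toM P₀) (h1 : phi1 w = toM P₁)
    {k l : ℕ} {r s : ZMod 8} (n0 : Nm (QuadraticAlgebra.norm P₀) k r)
    (n1 : Nm (QuadraticAlgebra.norm P₁) l s) : Even (k + l) ∧ r * s = 1 := by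
  obtain ⟨u, hu, e, rfl⟩ := n0
  obtain ⟨v, hv, e', rfl⟩ := n1
  refine ⟨hw.parity h0 h1 hu e hv e', ?_⟩
  rw [← map_mul]
  exact hw.r8 h0 h1 hu e hv e'

theorem good_sq_mul {a b c x : LL} (hE : Eqs a b c) (h : x ^ 2 * ((a + b) * (a + c)) ≠ 0) :
    Good (x ^ 2 * ((a + b) * (a + c))) := by
  refine ⟨h, fun v h2 h4 => ?_⟩
  rw [← four_sub_iL] at h4
  rw [map_mul, map_pow]
  exact (IsSquare.sq _).mul (isSquare_val_w v iL_sq th_sq h2 h4 hE.1 hE.2).1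

section
variable {M : ℕ} {a b m n c d c' d' ε ε' β : ℤ}

theorem Data.b_ne (D : Data M a b m n c d c' d' ε ε' β) : b ≠ 0 := by
  have hβ0 : β ≠ 0 := by rintro rfl; have := D.hβ; omega
  rw [D.hb]; exact mul_ne_zero (pow_ne_zero _ two_ne_zero) hβ0

/-- `(m + ni + g₄)(g₂ + g₃)(m + ni + g₃)(g₂ + g₄)`, which is `b²` times the product
`(s_a + s_b)(s_a + s_c)` of the associated solution of `Eqs`. -/
noncomputable def wa (m n c d c' d' ε : ℤ) : LL :=
  (m + n * iL + (c' + d' * th)) * (c + d * th + ε * (c - d * th)) *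
    ((m + n * iL + ε * (c - d * th)) * (c + d * th + (c' + d' * th)))

theorem Data.good (D : Data M a b m n c d c' d' ε ε' β) (h : wa m n c d c' d' ε ≠ 0) :
    Good (wa m n c d c' d' ε) := by
  have hE := D.eqs rfl rfl rfl rfl
  have hb : (b : LL) ≠ 0 := Int.cast_ne_zero.2 D.b_ne
  have key : ∀ {x y z : LL}, Eqs x y z → wa m n c d c' d' ε = (b : LL) ^ 2 * ((x + y) * (x + z)) →
      Good (wa m n c d c' d' ε) := by
    intro x y z hE e
    rw [e] at h ⊢
    exact good_sq_mul hE h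
  refine key hE ?_
  rw [wa]; field_simp; ring

theorem phi_wa {φ : LL →+* MM} {T : ℤ_[2]} (hi : φ iL = toM io) (ht : φ th = toM ⟨T, 0⟩) :
    ∃ P : OO, φ (wa m n c d c' d' ε) = toM P ∧ QuadraticAlgebra.norm P =
      ((m + (c' + d' * T)) ^ 2 + n ^ 2) * (c + d * T + ε * (c - d * T)) ^ 2 *
        (((m + ε * (c - d * T)) ^ 2 + n ^ 2) * (c + d * T + (c' + d' * T)) ^ 2) := by
  refine ⟨(m + n * io + (c' + d' * ⟨T, 0⟩)) * (c + d * ⟨T, 0⟩ + ε * (c - d * ⟨T, 0⟩)) *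
    ((m + n * io + ε * (c - d * ⟨T, 0⟩)) * (c + d * ⟨T, 0⟩ + (c' + d' * ⟨T, 0⟩))), ?_, ?_⟩
  · simp only [wa, map_add, map_sub, map_mul, map_intCast, hi, ht]
  · rw [map_mul, map_mul, map_mul]
    simp only [OO_norm]
    have hio : io = ⟨0, 1⟩ := rfl
    congr 1 <;> congr 1 <;> simp [hio]

/-- The real factors of `wa` do not vanish at a place above `2`. -/
theorem Data.ne (D : Data M a b m n c d c' d' ε ε' β) {T : ℤ_[2]} (hT : T ^ 2 = 17) :
    (c + d * T + ε * (c - d * T) ≠ 0) ∧ (c + d * T + (c' + d' * T) ≠ 0) := by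
  have hb : (b : ℤ_[2]) ≠ 0 := Int.cast_ne_zero.2 D.b_ne
  have e3 : (c : ℤ_[2]) ^ 2 + 17 * d ^ 2 = a - 4 * b := by exact_mod_cast D.hc
  have e4 : 2 * (c : ℤ_[2]) * d = -b := by exact_mod_cast D.hcd
  have e5 : 4 * ((c' : ℤ_[2]) ^ 2 + 17 * d' ^ 2) = 4 * a + b := by exact_mod_cast D.hc'
  have e6 : 8 * (c' : ℤ_[2]) * d' = b := by exact_mod_cast D.hcd'
  have h136 : (136 : ℤ_[2]) ≠ 0 := by norm_num
  have h17 : (17 : ℤ_[2]) ≠ 0 := by norm_num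
  constructor
  · intro h
    apply hb
    rcases D.hε with rfl | rfl
    · push_cast at h
      linear_combination (-d : ℤ_[2]) * h + e4
    · push_cast at h
      apply (mul_eq_zero.1 (?_ : (17 : ℤ_[2]) * b = 0)).resolve_left h17
      linear_combination -c * T * h + 17 * e4 + 2 * c * d * hT
  · intro h
    have h5 : (b : ℤ_[2]) * (17 + 5 * T) = 0 := by
      linear_combination -4 * (c + d * T - (c' + d' * T)) * h + 4 * e3 + 4 * T * e4 - e5 - T * e6 +
        (4 * d ^ 2 - 4 * d' ^ 2 : ℤ_[2]) * hT
    have h6 := (mul_eq_zero.1 h5).resolve_left hb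
    exact h136 (by linear_combination -(17 - 5 * T) * h6 - 25 * hT)

theorem Z2_dvd_cast {k : ℕ} [k.AtLeastTwo] {x : ℤ} (h : (OfNat.ofNat k : ℤ) ∣ x) :
    (OfNat.ofNat k : ℤ_[2]) ∣ (x : ℤ_[2]) := by
  have := Int.cast_dvd_cast (α := ℤ_[2]) _ _ h
  simpa using this

/-- The sign `ε' = -1` contradicts the product formula for the norm of `wa`: at the first place the
norm is an even power of `2` times `1` modulo `8`, while at the second it is an even power times `5`
if `ε = 1`, and an odd power if `ε = -1`. -/
theorem Data.false_of_neg (D : Data M a b m n c d c' d' ε (-1) β) : False := by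
  obtain ⟨u, hu⟩ := t0_eq
  have hT := sq_t0
  have hT' : (-t0) ^ 2 = 17 := by rw [neg_sq, hT]
  obtain ⟨P₀, p0, q0⟩ := phi_wa (m := m) (n := n) (c := c) (d := d) (c' := c') (d' := d') (ε := ε)
    phi0_iL phi0_th
  obtain ⟨P₁, p1, q1⟩ := phi_wa (m := m) (n := n) (c := c) (d := d) (c' := c') (d' := d') (ε := ε) (T := -t0)
    phi1_iL (by
      rw [phi1_th, ← map_neg]
      congr 1)
  obtain ⟨K, rfl⟩ : ∃ K, M = K + 3 := ⟨M - 3, by have := D.hM; omega⟩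
  have hβ : (2 : ℤ_[2]) ∣ (β : ℤ_[2]) - 1 := by exact_mod_cast Z2_dvd_cast D.hβ
  have hm : (4 : ℤ_[2]) ∣ (m : ℤ_[2]) - 1 := by exact_mod_cast Z2_dvd_cast D.hm
  have hn : (8 : ℤ_[2]) ∣ (n : ℤ_[2]) := by exact_mod_cast Z2_dvd_cast D.hn
  have c0 : (4 : ℤ_[2]) ∣ (c : ℤ_[2]) + d - 1 := by exact_mod_cast Z2_dvd_cast D.c0
  have c1 : (4 : ℤ_[2]) ∣ (c : ℤ_[2]) - d - ε := by exact_mod_cast Z2_dvd_cast D.c1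
  have c0' : (4 : ℤ_[2]) ∣ (c' : ℤ_[2]) + d' - 1 := by exact_mod_cast Z2_dvd_cast D.c0'
  have c1' : (4 : ℤ_[2]) ∣ (c' : ℤ_[2]) - d' + 1 := by
    have := Z2_dvd_cast D.c1'
    push_cast at this
    rwa [sub_neg_eq_add] at this
  have e1 : (a : ℤ_[2]) = m ^ 2 - n ^ 2 := by exact_mod_cast D.ha
  have e2 : (b : ℤ_[2]) = 2 * m * n := by exact_mod_cast D.hmn
  have e3 : (c : ℤ_[2]) ^ 2 + 17 * d ^ 2 = a - 4 * b := by exact_mod_cast D.hc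
  have e4 : 2 * (c : ℤ_[2]) * d = -b := by exact_mod_cast D.hcd
  have e5 : 4 * ((c' : ℤ_[2]) ^ 2 + 17 * d' ^ 2) = 4 * a + b := by exact_mod_cast D.hc'
  have e6 : 8 * (c' : ℤ_[2]) * d' = b := by exact_mod_cast D.hcd'
  have e8 : (b : ℤ_[2]) = 2 ^ (K + 4) * β := by exact_mod_cast D.hb
  have e7 : (ε : ℤ_[2]) ^ 2 = 1 := by rcases D.hε with h | h <;> rw [h] <;> norm_num
  obtain ⟨x1, hm⟩ := hm
  obtain ⟨x3, c0⟩ := c0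
  obtain ⟨x4, c1⟩ := c1
  obtain ⟨x5, c0'⟩ := c0'
  obtain ⟨x6, c1'⟩ := c1'
  have hβu : IsUnit (β : ℤ_[2]) := by
    obtain ⟨y, hy⟩ := hβ
    exact unit_form.2 ⟨y, by linear_combination hy⟩
  -- `n` is exactly divisible by `2^M`
  obtain ⟨ν, hν, hnν⟩ : ∃ ν : ℤ_[2], IsUnit ν ∧ (n : ℤ_[2]) = 2 ^ (K + 3) * ν := by
    obtain ⟨w, hw⟩ := (unit_form.2 ⟨2 * x1, rfl⟩ : IsUnit (1 + 2 * (2 * x1))).exists_right_inv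
    refine ⟨β * w, hβu.mul (IsUnit.of_mul_eq_one _ ((mul_comm _ _).trans hw)), ?_⟩
    have h : (1 + 2 * (2 * x1)) * (n : ℤ_[2]) = 2 ^ (K + 3) * β := by
      apply mul_left_cancel₀ (two_ne_zero (α := ℤ_[2]))
      have e9 : (2 : ℤ_[2]) ^ (K + 4) = 2 * 2 ^ (K + 3) := by ring
      rw [e9] at e8
      linear_combination -2 * n * hm - e2 + e8
    linear_combination w * h - n * hw
  -- the first place
  obtain ⟨k0, hk0⟩ := Nm.sq (D.ne hT).1
  obtain ⟨l0, hl0⟩ := Nm.sq (D.ne hT).2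
  have N0 := ((Nm.two (x := m + (c' + d' * t0)) (n := n)
    ⟨x1 + x5 + (2 + 8 * u) * d', by rw [hu]; linear_combination hm + c0'⟩ hn).mul hk0).mul
    ((Nm.two (x := m + ε * (c - d * t0)) (n := n)
      ⟨x1 + ε * x4 - ε * (2 + 8 * u) * d, by rw [hu]; linear_combination hm + ε * c1 + e7⟩ hn).mul hl0)
  rw [← q0] at N0
  -- the second place
  obtain ⟨k1, hk1⟩ := Nm.sq (D.ne hT').1
  obtain ⟨l1, hl1⟩ := Nm.sq (D.ne hT').2
  have f1 : Nm ((m + (c' + d' * -t0)) ^ 2 + (n : ℤ_[2]) ^ 2) (2 * (K + 3)) 5 := by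
    obtain ⟨o, ho, hx⟩ := exists_of_mul (x := m + (c' + d' * -t0)) (y := m - (c' + d' * -t0)) (k := K + 4)
      (o := β * (1 + 4 * u) + 2 * (2 ^ K * ν ^ 2)) (by
        obtain ⟨y, hy⟩ := hβ
        exact unit_form.2 ⟨y + 2 * β * u + 2 ^ K * ν ^ 2, by linear_combination hy⟩)
      (by
        apply mul_left_cancel₀ (by norm_num : (4 : ℤ_[2]) ≠ 0)
        have h : (m + (c' + d' * -t0)) * (m - (c' + d' * -t0)) * 4 = 4 * (n : ℤ_[2]) ^ 2 + b * (8 + 32 * u) := by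
          linear_combination -4 * e1 - e5 + t0 * e6 - 4 * d' ^ 2 * hT + b * hu
        rw [mul_comm, h, hnν, e8]; ring)
      ⟨x1 - x6 + (2 + 8 * u) * d', by rw [hu]; linear_combination hm - c1'⟩
    exact Nm.five ho hν hx hnν
  have hW : wa m n c d c' d' ε ≠ 0 := by
    intro h
    rw [h, map_zero] at p0
    have : P₀ = 0 := toM_inj (by rw [← p0, map_zero])
    rw [this] at N0
    exact N0.ne_zero QuadraticAlgebra.norm_zero
  have G := D.good hW
  rcases D.hε with rfl | rfl
  · have f2 : Nm ((m + ((1 : ℤ) : ℤ_[2]) * (c - d * -t0)) ^ 2 + (n : ℤ_[2]) ^ 2) 2 1 :=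
      Nm.two ⟨x1 + x3 + (2 + 8 * u) * d, by rw [hu]; push_cast; linear_combination hm + c0⟩ hn
    have N1 := (f1.mul hk1).mul (f2.mul hl1)
    rw [← q1] at N1
    exact absurd (G.nm p0 p1 N0 N1).2 (by decide)
  · have f2 : ∃ r, Nm ((m + ((-1 : ℤ) : ℤ_[2]) * (c - d * -t0)) ^ 2 + (n : ℤ_[2]) ^ 2) (2 * (K + 3) + 1) r := by
      obtain ⟨o, ho, hx⟩ := exists_of_mul (x := m + ((-1 : ℤ) : ℤ_[2]) * (c - d * -t0))
        (y := m - ((-1 : ℤ) : ℤ_[2]) * (c - d * -t0)) (k := K + 3)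
        (o := β * (13 + 32 * u) + 2 * (2 ^ (K + 1) * ν ^ 2)) (by
          obtain ⟨y, hy⟩ := hβ
          exact unit_form.2 ⟨y + 6 * β + 16 * β * u + 2 ^ (K + 1) * ν ^ 2, by linear_combination hy⟩)
        (by
          have h : (m + ((-1 : ℤ) : ℤ_[2]) * (c - d * -t0)) * (m - ((-1 : ℤ) : ℤ_[2]) * (c - d * -t0)) =
              (n : ℤ_[2]) ^ 2 + b * (13 + 32 * u) := by
            push_cast
            linear_combination -e1 - e3 - t0 * e4 - d ^ 2 * hT + b * hu
          rw [h, hnν, e8]; ring)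
        ⟨x1 + x3 + (2 + 8 * u) * d, by rw [hu]; push_cast; linear_combination hm + c0⟩
      exact Nm.odd ho hν hx hnν
    obtain ⟨r, f2⟩ := f2
    have N1 := (f1.mul hk1).mul (f2.mul hl1)
    rw [← q1] at N1
    have := (G.nm p0 p1 N0 N1).1
    rw [Nat.even_iff] at this
    omega

theorem Data.false (D : Data M a b m n c d c' d' ε ε' β) : False := by
  rcases D.hε' with rfl | rfl
  · exact D.false_of_one
  · exact D.false_of_neg
end

/-! ### Square roots in `ℤ[√17]` and the integral system -/

theorem sq_mod_four (x : ℤ) : x ^ 2 % 4 = 0 ∧ x % 2 = 0 ∨ x ^ 2 % 8 = 1 ∧ x % 2 = 1 := by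
  rcases Int.emod_two_eq_zero_or_one x with h | h
  · left
    obtain ⟨k, rfl⟩ : ∃ k, x = 2 * k := ⟨x / 2, by omega⟩
    refine ⟨?_, h⟩
    ring_nf; omega
  · right
    refine ⟨?_, h⟩
    obtain ⟨k, rfl⟩ : ∃ k, x = 2 * k + 1 := ⟨x / 2, by omega⟩
    have : (2 * k + 1) ^ 2 = 4 * (k * (k + 1)) + 1 := by ring
    have h2 : k * (k + 1) % 2 = 0 := Int.even_iff.1 (Int.even_mul_succ_self k)
    omega

/-- With `s = 17 s₁`, the coprime integers `s₁` and `t` have square product; the congruence modulo `4`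
excludes the signs that would make them negatives of squares. -/
theorem quad_core {s t B : ℤ} (h17 : 17 ∣ s) (hco : IsCoprime s t) (h : s * t = 17 * B ^ 2)
    (h4 : (s + t) % 4 = 1) : ∃ c d : ℤ, c ^ 2 + 17 * d ^ 2 = s + t ∧ c * d = B := by
  obtain ⟨s', rfl⟩ := h17
  have h' : s' * t = B ^ 2 := by linarith
  have hco' : IsCoprime s' t := hco.of_mul_left_right
  obtain ⟨d, hd⟩ := Int.sq_of_isCoprime hco' h'
  obtain ⟨c, hc⟩ := Int.sq_of_isCoprime hco'.symm (by rw [mul_comm]; exact h')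
  have key : ∃ c d : ℤ, c ^ 2 + 17 * d ^ 2 = 17 * s' + t ∧ (c * d) ^ 2 = B ^ 2 := by
    have hc4 := sq_mod_four c
    have hd4 := sq_mod_four d
    rcases hd with rfl | rfl <;> rcases hc with rfl | rfl
    · exact ⟨c, d, by ring, by rw [← h']; ring⟩
    · have : (c * d) ^ 2 = 0 := by nlinarith [sq_nonneg B, sq_nonneg (c * d)]
      rcases mul_eq_zero.1 (pow_eq_zero_iff two_ne_zero |>.1 this) with rfl | rfl
      · exact ⟨0, d, by ring, by rw [← h']; ring⟩
      · exfalso; omega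
    · have : (c * d) ^ 2 = 0 := by nlinarith [sq_nonneg B, sq_nonneg (c * d)]
      rcases mul_eq_zero.1 (pow_eq_zero_iff two_ne_zero |>.1 this) with rfl | rfl
      · exfalso; omega
      · exact ⟨c, 0, by ring, by rw [← h']; ring⟩
    · exfalso; omega
  obtain ⟨c, d, h1, h2⟩ := key
  rcases sq_eq_sq_iff_eq_or_eq_neg.1 h2 with h2 | h2
  · exact ⟨c, d, h1, h2⟩
  · exact ⟨c, -d, by rw [← h1]; ring, by linear_combination -h2⟩

/-- Descent for the norm equation `A² - 17 (2B)² = y²`: the element `A + 2B√17` is a square in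
`ℤ[√17]`. -/
theorem quad {A B y : ℤ} (hA : A % 4 = 1) (h : A ^ 2 - 17 * (2 * B) ^ 2 = y ^ 2) (hco : IsCoprime A B) :
    ∃ c d : ℤ, c ^ 2 + 17 * d ^ 2 = A ∧ c * d = B := by
  have hy : y % 2 = 1 := by
    have h1 := sq_mod_four y
    have h2 := sq_mod_four A
    have : (2 * B) ^ 2 = 4 * B ^ 2 := by ring
    omega
  obtain ⟨s, hs⟩ : ∃ s, A - y = 2 * s := ⟨(A - y) / 2, by omega⟩
  obtain ⟨t, rfl⟩ : ∃ t, y = t - s := ⟨y + s, by ring⟩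
  obtain rfl : A = s + t := by linarith
  have hst : s * t = 17 * B ^ 2 := by linarith
  have hcst : IsCoprime s t := by
    refine isCoprime_of_prime_dvd (by rintro ⟨rfl, rfl⟩; norm_num at hA) fun l hl ⟨x, hx⟩ ⟨z, hz⟩ => ?_
    have h1 : IsCoprime l B := hco.of_isCoprime_of_dvd_left ⟨x + z, by rw [hx, hz]; ring⟩
    have h2 : l ^ 2 ∣ 17 := by
      have : l ^ 2 ∣ 17 * B ^ 2 := ⟨x * z, by rw [← hst, hx, hz]; ring⟩
      exact (h1.pow (m := 2) (n := 2)).dvd_of_dvd_mul_right this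
    have h17 : Prime (17 : ℤ) := by norm_num
    rw [pow_two] at h2
    exact hl.not_isUnit (h17.squarefree _ h2)
  have h17 : Prime (17 : ℤ) := by norm_num
  rcases h17.dvd_or_dvd (⟨_, hst⟩ : (17 : ℤ) ∣ s * t) with h' | h'
  · exact quad_core h' hcst hst hA
  · obtain ⟨c, d, h1, h2⟩ := quad_core h' hcst.symm (by rw [mul_comm]; exact hst) (by rwa [add_comm])
    exact ⟨c, d, by rw [h1, add_comm], h2⟩

theorem sixteen_dvd {a b X y : ℤ} (ha : a % 2 = 1) (hX : X ^ 2 = a ^ 2 - 8 * a * b - b ^ 2)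
    (hy : 2 * y ^ 2 = 2 * a ^ 2 + a * b - 2 * b ^ 2) : 16 ∣ b := by
  have hb2 : b % 2 = 0 := by
    rcases Int.emod_two_eq_zero_or_one b with h | h
    · exact h
    · have : a * b % 2 = 1 := by rw [Int.mul_emod, ha, h]; norm_num
      omega
  obtain ⟨k, rfl⟩ : ∃ k, b = 2 * k := ⟨b / 2, by omega⟩
  have hk : k % 2 = 0 := by
    have h1 := sq_mod_four X
    have h2 := sq_mod_four a
    have h3 := sq_mod_four k
    have e1 : 8 * a * (2 * k) = 16 * (a * k) := by ring
    have e2 : (2 * k) ^ 2 = 4 * k ^ 2 := by ring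
    omega
  obtain ⟨l, rfl⟩ : ∃ l, k = 2 * l := ⟨k / 2, by omega⟩
  have hl : a * l % 4 = 0 := by
    have h1 := sq_mod_four y
    have h2 := sq_mod_four a
    have e1 : a * (2 * (2 * l)) = 4 * (a * l) := by ring
    have e2 : (2 * (2 * l)) ^ 2 = 16 * l ^ 2 := by ring
    omega
  have : (4 : ℤ) ∣ l := by
    have hc : IsCoprime (4 : ℤ) a := by
      have : IsCoprime (2 : ℤ) a := Int.isCoprime_two_left.2 (Int.odd_iff.2 ha)
      have := this.pow_left (m := 2)
      norm_num at this
      exact this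
    exact hc.dvd_of_dvd_mul_left (Int.dvd_of_emod_eq_zero hl)
  obtain ⟨q, rfl⟩ := this
  exact ⟨q, by ring⟩

theorem eight_dvd_of_mul {x y : ℤ} (hx : x % 2 = 1) (h : 8 ∣ x * y) : 8 ∣ y := by
  have h2 : IsCoprime (2 : ℤ) x := Int.isCoprime_two_left.2 (Int.odd_iff.2 hx)
  have := h2.pow_left (m := 3)
  norm_num at this
  exact this.dvd_of_dvd_mul_left h

theorem exists_sign (x : ℤ) (hx : x % 2 = 1) : ∃ σ : ℤ, (σ = 1 ∨ σ = -1) ∧ 4 ∣ σ * x - 1 := by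
  rcases (by omega : x % 4 = 1 ∨ x % 4 = 3) with h | h
  · exact ⟨1, Or.inl rfl, by omega⟩
  · exact ⟨-1, Or.inr rfl, by omega⟩

theorem exists_two_pow {b : ℤ} (hb : b ≠ 0) (h16 : 16 ∣ b) :
    ∃ M : ℕ, ∃ β : ℤ, 3 ≤ M ∧ b = 2 ^ (M + 1) * β ∧ 2 ∣ β - 1 := by
  obtain ⟨k, β, hβ, h⟩ := Nat.exists_eq_two_pow_mul_odd (Int.natAbs_ne_zero.2 hb)
  obtain ⟨β', hβ', hb'⟩ : ∃ β' : ℤ, β' % 2 = 1 ∧ b = 2 ^ k * β' := by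
    rw [Nat.odd_iff] at hβ
    rcases Int.natAbs_eq b with h' | h'
    · exact ⟨β, by omega, by rw [h', h]; push_cast; rfl⟩
    · exact ⟨-β, by omega, by rw [h', h]; push_cast; ring⟩
  have hk : 4 ≤ k := by
    by_contra! hk
    rw [hb'] at h16
    interval_cases k <;> omega
  exact ⟨k - 1, β', by omega, by rw [hb']; congr 2; omega, by omega⟩

/-- A nontrivial solution with `a = 1` modulo `4` would produce integral square roots of all `a + r_j b`,
that is, an instance of `Data` after normalizing signs. -/
theorem no_quad {a b X Y Z : ℤ} (ha : a % 4 = 1) (hco : IsCoprime a b)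
    (hY0 : Y % 2 = 0) (hX : X ^ 2 = a ^ 2 - 8 * a * b - b ^ 2)
    (hY : Y ^ 2 = 4 * a ^ 2 + 2 * a * b - 4 * b ^ 2) (hZ : Z ^ 2 = a ^ 2 + b ^ 2) : b = 0 := by
  by_contra hb0
  obtain ⟨y, rfl⟩ : ∃ y, Y = 2 * y := ⟨Y / 2, by omega⟩
  have h16 : 16 ∣ b := sixteen_dvd (y := y) (by omega) hX (by linarith)
  obtain ⟨M, β, hM, hb, hβ⟩ := exists_two_pow hb0 h16
  obtain ⟨b', hb'⟩ := h16
  -- square roots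
  obtain ⟨c, d, hc, hcd⟩ := quad (A := a - 4 * b) (B := -8 * b') (y := X) (by omega)
    (by rw [hX, hb']; ring)
    (by
      have h1 : IsCoprime a (-8 * b') := hco.of_isCoprime_of_dvd_right ⟨-2, by rw [hb']; ring⟩
      rw [show a - 4 * b = a + -8 * b' * 8 by rw [hb']; ring]
      exact h1.add_mul_left_left 8)
  obtain ⟨c', d', hc', hcd'⟩ := quad (A := a + 4 * b') (B := 2 * b') (y := y) (by omega)
    (by
      have : 4 * y ^ 2 = 4 * a ^ 2 + 2 * a * (16 * b') - 4 * (16 * b') ^ 2 := by rw [← hb', ← hY]; ring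
      linarith)
    (by
      have h1 : IsCoprime a (2 * b') := hco.of_isCoprime_of_dvd_right ⟨8, by rw [hb']; ring⟩
      rw [show a + 4 * b' = a + 2 * b' * 2 by ring]
      exact h1.add_mul_left_left 2)
  obtain ⟨m, n, hmn, -, -, hpar⟩ := PythagoreanTriple.coprime_classification.1
    ⟨show a * a + b * b = Z * Z by linarith, Int.isCoprime_iff_gcd_eq_one.1 hco⟩
  have hmn : a = m ^ 2 - n ^ 2 ∧ b = 2 * m * n := by
    refine hmn.resolve_right fun h => ?_
    have h1 := h.1
    rw [mul_assoc] at h1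
    omega
  obtain ⟨ham, hbm⟩ := hmn
  have hm : m % 2 = 1 := by
    have h1 := sq_mod_four m
    have h2 := sq_mod_four n
    omega
  -- normalization of the signs
  obtain ⟨σ₁, hσ₁, hm4⟩ := exists_sign m hm
  have hn : 8 ∣ n := eight_dvd_of_mul hm ⟨b', by linarith⟩
  have hcd1 : c % 2 = 1 ∧ 8 ∣ d ∨ 8 ∣ c ∧ d % 2 = 1 := by
    have h1 := sq_mod_four c
    have h2 := sq_mod_four d
    rcases (by omega : c % 2 = 1 ∨ d % 2 = 1) with h | h
    · exact Or.inl ⟨h, eight_dvd_of_mul h ⟨-b', by linarith⟩⟩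
    · exact Or.inr ⟨eight_dvd_of_mul h ⟨-b', by linarith⟩, h⟩
  have hcd2 : (c' + d') % 2 = 1 := by
    have h1 := sq_mod_four c'
    have h2 := sq_mod_four d'
    omega
  obtain ⟨σ₃, hσ₃, h3⟩ := exists_sign _ hcd2
  obtain ⟨σ₂, ε, hσ₂, hε, h2, h2'⟩ : ∃ σ₂ ε : ℤ, (σ₂ = 1 ∨ σ₂ = -1) ∧ (ε = 1 ∨ ε = -1) ∧
      4 ∣ σ₂ * c + σ₂ * d - 1 ∧ 4 ∣ σ₂ * c - σ₂ * d - ε := by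
    rcases hcd1 with ⟨h, h'⟩ | ⟨h', h⟩
    · obtain ⟨σ, hσ, h4⟩ := exists_sign _ h
      refine ⟨σ, 1, hσ, Or.inl rfl, ?_, ?_⟩ <;> rcases hσ with rfl | rfl <;> omega
    · obtain ⟨σ, hσ, h4⟩ := exists_sign _ h
      refine ⟨σ, -1, hσ, Or.inr rfl, ?_, ?_⟩ <;> rcases hσ with rfl | rfl <;> omega
  obtain ⟨ε', hε', h3'⟩ : ∃ ε' : ℤ, (ε' = 1 ∨ ε' = -1) ∧ 4 ∣ σ₃ * c' - σ₃ * d' - ε' := by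
    rcases Int.emod_two_eq_zero_or_one d' with h | h
    · exact ⟨1, Or.inl rfl, by rcases hσ₃ with rfl | rfl <;> omega⟩
    · exact ⟨-1, Or.inr rfl, by rcases hσ₃ with rfl | rfl <;> omega⟩
  have q : ∀ {σ : ℤ}, (σ = 1 ∨ σ = -1) → σ ^ 2 = 1 := by rintro σ (rfl | rfl) <;> norm_num
  exact Data.false (M := M) (a := a) (b := b) (m := σ₁ * m) (n := σ₁ * n) (c := σ₂ * c) (d := σ₂ * d)
    (c' := σ₃ * c') (d' := σ₃ * d') (ε := ε) (ε' := ε') (β := β)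
    { hM := hM
      hb := hb
      hβ := hβ
      ha := by rw [mul_pow, mul_pow, q hσ₁]; linarith
      hmn := by linear_combination hbm - 2 * m * n * q hσ₁
      hc := by rw [mul_pow, mul_pow, q hσ₂]; linarith
      hcd := by linear_combination 2 * c * d * q hσ₂ + 2 * hcd + hb'
      hc' := by rw [mul_pow, mul_pow, q hσ₃]; linarith
      hcd' := by linear_combination 8 * c' * d' * q hσ₃ + 8 * hcd' - hb'
      hm := hm4
      hn := hn.mul_left _
      hε := hε
      hε' := hε'
      c0 := h2
      c1 := h2'
      c1' := h3'
      c0' := by rw [← mul_add]; exact h3 }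

/-! ### Rational points -/

theorem no_quad' {a b X Y Z : ℤ} (hco : IsCoprime a b) (hX1 : X % 2 = 1)
    (hY0 : Y % 2 = 0) (hX : X ^ 2 = a ^ 2 - 8 * a * b - b ^ 2)
    (hY : Y ^ 2 = 4 * a ^ 2 + 2 * a * b - 4 * b ^ 2) (hZ : Z ^ 2 = a ^ 2 + b ^ 2) : b = 0 := by
  have ha : a % 2 = 1 := by
    have h1 := sq_mod_four a
    have h2 := sq_mod_four b
    have h3 := sq_mod_four X
    have h4 := sq_mod_four Z
    rw [mul_assoc] at hX
    omega
  rcases (by omega : a % 4 = 1 ∨ (-a) % 4 = 1) with h | h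
  · exact no_quad h hco hY0 hX hY hZ
  · exact neg_eq_zero.1 (no_quad (a := -a) (b := -b) (X := X) (Y := Y) (Z := Z) h hco.neg_neg hY0
      (by linarith) (by linarith) (by linarith))

/-- If a product of two coprime integers with positive sum is a square, both are squares. -/
theorem both_sq {p q r : ℤ} (hco : IsCoprime p q) (h : p * q = r ^ 2) (hpos : 0 < p + q) :
    ∃ α β : ℤ, p = α ^ 2 ∧ q = β ^ 2 ∧ r = -(β * α) := by
  have h0 : 0 ≤ p * q := by rw [h]; positivity
  have hp : 0 ≤ p := by by_contra! hp; nlinarith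
  have hq : 0 ≤ q := by by_contra! hq; nlinarith
  obtain ⟨α, hα⟩ := Int.sq_of_isCoprime hco h
  obtain ⟨β, hβ⟩ := Int.sq_of_isCoprime hco.symm (by rw [mul_comm]; exact h)
  have hα : p = α ^ 2 := by
    rcases hα with h | h
    · exact h
    · nlinarith [sq_nonneg α]
  have hβ : q = β ^ 2 := by
    rcases hβ with h | h
    · exact h
    · nlinarith [sq_nonneg β]
  have : r ^ 2 = (β * α) ^ 2 := by rw [← h, hα, hβ]; ring
  rcases sq_eq_sq_iff_eq_or_eq_neg.1 this with h | h
  · exact ⟨-α, β, by rw [hα]; ring, hβ, by rw [h]; ring⟩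
  · exact ⟨α, β, hα, hβ, h⟩

/-- The case in which `17` does not divide the two factors has no solutions modulo `3`. -/
theorem mod_three {α β X Y Z : ℤ} (hco : IsCoprime α β) (hX : 17 * X ^ 2 = β ^ 2 - α ^ 2 + 8 * -(β * α))
    (hY : 17 * Y ^ 2 = 4 * (β ^ 2 - α ^ 2) - 2 * -(β * α)) (hZ : 17 * Z ^ 2 = α ^ 2 + β ^ 2) : False := by
  have h3 : ¬ ((3 : ℤ) ∣ α ∧ (3 : ℤ) ∣ β) := fun h => by
    have := hco.isUnit_of_dvd' h.1 h.2
    rw [Int.isUnit_iff] at this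
    omega
  have key : ∀ a b x y z : ZMod 3, 17 * x ^ 2 = b ^ 2 - a ^ 2 + 8 * -(b * a) →
      17 * y ^ 2 = 4 * (b ^ 2 - a ^ 2) - 2 * -(b * a) → 17 * z ^ 2 = a ^ 2 + b ^ 2 → a = 0 ∧ b = 0 := by
    decide
  have := key α β X Y Z (by exact_mod_cast congrArg (Int.cast : ℤ → ZMod 3) hX)
    (by exact_mod_cast congrArg (Int.cast : ℤ → ZMod 3) hY)
    (by exact_mod_cast congrArg (Int.cast : ℤ → ZMod 3) hZ)
  rw [ZMod.intCast_zmod_eq_zero_iff_dvd, ZMod.intCast_zmod_eq_zero_iff_dvd] at this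
  exact h3 (by exact_mod_cast this)

/-- With `2p = 17Z² - 4Y² - X²` and `2q = 17Z² + 4Y² + X²`, the product `pq` is the square of
`(4X² - Y²)/2`, so `p` and `q` are squares up to a common factor `17`; this parametrizes the solution. -/
theorem int_solution {X Y Z : ℤ} (hco : IsCoprime X Y) (h : X ^ 4 + Y ^ 4 = 17 * Z ^ 4) (hX1 : X % 2 = 1)
    (hY0 : Y % 2 = 0) : X ^ 2 = Z ^ 2 ∧ Y ^ 2 = 4 * Z ^ 2 := by
  have hZ1 : Z % 2 = 1 := by
    rcases Int.emod_two_eq_zero_or_one Z with hZ | hZ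
    · exfalso
      obtain ⟨k, rfl⟩ : ∃ k, Z = 2 * k := ⟨Z / 2, by omega⟩
      obtain ⟨l, rfl⟩ : ∃ l, Y = 2 * l := ⟨Y / 2, by omega⟩
      have h1 := sq_mod_four (X ^ 2)
      have h2 := sq_mod_four X
      ring_nf at h h1
      omega
    · exact hZ
  obtain ⟨y, hy⟩ : ∃ y, Y = 2 * y := ⟨Y / 2, by omega⟩
  obtain ⟨p, hp⟩ : ∃ p, 17 * Z ^ 2 - 4 * Y ^ 2 - X ^ 2 = 2 * p := by
    have h1 := sq_mod_four X
    have h2 := sq_mod_four Z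
    exact ⟨(17 * Z ^ 2 - 4 * Y ^ 2 - X ^ 2) / 2, by omega⟩
  obtain ⟨q, hq⟩ : ∃ q, q = p + 4 * Y ^ 2 + X ^ 2 := ⟨_, rfl⟩
  obtain ⟨r, hr⟩ : ∃ r, r = 2 * X ^ 2 - 2 * y ^ 2 := ⟨_, rfl⟩
  have hsum : p + q = 17 * Z ^ 2 := by linarith
  have hpq : p * q = r ^ 2 := by
    have : 4 * (p * q) = 4 * r ^ 2 := by
      have e1 : 2 * p = 17 * Z ^ 2 - 4 * Y ^ 2 - X ^ 2 := hp.symm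
      have e2 : 2 * q = 17 * Z ^ 2 + 4 * Y ^ 2 + X ^ 2 := by linarith
      have e3 : 2 * r = 4 * X ^ 2 - Y ^ 2 := by rw [hr, hy]; ring
      linear_combination (2 * q) * e1 + (17 * Z ^ 2 - 4 * Y ^ 2 - X ^ 2) * e2 -
        (2 * r + 4 * X ^ 2 - Y ^ 2) * e3 - 17 * h
    linarith
  have hZpos : 0 < Z ^ 2 := by
    have : Z ≠ 0 := by rintro rfl; norm_num at hZ1
    positivity
  have hX17 : 17 * X ^ 2 = q - p + 8 * r := by rw [hq, hr, hy]; ring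
  have hY17 : 17 * Y ^ 2 = 4 * (q - p) - 2 * r := by rw [hq, hr, hy]; ring
  have h17 : Prime (17 : ℤ) := by norm_num
  by_cases hd : (17 : ℤ) ∣ p ∧ (17 : ℤ) ∣ q
  · obtain ⟨⟨p', rfl⟩, q', rfl⟩ := hd
    obtain ⟨r', rfl⟩ : (17 : ℤ) ∣ r := h17.dvd_of_dvd_pow (n := 2) ⟨17 * p' * q', by rw [← hpq]; ring⟩
    have hX' : X ^ 2 = q' - p' + 8 * r' := by linarith
    have hY' : Y ^ 2 = 4 * (q' - p') - 2 * r' := by linarith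
    have hZ' : Z ^ 2 = p' + q' := by linarith
    have hpq' : p' * q' = r' ^ 2 := by linarith
    have hco' : IsCoprime p' q' := by
      refine isCoprime_of_prime_dvd ?_ fun l hl h1 h2 => ?_
      · rintro ⟨rfl, rfl⟩
        rw [hZ'] at hZpos
        norm_num at hZpos
      · have h3 : l ∣ r' := hl.dvd_of_dvd_pow (n := 2) (hpq' ▸ h1.mul_right _)
        have h4 : l ∣ X := hl.dvd_of_dvd_pow (n := 2)
          (hX' ▸ dvd_add (dvd_sub h2 h1) (h3.mul_left _))
        have h5 : l ∣ Y := hl.dvd_of_dvd_pow (n := 2)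
          (hY' ▸ dvd_sub ((dvd_sub h2 h1).mul_left _) (h3.mul_left _))
        exact hl.not_isUnit (hco.isUnit_of_dvd' h4 h5)
    obtain ⟨α, β, rfl, rfl, rfl⟩ := both_sq hco' hpq' (by rw [← hZ']; exact hZpos)
    have hco'' : IsCoprime β α := ((IsCoprime.pow_iff two_pos two_pos).1 hco').symm
    have := no_quad' hco'' hX1 hY0 (by rw [hX']; ring) (by rw [hY']; ring) (by rw [hZ']; ring)
    subst this
    constructor
    · rw [hX', hZ']; ring
    · rw [hY', hZ']; ring
  · exfalso
    have hco' : IsCoprime p q := by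
      refine isCoprime_of_prime_dvd ?_ fun l hl h1 h2 => ?_
      · rintro ⟨rfl, rfl⟩
        exact hd ⟨dvd_zero _, dvd_zero _⟩
      · have h3 : l ∣ r := hl.dvd_of_dvd_pow (n := 2) (hpq ▸ h1.mul_right _)
        have hl17 : ¬ l ∣ 17 := by
          intro hl17
          have := (hl.associated_of_dvd h17 hl17).symm.dvd
          exact hd ⟨this.trans h1, this.trans h2⟩
        have h4 : l ∣ X := hl.dvd_of_dvd_pow (n := 2)
          ((hl.dvd_or_dvd (hX17 ▸ dvd_add (dvd_sub h2 h1) (h3.mul_left _))).resolve_left hl17)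
        have h5 : l ∣ Y := hl.dvd_of_dvd_pow (n := 2)
          ((hl.dvd_or_dvd (hY17 ▸ dvd_sub ((dvd_sub h2 h1).mul_left _) (h3.mul_left _))).resolve_left hl17)
        exact hl.not_isUnit (hco.isUnit_of_dvd' h4 h5)
    obtain ⟨α, β, rfl, rfl, rfl⟩ := both_sq hco' hpq (by rw [hsum]; linarith)
    exact mod_three ((IsCoprime.pow_iff two_pos two_pos).1 hco') hX17 hY17 hsum.symm

theorem int_solution' {X Y Z : ℤ} (hco : IsCoprime X Y) (h : X ^ 4 + Y ^ 4 = 17 * Z ^ 4) :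
    (X ^ 2 = Z ^ 2 ∧ Y ^ 2 = 4 * Z ^ 2) ∨ (X ^ 2 = 4 * Z ^ 2 ∧ Y ^ 2 = Z ^ 2) := by
  have h1 := sq_mod_four X
  have h2 := sq_mod_four Y
  have h3 := sq_mod_four (X ^ 2)
  have h4 := sq_mod_four (Y ^ 2)
  have h5 := sq_mod_four (Z ^ 2)
  simp only [← pow_mul] at h3 h4 h5
  norm_num at h3 h4 h5
  have hne : ¬ (X % 2 = 0 ∧ Y % 2 = 0) := fun h => by
    have := hco.isUnit_of_dvd' (Int.dvd_of_emod_eq_zero h.1) (Int.dvd_of_emod_eq_zero h.2)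
    rw [Int.isUnit_iff] at this
    omega
  rcases (by omega : (X % 2 = 1 ∧ Y % 2 = 0) ∨ (X % 2 = 0 ∧ Y % 2 = 1)) with hpar | hpar
  · exact Or.inl (int_solution hco h hpar.1 hpar.2)
  · exact Or.inr (int_solution hco.symm (by linarith) hpar.2 hpar.1).symm

/-- A rational point in lowest terms over a common denominator. -/
theorem exists_int {x y : ℚ} (h : x ^ 4 + y ^ 4 = 17) : ∃ X Y Z : ℤ, IsCoprime X Y ∧ Z ≠ 0 ∧
    x = X / Z ∧ y = Y / Z ∧ X ^ 4 + Y ^ 4 = 17 * Z ^ 4 := by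
  obtain ⟨X, Y, D, hD, hx, hy⟩ : ∃ X Y D : ℤ, D ≠ 0 ∧ x = X / D ∧ y = Y / D := by
    refine ⟨x.num * y.den, y.num * x.den, x.den * y.den, ?_, ?_, ?_⟩
    · exact mul_ne_zero (by exact_mod_cast x.den_ne_zero) (by exact_mod_cast y.den_ne_zero)
    · have h1 : (x.den : ℚ) ≠ 0 := by exact_mod_cast x.den_ne_zero
      have h2 : (y.den : ℚ) ≠ 0 := by exact_mod_cast y.den_ne_zero
      push_cast
      rw [mul_div_mul_right _ _ h2, Rat.num_div_den]
    · have h1 : (x.den : ℚ) ≠ 0 := by exact_mod_cast x.den_ne_zero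
      have h2 : (y.den : ℚ) ≠ 0 := by exact_mod_cast y.den_ne_zero
      push_cast
      rw [mul_comm (x.den : ℚ), mul_div_mul_right _ _ h1, Rat.num_div_den]
  have hDQ : (D : ℚ) ≠ 0 := by exact_mod_cast hD
  have hE : X ^ 4 + Y ^ 4 = 17 * D ^ 4 := by
    rw [hx, hy] at h
    field_simp at h
    exact_mod_cast (by linarith : (X : ℚ) ^ 4 + Y ^ 4 = 17 * D ^ 4)
  have hg0 : 0 < Int.gcd X Y := by
    rw [Int.gcd_pos_iff]
    by_contra! h0
    rw [h0.1, h0.2] at hE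
    have : D ^ 4 = 0 := by linarith
    exact hD (pow_eq_zero_iff (by norm_num) |>.1 this)
  obtain ⟨X', Y', hco, hX, hY⟩ := Int.exists_gcd_one hg0
  set g : ℤ := (Int.gcd X Y : ℤ) with hg
  have hgpos : 0 < g := Int.natCast_pos.2 hg0
  -- `g` divides `D` because `17` has no fourth power factor
  have hgD : g ∣ D := by
    obtain ⟨g', D', hco', hg', hD'⟩ := Int.exists_gcd_one (m := g) (n := D)
      (Int.gcd_pos_iff.2 (Or.inr hD))
    set k : ℤ := (Int.gcd g D : ℤ) with hk
    have hk0 : k ≠ 0 := by rintro h0; rw [h0, mul_zero] at hD'; exact hD hD'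
    have h1 : g' ^ 4 ∣ 17 * D' ^ 4 := by
      refine ⟨X' ^ 4 + Y' ^ 4, ?_⟩
      apply mul_left_cancel₀ (pow_ne_zero 4 hk0)
      calc k ^ 4 * (17 * D' ^ 4) = 17 * D ^ 4 := by rw [hD']; ring
        _ = X ^ 4 + Y ^ 4 := hE.symm
        _ = (X' * g) ^ 4 + (Y' * g) ^ 4 := by rw [← hX, ← hY]
        _ = k ^ 4 * (g' ^ 4 * (X' ^ 4 + Y' ^ 4)) := by rw [hg']; ring
    have h2 : g' ^ 4 ∣ 17 :=
      ((Int.isCoprime_iff_gcd_eq_one.2 hco').pow (m := 4) (n := 4)).dvd_of_dvd_mul_right h1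
    have h17 : Prime (17 : ℤ) := by norm_num
    have hu : IsUnit g' := h17.squarefree _ (Dvd.dvd.trans ⟨g' ^ 2, by ring⟩ h2)
    rw [hD', hg']
    exact mul_dvd_mul hu.dvd dvd_rfl
  obtain ⟨Z, hZ⟩ := hgD
  have hgQ : (g : ℚ) ≠ 0 := by exact_mod_cast hgpos.ne'
  refine ⟨X', Y', Z, Int.isCoprime_iff_gcd_eq_one.2 hco, ?_, ?_, ?_, ?_⟩
  · rintro rfl; exact hD (by rw [hZ, mul_zero])
  · rw [hx, hX, hZ]; push_cast; rw [mul_comm (g : ℚ), mul_div_mul_right _ _ hgQ]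
  · rw [hy, hY, hZ]; push_cast; rw [mul_comm (g : ℚ), mul_div_mul_right _ _ hgQ]
  · apply mul_left_cancel₀ (pow_ne_zero 4 hgpos.ne')
    calc g ^ 4 * (X' ^ 4 + Y' ^ 4) = (X' * g) ^ 4 + (Y' * g) ^ 4 := by ring
      _ = 17 * D ^ 4 := by rw [← hX, ← hY, hE]
      _ = g ^ 4 * (17 * Z ^ 4) := by rw [hZ]; ring

theorem sq_cases {x y : ℚ} (h : x ^ 4 + y ^ 4 = 17) : (x ^ 2 = 1 ∧ y ^ 2 = 4) ∨ (x ^ 2 = 4 ∧ y ^ 2 = 1) := by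
  obtain ⟨X, Y, Z, hco, hZ, rfl, rfl, hE⟩ := exists_int h
  have hZQ : (Z : ℚ) ^ 2 ≠ 0 := pow_ne_zero 2 (by exact_mod_cast hZ)
  simp only [div_pow, div_eq_iff hZQ, one_mul]
  exact_mod_cast int_solution' hco hE

end X4Y4

/-- The rational points on the curve `x⁴ + y⁴ = 17` are exactly `(±2, ±1)` and `(±1, ±2)`. -/
theorem rational_points_x4_y4_eq_seventeen :
    {P : ℚ × ℚ | P.1 ^ 4 + P.2 ^ 4 = 17} =
      {((2 : ℚ), (1 : ℚ)), ((2 : ℚ), (-1 : ℚ)), ((-2 : ℚ), (1 : ℚ)), ((-2 : ℚ), (-1 : ℚ)),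
       ((1 : ℚ), (2 : ℚ)), ((1 : ℚ), (-2 : ℚ)), ((-1 : ℚ), (2 : ℚ)), ((-1 : ℚ), (-2 : ℚ))} := by
  ext ⟨x, y⟩
  simp only [Set.mem_ofPred_eq, Set.mem_insert_iff, Set.mem_singleton_iff, Prod.mk.injEq]
  constructor
  · intro h
    have e1 : ∀ z : ℚ, z ^ 2 = 1 → z = 1 ∨ z = -1 := fun z hz =>
      sq_eq_sq_iff_eq_or_eq_neg.1 (by rw [hz]; norm_num)
    have e4 : ∀ z : ℚ, z ^ 2 = 4 → z = 2 ∨ z = -2 := fun z hz =>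
      sq_eq_sq_iff_eq_or_eq_neg.1 (by rw [hz]; norm_num)
    rcases X4Y4.sq_cases h with ⟨hx, hy⟩ | ⟨hx, hy⟩
    · rcases e1 x hx with rfl | rfl <;> rcases e4 y hy with rfl | rfl <;> simp
    · rcases e4 x hx with rfl | rfl <;> rcases e1 y hy with rfl | rfl <;> simp
  · rintro (⟨rfl, rfl⟩ | ⟨rfl, rfl⟩ | ⟨rfl, rfl⟩ | ⟨rfl, rfl⟩ | ⟨rfl, rfl⟩ | ⟨rfl, rfl⟩ | ⟨rfl, rfl⟩ |
      ⟨rfl, rfl⟩) <;> norm_num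
end

section
/- Let p be a prime and let 𝔽̄_p be an algebraic closure of the field 𝔽_p with p elements. The Frobenius automorphism Frob_p : x ↦ x^p is an automorphism of 𝔽̄_p fixing 𝔽_p, and the subgroup of the absolute Galois group Gal(𝔽̄_p/𝔽_p) generated by Frob_p is dense with respect to the Krull topology; that is, the closure of ⟨Frob_p⟩ in Gal(𝔽̄_p/𝔽_p) is the whole group. -/
/-!
The fixed field of the closure of `⟨Frob_p⟩` consists of roots of `X ^ p - X`, hence is `𝔽_p`. By the
Galois correspondence for closed subgroups, that closure is the fixing subgroup of `𝔽_p`, i.e. the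
whole Galois group.
-/

/-- The Frobenius automorphism `x ↦ x^p` of an algebraic closure of `𝔽_p` generates a dense
subgroup of the absolute Galois group `Gal(𝔽̄_p/𝔽_p)` for the Krull topology. -/
theorem frobenius_generates_dense_subgroup (p : ℕ) [Fact p.Prime] :
    ∃ frob : AlgebraicClosure (ZMod p) ≃ₐ[ZMod p] AlgebraicClosure (ZMod p),
      (∀ x : AlgebraicClosure (ZMod p), frob x = x ^ p) ∧
      Dense (↑(Subgroup.zpowers frob) :
        Set (AlgebraicClosure (ZMod p) ≃ₐ[ZMod p] AlgebraicClosure (ZMod p))) := by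
  have hfrob : ∀ x : AlgebraicClosure (ZMod p),
      FiniteField.frobeniusAlgEquivOfAlgebraic (ZMod p) (AlgebraicClosure (ZMod p)) x = x ^ p := by
    intro x
    rw [FiniteField.coe_frobeniusAlgEquivOfAlgebraic, ZMod.card]
  refine ⟨FiniteField.frobeniusAlgEquivOfAlgebraic (ZMod p) (AlgebraicClosure (ZMod p)), hfrob, ?_⟩
  set frob := FiniteField.frobeniusAlgEquivOfAlgebraic (ZMod p) (AlgebraicClosure (ZMod p))
  let H : ClosedSubgroup (AlgebraicClosure (ZMod p) ≃ₐ[ZMod p] AlgebraicClosure (ZMod p)) :=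
    ⟨(Subgroup.zpowers frob).topologicalClosure, Subgroup.isClosed_topologicalClosure _⟩
  have hmem : frob ∈ H.1 := Subgroup.le_topologicalClosure _ (Subgroup.mem_zpowers frob)
  have hfixed : IntermediateField.fixedField H.1 = ⊥ := by
    rw [eq_bot_iff]
    intro x hx
    have hpow : x ^ p = x := by
      rw [← hfrob]
      exact (IntermediateField.mem_fixedField_iff _ _).1 hx frob hmem
    have hbot : x ∈ (⊥ : Subfield (AlgebraicClosure (ZMod p))) :=
      (Subfield.mem_bot_iff_pow_eq_self (AlgebraicClosure (ZMod p)) p).2 hpow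
    exact (bot_le : (⊥ : Subfield (AlgebraicClosure (ZMod p))) ≤
      (⊥ : IntermediateField (ZMod p) (AlgebraicClosure (ZMod p))).toSubfield) hbot
  have htop : (Subgroup.zpowers frob).topologicalClosure = ⊤ := by
    have := InfiniteGalois.fixingSubgroup_fixedField H
    rw [hfixed, IntermediateField.fixingSubgroup_bot] at this
    exact this.symm
  rw [dense_iff_closure_eq, ← Subgroup.topologicalClosure_coe, htop, Subgroup.coe_top]
end
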